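/- Let α, β be nonzero real numbers, 0 < s < 1, C ≥ 1 and c > 0. There exist a constant ε = ε(s) > 0 and an integer N = N(α, β, s, C, c) such that the following holds: for every bivariate real random variable (X, Y) that is jointly (s₁, s₂, C)-Frostman with range contained in [-c, c]², where 0 ≤ s₁, s₂ ≤ 1 and s₁ + s₂ ≥ 2s, one has max{ (Hₙ(X) + Hₙ(Y))/2, Hₙ(X + Y), Hₙ(αX² + βY²) } ≥ n(s + ε) for all integers n > N. -/

import Mathlib

/-!
Rounding to scale `2 ^ (-n)` turns `X` and `Y` into integer variables, and all entropies are
compared at the cost of `O(1)`. Suppose the three entropies are all at most `n * (s + ε)`. Copies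
of `(X, Y)` made independent conditionally on one coordinate (an entropic Balog–Szemerédi–Gowers
argument) then produce a conditional law `μ` of one coordinate which is `s`-Frostman, while sums and
differences of independent copies of `μ`, and sums and differences of squares of such copies, have
entropy only `O(ε * n)` above the least value the Frostman condition allows.

For independent copies `X`, `X'` of `μ`, the factorization `X ^ 2 - X' ^ 2 = (X + X') * (X - X')`
shows that multiplication by a typical value of `X + X'` nearly preserves the law of
`W = a * X ^ 2 - a * X' ^ 2`. Hence the linear forms whose coefficients are products of such values
have images of small entropy. Consider the slopes `b = (x₁ - x₂) / (x₃ - x₄)` in `[0, 1]`. If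
`b / 2` or `(b + 1) / 2` were far from every slope, the corresponding form in two copies of `X`
would be nearly injective and have entropy about `2 * s * n`, which is too much. So the slopes
are approximately closed under both maps and fill `[0, 1]`, and the entropy of `X + b * X'` is small
for every direction `b`, contradicting a discretized Marstrand projection theorem.
-/


open MeasureTheory ProbabilityTheory Real

/-- The dyadic discretization map `D_n(x) = 2^{-n} ⌊2^n x⌋`. -/
noncomputable def Dn (n : ℕ) (x : ℝ) : ℝ := (⌊(2 : ℝ) ^ n * x⌋ : ℝ) / (2 : ℝ) ^ n

/-- Shannon entropy (base 2) of the discrete random variable `f` under `P`. -/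
noncomputable def entOf {Ω : Type*} [MeasurableSpace Ω] {S : Type*}
    (P : Measure Ω) (f : Ω → S) : ℝ :=
  ∑' s : S, -((P (f ⁻¹' {s})).toReal * Real.logb 2 (P (f ⁻¹' {s})).toReal)

/-- `H_n(X)`: entropy of `D_n(X)`. -/
noncomputable def Hn {Ω : Type*} [MeasurableSpace Ω] (P : Measure Ω) (n : ℕ) (X : Ω → ℝ) : ℝ :=
  entOf P (fun ω => Dn n (X ω))

/-- `H_n(X,Y)`: entropy of `(D_n(X), D_n(Y))`. -/
noncomputable def Hn2 {Ω : Type*} [MeasurableSpace Ω] (P : Measure Ω) (n : ℕ)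
    (X Y : Ω → ℝ) : ℝ :=
  entOf P (fun ω => (Dn n (X ω), Dn n (Y ω)))

/-- `(X,Y)` is jointly `(s₁,s₂,C)`-Frostman. -/
def JointlyFrostman {Ω : Type*} [MeasurableSpace Ω] (P : Measure Ω) (X Y : Ω → ℝ)
    (s₁ s₂ C : ℝ) : Prop :=
  ∀ (x y r₁ r₂ : ℝ), 0 < r₁ → 0 < r₂ →
    (P (X ⁻¹' Metric.ball x r₁ ∩ Y ⁻¹' Metric.ball y r₂)).toReal ≤ C * r₁ ^ s₁ * r₂ ^ s₂

namespace FiniteEntropy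

open Finset

section Law

variable {Ω S T : Type*} [Fintype Ω] {p : Ω → ℝ}

/-- The probability of the event `E` under the weights `p` on a finite space. Probability vectors
are the elements of `stdSimplex ℝ Ω`. -/
noncomputable def prob (p : Ω → ℝ) (E : Set Ω) : ℝ :=
  ∑ ω, E.indicator p ω

/-- The law (probability mass function) of the random variable `f` under the weights `p`. -/
noncomputable def law (p : Ω → ℝ) (f : Ω → S) (v : S) : ℝ :=
  prob p {ω | f ω = v}

/-- The base-2 Shannon entropy of `f`. It is written as an expectation over `Ω`, so that the
codomain of `f` can be arbitrary. -/
noncomputable def entropy (p : Ω → ℝ) (f : Ω → S) : ℝ :=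
  ∑ ω, p ω * -logb 2 (law p f (f ω))

lemma prob_nonneg (hp : p ∈ stdSimplex ℝ Ω) (E : Set Ω) : 0 ≤ prob p E :=
  sum_nonneg fun ω _ => Set.indicator_nonneg (fun ω _ => hp.1 ω) ω

lemma prob_mono (hp : p ∈ stdSimplex ℝ Ω) {E F : Set Ω}
    (h : ∀ ω, p ω ≠ 0 → ω ∈ E → ω ∈ F) : prob p E ≤ prob p F := by
  classical
  refine sum_le_sum fun ω _ => ?_
  have := hp.1 ω
  simp only [Set.indicator_apply]
  split_ifs <;> grind

lemma prob_univ (hp : p ∈ stdSimplex ℝ Ω) : prob p Set.univ = 1 := by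
  simp [prob, hp.2]

lemma prob_le_one (hp : p ∈ stdSimplex ℝ Ω) (E : Set Ω) : prob p E ≤ 1 :=
  (prob_mono hp fun _ _ _ => Set.mem_univ _).trans_eq (prob_univ hp)

lemma prob_compl (hp : p ∈ stdSimplex ℝ Ω) (E : Set Ω) : prob p Eᶜ = 1 - prob p E := by
  rw [eq_sub_iff_add_eq, ← hp.2, prob, prob, ← sum_add_distrib]
  exact sum_congr rfl fun ω _ => Set.indicator_compl_add_self_apply E p ω

lemma prob_union_le (hp : p ∈ stdSimplex ℝ Ω) (E F : Set Ω) :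
    prob p (E ∪ F) ≤ prob p E + prob p F := by
  classical
  rw [prob, prob, prob, ← sum_add_distrib]
  refine sum_le_sum fun ω _ => ?_
  have := hp.1 ω
  simp only [Set.indicator_apply]
  split_ifs <;> grind

lemma exists_mem_of_prob_pos {E : Set Ω} (h : 0 < prob p E) : ∃ ω ∈ E, p ω ≠ 0 := by
  obtain ⟨ω, -, hω⟩ := exists_ne_zero_of_sum_ne_zero h.ne'
  exact ⟨ω, Set.mem_of_indicator_ne_zero hω, Set.indicator_apply_ne_zero.1 hω |>.2⟩

lemma law_nonneg (hp : p ∈ stdSimplex ℝ Ω) (f : Ω → S) (v : S) : 0 ≤ law p f v :=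
  prob_nonneg hp _

lemma law_le_prob (hp : p ∈ stdSimplex ℝ Ω) {f : Ω → S} {v : S} {E : Set Ω}
    (h : ∀ ω, p ω ≠ 0 → f ω = v → ω ∈ E) : law p f v ≤ prob p E :=
  prob_mono hp h

lemma law_pos (hp : p ∈ stdSimplex ℝ Ω) (f : Ω → S) {ω : Ω} (h : p ω ≠ 0) :
    0 < law p f (f ω) := by
  have hω : {ω' | f ω' = f ω}.indicator p ω = p ω :=
    Set.indicator_of_mem (show ω ∈ {ω' | f ω' = f ω} from rfl) p
  calc 0 < p ω := (hp.1 ω).lt_of_ne' h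
    _ ≤ law p f (f ω) := by
      rw [← hω]
      exact single_le_sum (fun i _ => Set.indicator_nonneg (fun i _ => hp.1 i) i) (mem_univ ω)

lemma law_const (hp : p ∈ stdSimplex ℝ Ω) (v : S) : law p (fun _ => v) v = 1 := by
  simpa [law] using prob_univ hp

lemma sum_mul_comp (f : Ω → S) {A : Finset S} (hA : ∀ ω, p ω ≠ 0 → f ω ∈ A) (φ : S → ℝ) :
    ∑ ω, p ω * φ (f ω) = ∑ v ∈ A, law p f v * φ v := by
  classical
  simp_rw [law, prob, sum_mul]
  rw [sum_comm]
  refine sum_congr rfl fun ω _ => ?_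
  by_cases h : p ω = 0
  · simp [Set.indicator_apply, h]
  · simp [Set.indicator_apply, ite_mul, hA ω h]

lemma law_comp (f : Ω → S) {A : Finset S} (hA : ∀ ω, p ω ≠ 0 → f ω ∈ A) (φ : S → T) (c : T)
    [DecidablePred fun v => φ v = c] :
    law p (fun ω => φ (f ω)) c = ∑ v ∈ A with φ v = c, law p f v := by
  have := sum_mul_comp f hA fun v => if φ v = c then 1 else 0
  simp only [mul_ite, mul_one, mul_zero, ← sum_filter] at this
  rw [← this, sum_filter]
  simp [law, prob, Set.indicator_apply]

lemma sum_law (hp : p ∈ stdSimplex ℝ Ω) (f : Ω → S) {A : Finset S}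
    (hA : ∀ ω, p ω ≠ 0 → f ω ∈ A) : ∑ v ∈ A, law p f v = 1 := by
  simpa [hp.2] using (sum_mul_comp f hA fun _ => 1).symm

end Law

section Average

variable {Ω : Type*} [Fintype Ω] {p : Ω → ℝ}

lemma sum_mul_le_sum_mul (hp : p ∈ stdSimplex ℝ Ω) {f g : Ω → ℝ}
    (h : ∀ ω, p ω ≠ 0 → f ω ≤ g ω) : ∑ ω, p ω * f ω ≤ ∑ ω, p ω * g ω := by
  refine sum_le_sum fun ω _ => ?_
  rcases eq_or_ne (p ω) 0 with h0 | h0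
  · simp [h0]
  · exact mul_le_mul_of_nonneg_left (h ω h0) (hp.1 ω)

lemma sum_mul_const (hp : p ∈ stdSimplex ℝ Ω) (B : ℝ) : ∑ ω, p ω * B = B := by
  rw [← sum_mul, hp.2, one_mul]

lemma sum_mul_le (hp : p ∈ stdSimplex ℝ Ω) {f : Ω → ℝ} {B : ℝ}
    (h : ∀ ω, p ω ≠ 0 → f ω ≤ B) : ∑ ω, p ω * f ω ≤ B :=
  (sum_mul_le_sum_mul hp h).trans_eq (sum_mul_const hp B)

lemma le_sum_mul (hp : p ∈ stdSimplex ℝ Ω) {f : Ω → ℝ} {B : ℝ}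
    (h : ∀ ω, p ω ≠ 0 → B ≤ f ω) : B ≤ ∑ ω, p ω * f ω :=
  (sum_mul_const hp B).symm.trans_le (sum_mul_le_sum_mul hp h)

lemma exists_le_of_sum_mul_le (hp : p ∈ stdSimplex ℝ Ω) {f : Ω → ℝ} {B : ℝ}
    (h : ∑ ω, p ω * f ω ≤ B) : ∃ ω, p ω ≠ 0 ∧ f ω ≤ B := by
  by_contra! hlt
  have hle : ∀ ω, p ω * B ≤ p ω * f ω := fun ω => by
    rcases eq_or_ne (p ω) 0 with h0 | h0
    · simp [h0]
    · exact mul_le_mul_of_nonneg_left (hlt ω h0).le (hp.1 ω)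
  obtain ⟨ω, -, hω⟩ : ∃ ω ∈ univ, p ω ≠ 0 := exists_ne_zero_of_sum_ne_zero (by simp [hp.2])
  have := sum_lt_sum (fun ω _ => hle ω)
    ⟨ω, mem_univ ω, mul_lt_mul_of_pos_left (hlt ω hω) ((hp.1 ω).lt_of_ne' hω)⟩
  rw [sum_mul_const hp] at this
  linarith

lemma prob_lt_mul_le_sum_mul (hp : p ∈ stdSimplex ℝ Ω) {f : Ω → ℝ}
    (hf : ∀ ω, p ω ≠ 0 → 0 ≤ f ω) (B : ℝ) : prob p {ω | B < f ω} * B ≤ ∑ ω, p ω * f ω := by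
  classical
  rw [prob, sum_mul]
  refine sum_le_sum fun ω _ => ?_
  rcases eq_or_ne (p ω) 0 with h0 | h0
  · simp [Set.indicator_apply, h0]
  · have := hf ω h0
    have := hp.1 ω
    rw [Set.indicator_apply]
    split_ifs with h
    · exact mul_le_mul_of_nonneg_left (le_of_lt h) (hp.1 ω)
    · rw [zero_mul]
      positivity

lemma sum_mul_logb_le_logb (hp : p ∈ stdSimplex ℝ Ω) {r : Ω → ℝ} (hr : ∀ ω, p ω ≠ 0 → 0 < r ω)
    {B : ℝ} (hB : 0 < B) (h : ∑ ω, p ω * r ω ≤ B) :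
    ∑ ω, p ω * logb 2 (r ω) ≤ logb 2 B := by
  have hlog : 0 < Real.log 2 := Real.log_pos one_lt_two
  calc ∑ ω, p ω * logb 2 (r ω)
      ≤ ∑ ω, p ω * (logb 2 B + (r ω / B - 1) / Real.log 2) := by
        refine sum_mul_le_sum_mul hp fun ω h0 => ?_
        have := Real.log_le_sub_one_of_pos (div_pos (hr ω h0) hB)
        rw [← sub_le_iff_le_add', ← Real.logb_div (hr ω h0).ne' hB.ne', Real.logb]
        gcongr
    _ = logb 2 B + ((∑ ω, p ω * r ω) / B - 1) / Real.log 2 := by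
        simp_rw [mul_add, sum_add_distrib, sum_mul_const hp, ← mul_div_assoc, ← sum_div, mul_sub,
          sum_sub_distrib, sum_mul_const hp, ← mul_div_assoc, ← sum_div]
    _ ≤ logb 2 B :=
        add_le_of_nonpos_right
          (div_nonpos_of_nonpos_of_nonneg (sub_nonpos.2 ((div_le_one hB).2 h)) hlog.le)

end Average

section Entropy

variable {Ω S T R : Type*} [Fintype Ω] {p : Ω → ℝ}

lemma entropy_const (hp : p ∈ stdSimplex ℝ Ω) (v : S) : entropy p (fun _ => v) = 0 := by
  simp [entropy, law_const hp]

lemma neg_logb_le_entropy_of_sum_law_le (hp : p ∈ stdSimplex ℝ Ω) {f : Ω → S} {B : ℝ} (hB : 0 < B)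
    (h : ∑ ω, p ω * law p f (f ω) ≤ B) : -logb 2 B ≤ entropy p f := by
  have := sum_mul_logb_le_logb hp (fun ω h0 => law_pos hp f h0) hB h
  simpa [entropy, mul_neg, sum_neg_distrib] using this

lemma neg_logb_le_entropy_of_law_le (hp : p ∈ stdSimplex ℝ Ω) {f : Ω → S} {B : ℝ}
    (h : ∀ ω, p ω ≠ 0 → law p f (f ω) ≤ B) : -logb 2 B ≤ entropy p f :=
  le_sum_mul hp fun ω h0 =>
    neg_le_neg (Real.logb_le_logb_of_le one_lt_two (law_pos hp f h0) (h ω h0))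

lemma entropy_mono (hp : p ∈ stdSimplex ℝ Ω) {f : Ω → S} {g : Ω → T}
    (h : ∀ ω ω', p ω ≠ 0 → p ω' ≠ 0 → f ω = f ω' → g ω = g ω') : entropy p g ≤ entropy p f :=
  sum_mul_le_sum_mul hp fun ω h0 => neg_le_neg <|
    Real.logb_le_logb_of_le one_lt_two (law_pos hp f h0) <|
      law_le_prob hp fun ω' h0' he => h ω' ω h0' h0 he

lemma entropy_le_of_eq_comp (hp : p ∈ stdSimplex ℝ Ω) {f : Ω → S} {g : Ω → T} (φ : S → T)
    (h : ∀ ω, g ω = φ (f ω)) : entropy p g ≤ entropy p f :=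
  entropy_mono hp fun ω ω' _ _ he => by rw [h, h, he]

lemma entropy_congr (hp : p ∈ stdSimplex ℝ Ω) {f : Ω → S} {g : Ω → T}
    (h : ∀ ω ω', f ω = f ω' ↔ g ω = g ω') : entropy p f = entropy p g :=
  le_antisymm (entropy_mono hp fun ω ω' _ _ => (h ω ω').2)
    (entropy_mono hp fun ω ω' _ _ => (h ω ω').1)

lemma entropy_le_neg_sum_mul_logb (hp : p ∈ stdSimplex ℝ Ω) {f : Ω → S} {A : Finset S}
    (hA : ∀ ω, p ω ≠ 0 → f ω ∈ A) {φ : S → ℝ} (hφ : ∀ v, 0 ≤ φ v)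
    (hpos : ∀ ω, p ω ≠ 0 → 0 < φ (f ω)) (hsum : ∑ v ∈ A, φ v ≤ 1) :
    entropy p f ≤ -∑ ω, p ω * logb 2 (φ (f ω)) := by
  have hratio : ∑ ω, p ω * (φ (f ω) / law p f (f ω)) ≤ 1 := by
    rw [sum_mul_comp f hA fun v => φ v / law p f v]
    refine (sum_le_sum fun v _ => ?_).trans hsum
    rcases eq_or_ne (law p f v) 0 with h0 | h0
    · simpa [h0] using hφ v
    · rw [mul_div_cancel₀ _ h0]
  have hgibbs := sum_mul_logb_le_logb hp
    (fun ω h0 => div_pos (hpos ω h0) (law_pos hp f h0)) one_pos hratio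
  have hsplit : ∑ ω, p ω * logb 2 (φ (f ω) / law p f (f ω)) =
      ∑ ω, p ω * logb 2 (φ (f ω)) + entropy p f := by
    rw [entropy, ← sum_add_distrib]
    refine sum_congr rfl fun ω _ => ?_
    rcases eq_or_ne (p ω) 0 with h0 | h0
    · simp [h0]
    · rw [Real.logb_div (hpos ω h0).ne' (law_pos hp f h0).ne']
      ring
  rw [Real.logb_one, hsplit] at hgibbs
  linarith

lemma entropy_prod_add_entropy_comp_le (hp : p ∈ stdSimplex ℝ Ω) (f : Ω → S) (g : Ω → T)
    (φ : S → R) (ψ : T → R) (h : ∀ ω, φ (f ω) = ψ (g ω)) :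
    entropy p (fun ω => (f ω, g ω)) + entropy p (fun ω => φ (f ω)) ≤
      entropy p f + entropy p g := by
  classical
  set k : Ω → R := fun ω => φ (f ω)
  have hkg : k = fun ω => ψ (g ω) := funext h
  have hgA : ∀ ω, p ω ≠ 0 → g ω ∈ univ.image g := fun ω _ => mem_image_of_mem g (mem_univ ω)
  have hfA : ∀ ω, p ω ≠ 0 → f ω ∈ univ.image f := fun ω _ => mem_image_of_mem f (mem_univ ω)
  let A : Finset (S × T) := {v ∈ univ.image f ×ˢ univ.image g | ψ v.2 = φ v.1}
  -- `f` and `g` made conditionally independent given `k`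
  let ρ : S × T → ℝ := fun v => law p f v.1 * law p g v.2 / law p k (φ v.1)
  have hsum : ∑ v ∈ A, ρ v ≤ 1 := by
    rw [sum_filter, sum_product, ← sum_law hp f hfA]
    refine sum_le_sum fun a _ => ?_
    rw [← sum_filter]
    simp only [ρ]
    rw [← sum_div, ← mul_sum, ← law_comp g hgA ψ, ← hkg]
    rw [mul_div_assoc]
    exact mul_le_of_le_one_right (law_nonneg hp f a) (div_self_le_one _)
  have hpos : ∀ ω, p ω ≠ 0 → 0 < ρ (f ω, g ω) := fun ω h0 =>
    div_pos (mul_pos (law_pos hp f h0) (law_pos hp g h0)) (law_pos hp k h0)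
  have hbound := entropy_le_neg_sum_mul_logb hp (f := fun ω => (f ω, g ω)) (A := A)
    (fun ω _ => by simp [A, h ω])
    (fun v => div_nonneg (mul_nonneg (law_nonneg hp _ _) (law_nonneg hp _ _))
      (law_nonneg hp _ _)) hpos hsum
  have hsplit : ∑ ω, p ω * logb 2 (ρ (f ω, g ω)) = entropy p k - entropy p f - entropy p g := by
    simp_rw [entropy, ← sum_sub_distrib]
    refine sum_congr rfl fun ω _ => ?_
    rcases eq_or_ne (p ω) 0 with h0 | h0
    · simp [h0]
    · have hf := (law_pos hp f h0).ne'
      have hg := (law_pos hp g h0).ne'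
      rw [Real.logb_div (mul_ne_zero hf hg) (law_pos hp k h0).ne', Real.logb_mul hf hg]
      ring
  linarith

lemma entropy_prod_le (hp : p ∈ stdSimplex ℝ Ω) (f : Ω → S) (g : Ω → T) :
    entropy p (fun ω => (f ω, g ω)) ≤ entropy p f + entropy p g := by
  have := entropy_prod_add_entropy_comp_le hp f g (fun _ => ()) (fun _ => ()) fun _ => rfl
  rwa [entropy_const hp, add_zero] at this

lemma entropy_prod_le_add_sum_logb_card (hp : p ∈ stdSimplex ℝ Ω) {f : Ω → S} {g : Ω → T}
    {F : T → Finset S} (hF : ∀ ω, p ω ≠ 0 → f ω ∈ F (g ω)) :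
    entropy p (fun ω => (f ω, g ω)) ≤ entropy p g + ∑ ω, p ω * logb 2 #(F (g ω)) := by
  classical
  have hgA : ∀ ω, p ω ≠ 0 → g ω ∈ univ.image g := fun ω _ => mem_image_of_mem g (mem_univ ω)
  let A : Finset (S × T) := {v ∈ univ.image f ×ˢ univ.image g | v.1 ∈ F v.2}
  -- `f` made uniformly distributed on `F (g ω)` given `g`
  let ρ : S × T → ℝ := fun v => law p g v.2 / #(F v.2)
  have hcard : ∀ ω, p ω ≠ 0 → (0 : ℝ) < #(F (g ω)) := fun ω h0 =>
    Nat.cast_pos.2 (card_pos.2 ⟨_, hF ω h0⟩)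
  have hsum : ∑ v ∈ A, ρ v ≤ 1 := by
    rw [sum_filter, sum_product_right, ← sum_law hp g hgA]
    refine sum_le_sum fun b _ => ?_
    rw [← sum_filter]
    simp only [ρ, sum_const, nsmul_eq_mul, filter_mem_eq_inter]
    rw [← mul_div_assoc, mul_comm, mul_div_assoc]
    exact mul_le_of_le_one_right (law_nonneg hp g b) <|
      div_le_one_of_le₀ (Nat.cast_le.2 (card_le_card inter_subset_right)) (Nat.cast_nonneg _)
  have hbound : entropy p (fun ω => (f ω, g ω)) ≤ -∑ ω, p ω * logb 2 (ρ (f ω, g ω)) :=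
    entropy_le_neg_sum_mul_logb hp (A := A) (fun ω h0 => by simp [A, hF ω h0])
      (fun v => div_nonneg (law_nonneg hp _ _) (Nat.cast_nonneg _))
      (fun ω h0 => div_pos (law_pos hp g h0) (hcard ω h0)) hsum
  have hsplit : ∑ ω, p ω * logb 2 (ρ (f ω, g ω)) =
      -entropy p g - ∑ ω, p ω * logb 2 #(F (g ω)) := by
    rw [entropy, ← sum_neg_distrib, ← sum_sub_distrib]
    refine sum_congr rfl fun ω _ => ?_
    rcases eq_or_ne (p ω) 0 with h0 | h0
    · simp [h0]
    · simp only [ρ]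
      rw [Real.logb_div (law_pos hp g h0).ne' (hcard ω h0).ne']
      ring
  linarith

/-- The integers within distance `d` of `x`, for `0 ≤ d`. -/
noncomputable def intBall (x : ℤ) (d : ℝ) : Finset ℤ :=
  Icc (x - ⌊d⌋) (x + ⌊d⌋)

lemma mem_intBall {x y : ℤ} {d : ℝ} : y ∈ intBall x d ↔ |(y : ℝ) - x| ≤ d := by
  rw [intBall, mem_Icc, ← Int.cast_sub, ← Int.cast_abs, ← Int.le_floor, abs_le]
  constructor <;> rintro ⟨h, h'⟩ <;> constructor <;> linarith

lemma card_intBall_le (x : ℤ) {d : ℝ} (hd : 0 ≤ d) : (#(intBall x d) : ℝ) ≤ 2 * d + 1 := by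
  have hfloor := Int.floor_nonneg.2 hd
  have hcard : (#(intBall x d) : ℤ) = 2 * ⌊d⌋ + 1 := by
    rw [intBall, Int.card_Icc]
    omega
  rw [← Int.cast_natCast, hcard]
  push_cast
  linarith [Int.floor_le d]

lemma entropy_prod_le_add_logb (hp : p ∈ stdSimplex ℝ Ω) {f : Ω → ℤ} {g : Ω → T} {d : ℝ}
    (hd : 0 ≤ d)
    (h : ∀ ω ω', p ω ≠ 0 → p ω' ≠ 0 → g ω = g ω' → |(f ω : ℝ) - f ω'| ≤ d) :
    entropy p (fun ω => (f ω, g ω)) ≤ entropy p g + logb 2 (2 * d + 1) := by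
  classical
  let F : T → Finset ℤ := fun b =>
    if hb : ∃ ω, p ω ≠ 0 ∧ g ω = b then intBall (f hb.choose) d else ∅
  have hF : ∀ ω, p ω ≠ 0 → ∃ ω', p ω' ≠ 0 ∧ g ω' = g ω ∧ F (g ω) = intBall (f ω') d := by
    intro ω h0
    have hb : ∃ ω', p ω' ≠ 0 ∧ g ω' = g ω := ⟨ω, h0, rfl⟩
    exact ⟨hb.choose, hb.choose_spec.1, hb.choose_spec.2, dif_pos hb⟩
  have hmem : ∀ ω, p ω ≠ 0 → f ω ∈ F (g ω) := by
    intro ω h0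
    obtain ⟨ω', h0', hg, hω'⟩ := hF ω h0
    exact hω' ▸ mem_intBall.2 (h ω ω' h0 h0' hg.symm)
  refine (entropy_prod_le_add_sum_logb_card hp hmem).trans (add_le_add_right (sum_mul_le hp ?_) _)
  intro ω h0
  refine Real.logb_le_logb_of_le one_lt_two (Nat.cast_pos.2 (card_pos.2 ⟨_, hmem ω h0⟩)) ?_
  obtain ⟨ω', -, -, hω'⟩ := hF ω h0
  exact hω' ▸ card_intBall_le _ hd

lemma entropy_le_prod_left (hp : p ∈ stdSimplex ℝ Ω) (f : Ω → S) (g : Ω → T) :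
    entropy p f ≤ entropy p (fun ω => (f ω, g ω)) :=
  entropy_le_of_eq_comp hp Prod.fst fun _ => rfl

lemma entropy_le_add_logb (hp : p ∈ stdSimplex ℝ Ω) {f : Ω → ℤ} {g : Ω → T} {d : ℝ}
    (hd : 0 ≤ d)
    (h : ∀ ω ω', p ω ≠ 0 → p ω' ≠ 0 → g ω = g ω' → |(f ω : ℝ) - f ω'| ≤ d) :
    entropy p f ≤ entropy p g + logb 2 (2 * d + 1) :=
  (entropy_le_prod_left hp f g).trans (entropy_prod_le_add_logb hp hd h)

end Entropy

section Weights

variable {Ω Ω' T : Type*}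

/-- The weights on `Ω × Ω'` that make the two coordinates independent with laws `p` and `q`. -/
def prodWeight (p : Ω → ℝ) (q : Ω' → ℝ) : Ω × Ω' → ℝ :=
  fun t => p t.1 * q t.2

scoped instance : SProd (Ω → ℝ) (Ω' → ℝ) (Ω × Ω' → ℝ) := ⟨prodWeight⟩

lemma prodWeight_apply (p : Ω → ℝ) (q : Ω' → ℝ) (t : Ω × Ω') : (p ×ˢ q) t = p t.1 * q t.2 := rfl

/-- The joint weights of a parameter `t` with law `r` and a point with law `Q t` given `t`. -/
def mixture (r : T → ℝ) (Q : T → Ω → ℝ) : T × Ω → ℝ :=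
  fun x => r x.1 * Q x.1 x.2

/-- The weights `p` conditioned on `g = v`; this is the zero vector if that event is null. -/
noncomputable def condWeight {S : Type*} [Fintype Ω] (p : Ω → ℝ) (g : Ω → S) (v : S) : Ω → ℝ :=
  fun ω => {ω | g ω = v}.indicator p ω / law p g v

end Weights

section Pushforward

variable {Ω Ω' S : Type*} [Fintype Ω] [Fintype Ω'] {p : Ω → ℝ} {p' : Ω' → ℝ}

/-- The image of the weights `p` under `φ` is `p'`, expressed by testing against observables. -/
def IsPushforward (p : Ω → ℝ) (φ : Ω → Ω') (p' : Ω' → ℝ) : Prop :=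
  ∀ h : Ω' → ℝ, ∑ ω, p ω * h (φ ω) = ∑ ω', p' ω' * h ω'

lemma IsPushforward.law_comp {φ : Ω → Ω'} (h : IsPushforward p φ p') (f : Ω' → S) (v : S) :
    law p (fun ω => f (φ ω)) v = law p' f v := by
  classical
  simpa [law, prob, Set.indicator_apply] using h fun ω' => if f ω' = v then 1 else 0

lemma IsPushforward.entropy_comp {φ : Ω → Ω'} (h : IsPushforward p φ p') (f : Ω' → S) :
    entropy p (fun ω => f (φ ω)) = entropy p' f := by
  simp_rw [entropy, h.law_comp f]
  exact h fun ω' => -logb 2 (law p' f (f ω'))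

lemma isPushforward_equiv (e : Ω ≃ Ω') (h : ∀ ω, p' (e ω) = p ω) : IsPushforward p e p' :=
  fun k => by simp_rw [← Equiv.sum_comp e, h]

lemma isPushforward_id : IsPushforward p (fun ω => ω) p :=
  fun _ => rfl

lemma IsPushforward.trans {Ω₁ : Type*} [Fintype Ω₁] {q : Ω₁ → ℝ} {φ : Ω → Ω'} {ψ : Ω' → Ω₁}
    (hφ : IsPushforward p φ p') (hψ : IsPushforward p' ψ q) :
    IsPushforward p (fun ω => ψ (φ ω)) q := fun h =>
  (hφ fun ω => h (ψ ω)).trans (hψ h)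

end Pushforward

section ProdWeight

variable {Ω Ω' Ω₁ Ω₂ S R : Type*} [Fintype Ω] [Fintype Ω'] [Fintype Ω₁] [Fintype Ω₂]
  {p : Ω → ℝ} {q : Ω' → ℝ} {p₁ : Ω₁ → ℝ} {p₂ : Ω₂ → ℝ}

lemma prodWeight_mem_stdSimplex (hp : p ∈ stdSimplex ℝ Ω) (hq : q ∈ stdSimplex ℝ Ω') :
    p ×ˢ q ∈ stdSimplex ℝ (Ω × Ω') := by
  refine ⟨fun t => mul_nonneg (hp.1 _) (hq.1 _), ?_⟩
  simp_rw [prodWeight_apply, Fintype.sum_prod_type, ← mul_sum, hq.2, mul_one, hp.2]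

lemma isPushforward_fst (hq : q ∈ stdSimplex ℝ Ω') : IsPushforward (p ×ˢ q) Prod.fst p := by
  intro h
  simp only [prodWeight_apply, Fintype.sum_prod_type]
  simp_rw [← sum_mul, ← mul_sum, hq.2, mul_one]

lemma isPushforward_snd (hp : p ∈ stdSimplex ℝ Ω) : IsPushforward (p ×ˢ q) Prod.snd q := fun h => by
  simp only [prodWeight_apply, Fintype.sum_prod_type_right]
  simp_rw [← sum_mul, hp.2, one_mul]

lemma isPushforward_swap : IsPushforward (p ×ˢ q) Prod.swap (q ×ˢ p) :=
  isPushforward_equiv (Equiv.prodComm Ω Ω') fun _ => mul_comm _ _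

lemma IsPushforward.prodMap {φ : Ω → Ω₁} {φ' : Ω' → Ω₂} (h : IsPushforward p φ p₁)
    (h' : IsPushforward q φ' p₂) :
    IsPushforward (p ×ˢ q) (fun t => (φ t.1, φ' t.2)) (p₁ ×ˢ p₂) := fun k => by
  simp only [prodWeight_apply, Fintype.sum_prod_type, mul_assoc, ← mul_sum]
  simp only [fun x => h' fun y => k (φ x, y)]
  exact h fun x => ∑ y, p₂ y * k (x, y)

lemma law_prodMk (f : Ω → S) (g : Ω' → R) (a : S) (b : R) :
    law (p ×ˢ q) (fun t => (f t.1, g t.2)) (a, b) = law p f a * law q g b := by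
  classical
  simp_rw [law, prob, sum_mul_sum, Fintype.sum_prod_type, Set.indicator_apply, prodWeight_apply,
    Set.mem_ofPred_eq, Prod.mk.injEq, ite_zero_mul_ite_zero]

lemma entropy_prodMk (hp : p ∈ stdSimplex ℝ Ω) (hq : q ∈ stdSimplex ℝ Ω') (f : Ω → S)
    (g : Ω' → R) : entropy (p ×ˢ q) (fun t => (f t.1, g t.2)) = entropy p f + entropy q g := by
  rw [← (isPushforward_fst (p := p) hq).entropy_comp f,
    ← (isPushforward_snd (q := q) hp).entropy_comp g, entropy, entropy, entropy, ← sum_add_distrib]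
  refine sum_congr rfl fun t _ => ?_
  rcases eq_or_ne ((p ×ˢ q) t) 0 with h0 | h0
  · simp [h0]
  · have hf := (law_pos hp f (left_ne_zero_of_mul h0)).ne'
    have hg := (law_pos hq g (right_ne_zero_of_mul h0)).ne'
    rw [law_prodMk, Real.logb_mul hf hg, (isPushforward_fst hq).law_comp,
      (isPushforward_snd hp).law_comp]
    ring

lemma entropy_le_add_of_prodMk_le (hp : p ∈ stdSimplex ℝ Ω) (hq : q ∈ stdSimplex ℝ Ω') {f : Ω → S}
    {F : Ω × Ω' → R} {K : ℝ}
    (h : entropy (p ×ˢ q) (fun t => (f t.1, t.2)) ≤ entropy (p ×ˢ q) (fun t => (F t, t.2)) + K) :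
    entropy p f ≤ entropy (p ×ˢ q) F + K := by
  have hpair := entropy_prod_le (prodWeight_mem_stdSimplex hp hq) F Prod.snd
  rw [(isPushforward_snd hp).entropy_comp fun y => y] at hpair
  rw [entropy_prodMk hp hq f fun y => y] at h
  linarith

lemma entropy_le_add_logb_of_left (hp : p ∈ stdSimplex ℝ Ω) (hq : q ∈ stdSimplex ℝ Ω') {f : Ω → ℤ}
    {F : Ω × Ω' → S} {d : ℝ} (hd : 0 ≤ d)
    (hF : ∀ x y z, p x ≠ 0 → p y ≠ 0 → F (x, z) = F (y, z) → |(f x : ℝ) - f y| ≤ d) :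
    entropy p f ≤ entropy (p ×ˢ q) F + logb 2 (2 * d + 1) := by
  have hpq := prodWeight_mem_stdSimplex hp hq
  refine entropy_le_add_of_prodMk_le hp hq ?_
  calc entropy (p ×ˢ q) (fun t => (f t.1, t.2))
      ≤ entropy (p ×ˢ q) (fun t => (f t.1, F t, t.2)) :=
        entropy_le_of_eq_comp hpq (fun v => (v.1, v.2.2)) fun _ => rfl
    _ ≤ _ := entropy_prod_le_add_logb hpq hd fun ⟨x, z⟩ ⟨y, z'⟩ h h' heq => by
        obtain ⟨hxy, rfl⟩ : F (x, z) = F (y, z') ∧ z = z' := Prod.ext_iff.1 heq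
        exact hF x y z (left_ne_zero_of_mul h) (left_ne_zero_of_mul h') hxy

lemma entropy_le_of_left (hp : p ∈ stdSimplex ℝ Ω) (hq : q ∈ stdSimplex ℝ Ω') {f : Ω → S}
    {F : Ω × Ω' → R} (hF : ∀ x y z, F (x, z) = F (y, z) → f x = f y) :
    entropy p f ≤ entropy (p ×ˢ q) F := by
  rw [← add_zero (entropy (p ×ˢ q) F)]
  refine entropy_le_add_of_prodMk_le hp hq ?_
  rw [add_zero]
  refine entropy_mono (prodWeight_mem_stdSimplex hp hq) fun ⟨x, z⟩ ⟨y, z'⟩ _ _ heq => ?_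
  obtain ⟨hxy, rfl⟩ : F (x, z) = F (y, z') ∧ z = z' := Prod.ext_iff.1 heq
  rw [hF x y z hxy]

lemma entropy_le_of_right (hp : p ∈ stdSimplex ℝ Ω) (hq : q ∈ stdSimplex ℝ Ω') {f : Ω' → S}
    {F : Ω × Ω' → R} (hF : ∀ x y z, F (z, x) = F (z, y) → f x = f y) :
    entropy q f ≤ entropy (p ×ˢ q) F :=
  (entropy_le_of_left hq hp (F := fun t => F t.swap) hF).trans_eq
    (isPushforward_swap.entropy_comp F)

end ProdWeight

section Sumset

variable {G Ω Ω' Ω₁ Ω₂ Ω₃ : Type*} [AddCommGroup G] [Fintype Ω] [Fintype Ω'] [Fintype Ω₁]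
  [Fintype Ω₂] [Fintype Ω₃]
  {p : Ω → ℝ} {q : Ω' → ℝ} {p₁ : Ω₁ → ℝ} {p₂ : Ω₂ → ℝ} {p₃ : Ω₃ → ℝ}

lemma entropy_left_le_sub (hp : p ∈ stdSimplex ℝ Ω) (hq : q ∈ stdSimplex ℝ Ω') (A : Ω → G)
    (B : Ω' → G) : entropy p A ≤ entropy (p ×ˢ q) (fun t => A t.1 - B t.2) :=
  entropy_le_of_left hp hq fun _ _ _ h => sub_left_injective h

lemma entropy_right_le_sub (hp : p ∈ stdSimplex ℝ Ω) (hq : q ∈ stdSimplex ℝ Ω') (A : Ω → G)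
    (B : Ω' → G) : entropy q B ≤ entropy (p ×ˢ q) (fun t => A t.1 - B t.2) :=
  entropy_le_of_right hp hq fun _ _ _ h => sub_right_injective h

lemma entropy_left_le_add (hp : p ∈ stdSimplex ℝ Ω) (hq : q ∈ stdSimplex ℝ Ω') (A : Ω → G)
    (B : Ω' → G) : entropy p A ≤ entropy (p ×ˢ q) (fun t => A t.1 + B t.2) :=
  entropy_le_of_left hp hq fun _ _ _ h => add_left_injective _ h

lemma entropy_right_le_add (hp : p ∈ stdSimplex ℝ Ω) (hq : q ∈ stdSimplex ℝ Ω') (A : Ω → G)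
    (B : Ω' → G) : entropy q B ≤ entropy (p ×ˢ q) (fun t => A t.1 + B t.2) :=
  entropy_le_of_right hp hq fun _ _ _ h => add_right_injective _ h

lemma entropy_prodMk₃ {S T R : Type*} (h₁ : p₁ ∈ stdSimplex ℝ Ω₁) (h₂ : p₂ ∈ stdSimplex ℝ Ω₂)
    (h₃ : p₃ ∈ stdSimplex ℝ Ω₃) (A : Ω₁ → S) (B : Ω₂ → T) (C : Ω₃ → R) :
    entropy (p₁ ×ˢ (p₂ ×ˢ p₃)) (fun t => (A t.1, B t.2.1, C t.2.2)) =
      entropy p₁ A + (entropy p₂ B + entropy p₃ C) := by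
  rw [entropy_prodMk h₁ (prodWeight_mem_stdSimplex h₂ h₃) A fun t => (B t.1, C t.2),
    entropy_prodMk h₂ h₃]

lemma entropy_ruzsa_triangle (h₁ : p₁ ∈ stdSimplex ℝ Ω₁) (h₂ : p₂ ∈ stdSimplex ℝ Ω₂)
    (h₃ : p₃ ∈ stdSimplex ℝ Ω₃) (A : Ω₁ → G) (B : Ω₂ → G) (C : Ω₃ → G) :
    entropy (p₁ ×ˢ p₃) (fun t => A t.1 - C t.2) + entropy p₂ B ≤
      entropy (p₁ ×ˢ p₂) (fun t => A t.1 - B t.2) +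
        entropy (p₂ ×ˢ p₃) (fun t => B t.1 - C t.2) := by
  have h₂₃ := prodWeight_mem_stdSimplex h₂ h₃
  have hP := prodWeight_mem_stdSimplex h₁ h₂₃
  have hsub := entropy_prod_add_entropy_comp_le hP
    (fun t => (A t.1 - B t.2.1, B t.2.1 - C t.2.2)) (fun t => (A t.1, C t.2.2))
    (fun v => v.1 + v.2) (fun v => v.1 - v.2) fun _ => sub_add_sub_cancel _ _ _
  have hpair := entropy_prod_le hP (fun t => A t.1 - B t.2.1) fun t => B t.2.1 - C t.2.2
  have htriple := entropy_le_of_eq_comp hP (g := fun t => (A t.1, B t.2.1, C t.2.2))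
    (f := fun t => ((A t.1 - B t.2.1, B t.2.1 - C t.2.2), A t.1, C t.2.2))
    (fun v => (v.2.1, v.1.2 + v.2.2, v.2.2)) fun t => by simp
  have hAB := (isPushforward_id.prodMap (isPushforward_fst h₃)).entropy_comp
    (p := p₁ ×ˢ (p₂ ×ˢ p₃)) fun t => A t.1 - B t.2
  have hBC := (isPushforward_snd (q := p₂ ×ˢ p₃) h₁).entropy_comp fun t => B t.1 - C t.2
  have hAC := (isPushforward_id.prodMap (isPushforward_snd h₂)).entropy_comp
    (p := p₁ ×ˢ (p₂ ×ˢ p₃)) fun t => A t.1 - C t.2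
  have hAC' := (isPushforward_id.prodMap (isPushforward_snd h₂)).entropy_comp
    (p := p₁ ×ˢ (p₂ ×ˢ p₃)) fun t => (A t.1, C t.2)
  rw [entropy_prodMk h₁ h₃] at hAC'
  rw [entropy_prodMk₃ h₁ h₂ h₃] at htriple
  simp only [sub_add_sub_cancel] at hsub hAB hAC hAC'
  linarith

lemma entropy_kaimanovich_vershik (h₁ : p₁ ∈ stdSimplex ℝ Ω₁) (h₂ : p₂ ∈ stdSimplex ℝ Ω₂)
    (h₃ : p₃ ∈ stdSimplex ℝ Ω₃) (A : Ω₁ → G) (B : Ω₂ → G) (C : Ω₃ → G) :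
    entropy (p₁ ×ˢ (p₂ ×ˢ p₃)) (fun t => A t.1 + B t.2.1 + C t.2.2) + entropy p₂ B ≤
      entropy (p₁ ×ˢ p₂) (fun t => A t.1 + B t.2) +
        entropy (p₂ ×ˢ p₃) (fun t => B t.1 + C t.2) := by
  have h₂₃ := prodWeight_mem_stdSimplex h₂ h₃
  have hP := prodWeight_mem_stdSimplex h₁ h₂₃
  have hsub := entropy_prod_add_entropy_comp_le hP
    (fun t => (A t.1 + B t.2.1, C t.2.2)) (fun t => (A t.1, B t.2.1 + C t.2.2))
    (fun v => v.1 + v.2) (fun v => v.1 + v.2) fun _ => add_assoc _ _ _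
  have hpair := entropy_prod_le hP (fun t => A t.1 + B t.2.1) fun t => C t.2.2
  have htriple := entropy_le_of_eq_comp hP (g := fun t => (A t.1, B t.2.1, C t.2.2))
    (f := fun t => ((A t.1 + B t.2.1, C t.2.2), A t.1, B t.2.1 + C t.2.2))
    (fun v => (v.2.1, v.1.1 - v.2.1, v.1.2)) fun t => by simp
  have hAB := (isPushforward_id.prodMap (isPushforward_fst h₃)).entropy_comp
    (p := p₁ ×ˢ (p₂ ×ˢ p₃)) fun t => A t.1 + B t.2
  have hC := (isPushforward_snd (q := p₂ ×ˢ p₃) h₁).entropy_comp fun t => C t.2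
  rw [(isPushforward_snd h₂).entropy_comp C] at hC
  have hABC := entropy_prodMk h₁ h₂₃ A fun t => B t.1 + C t.2
  rw [entropy_prodMk₃ h₁ h₂ h₃] at htriple
  simp only at hAB
  linarith

/-- The excess of the entropy of the difference of independent copies of `A` and `W` over the
entropy of `W`: it measures how far translation by `A` is from preserving the law of `W`. -/
noncomputable def entropyExcess (p : Ω → ℝ) (A : Ω → G) (q : Ω' → ℝ) (W : Ω' → G) : ℝ :=
  entropy (p ×ˢ q) (fun t => A t.1 - W t.2) - entropy q W

lemma entropyExcess_sub_le (hp : p ∈ stdSimplex ℝ Ω) (hq : q ∈ stdSimplex ℝ Ω') (A A' : Ω → G)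
    (W : Ω' → G) :
    entropyExcess p (fun ω => A ω - A' ω) q W ≤
      entropyExcess p A q W + entropyExcess p A' q W + entropyExcess q W q W := by
  have hqq := prodWeight_mem_stdSimplex hq hq
  have hP := prodWeight_mem_stdSimplex hp hqq
  have hsub := entropy_prod_add_entropy_comp_le hP
    (fun t => (A t.1 - W t.2.1, A' t.1 - W t.2.2)) (fun t => ((A t.1, A' t.1), W t.2.1 - W t.2.2))
    (fun v => v.1 - v.2) (fun v => v.1.1 - v.1.2 - v.2) fun _ => sub_sub_sub_comm _ _ _ _
  have hpair := entropy_prod_le hP (fun t => A t.1 - W t.2.1) fun t => A' t.1 - W t.2.2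
  have hquad := entropy_le_of_eq_comp hP (g := fun t => ((A t.1, A' t.1), W t.2.1, W t.2.2))
    (f := fun t => ((A t.1 - W t.2.1, A' t.1 - W t.2.2), (A t.1, A' t.1), W t.2.1 - W t.2.2))
    (fun v => (v.2.1, v.2.1.1 - v.1.1, v.2.1.2 - v.1.2)) fun t => by simp
  rw [entropy_prodMk₃ hp hq hq fun ω => (A ω, A' ω)] at hquad
  have hA := (isPushforward_id.prodMap (isPushforward_fst hq)).entropy_comp
    (p := p ×ˢ (q ×ˢ q)) fun t => A t.1 - W t.2
  have hA' := (isPushforward_id.prodMap (isPushforward_snd hq)).entropy_comp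
    (p := p ×ˢ (q ×ˢ q)) fun t => A' t.1 - W t.2
  have hAA' := entropy_prodMk hp hqq (fun ω => (A ω, A' ω)) fun t => W t.1 - W t.2
  have hdrop := entropy_left_le_add (prodWeight_mem_stdSimplex hp hq) hq
    (fun t => A t.1 - A' t.1 - W t.2) W
  have hassoc : IsPushforward ((p ×ˢ q) ×ˢ q) (Equiv.prodAssoc Ω Ω' Ω') (p ×ˢ (q ×ˢ q)) :=
    isPushforward_equiv _ fun t => (mul_assoc _ _ _).symm
  have hfour := hassoc.entropy_comp fun t => A t.1 - A' t.1 - W t.2.1 + W t.2.2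
  simp only [entropyExcess, Equiv.prodAssoc_apply, sub_sub_sub_comm, sub_add] at *
  linarith

end Sumset

section Mixture

variable {Ω T S : Type*} [Fintype Ω] [Fintype T] {r : T → ℝ} {Q : T → Ω → ℝ}

lemma mixture_mem_stdSimplex (hr : r ∈ stdSimplex ℝ T)
    (hQ : ∀ t, r t ≠ 0 → Q t ∈ stdSimplex ℝ Ω) : mixture r Q ∈ stdSimplex ℝ (T × Ω) := by
  refine ⟨fun x => ?_, ?_⟩
  · rcases eq_or_ne (r x.1) 0 with h0 | h0
    · simp [mixture, h0]
    · exact mul_nonneg (hr.1 _) ((hQ _ h0).1 _)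
  · simp only [mixture, Fintype.sum_prod_type, ← mul_sum]
    rw [← hr.2]
    refine sum_congr rfl fun t _ => ?_
    rcases eq_or_ne (r t) 0 with h0 | h0
    · simp [h0]
    · rw [(hQ t h0).2, mul_one]

lemma isPushforward_mixture_fst (hQ : ∀ t, r t ≠ 0 → Q t ∈ stdSimplex ℝ Ω) :
    IsPushforward (mixture r Q) Prod.fst r := fun h => by
  simp only [mixture, Fintype.sum_prod_type, ← mul_sum, ← sum_mul]
  refine sum_congr rfl fun t _ => ?_
  rcases eq_or_ne (r t) 0 with h0 | h0
  · simp [h0]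
  · rw [(hQ t h0).2, mul_one]

lemma isPushforward_mixture_map {Ω' : Type*} [Fintype Ω'] {Q' : T → Ω' → ℝ} {φ : Ω → Ω'}
    (hφ : ∀ t, r t ≠ 0 → IsPushforward (Q t) φ (Q' t)) :
    IsPushforward (mixture r Q) (fun x => (x.1, φ x.2)) (mixture r Q') := fun h => by
  simp only [mixture, Fintype.sum_prod_type, mul_assoc, ← mul_sum]
  refine sum_congr rfl fun t _ => ?_
  rcases eq_or_ne (r t) 0 with ht | ht
  · simp [ht]
  · rw [hφ t ht fun ω => h (t, ω)]

lemma law_mixture (F : T → Ω → S) (t : T) (v : S) :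
    law (mixture r Q) (fun x => (x.1, F x.1 x.2)) (t, v) = r t * law (Q t) (F t) v := by
  classical
  rw [law, prob, Fintype.sum_prod_type, sum_eq_single t]
  · simp [law, prob, mixture, Set.indicator_apply, mul_sum]
  · intro t' _ hne
    simp [hne]
  · simp

lemma law_id (t : T) : law r (fun t => t) t = r t := by
  classical
  simp [law, prob, Set.indicator_apply]

lemma entropy_mixture (hQ : ∀ t, r t ≠ 0 → Q t ∈ stdSimplex ℝ Ω) (F : T → Ω → S) :
    entropy (mixture r Q) (fun x => (x.1, F x.1 x.2)) =
      entropy r (fun t => t) + ∑ t, r t * entropy (Q t) (F t) := by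
  rw [← (isPushforward_mixture_fst hQ).entropy_comp, entropy, entropy, Fintype.sum_prod_type,
    Fintype.sum_prod_type, ← sum_add_distrib]
  refine sum_congr rfl fun t _ => ?_
  rw [entropy, mul_sum, ← sum_add_distrib]
  refine sum_congr rfl fun ω _ => ?_
  rw [(isPushforward_mixture_fst hQ).law_comp (f := fun t => t), law_id, law_mixture, mixture]
  rcases eq_or_ne (r t) 0 with h0 | h0
  · simp [h0]
  rcases eq_or_ne (Q t ω) 0 with h0' | h0'
  · simp [h0']
  rw [Real.logb_mul h0 (law_pos (hQ t h0) _ h0').ne']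
  ring

lemma sum_mul_entropy_le (hr : r ∈ stdSimplex ℝ T) (hQ : ∀ t, r t ≠ 0 → Q t ∈ stdSimplex ℝ Ω)
    (F : T → Ω → S) :
    ∑ t, r t * entropy (Q t) (F t) ≤ entropy (mixture r Q) (fun x => F x.1 x.2) := by
  have hpair := entropy_prod_le (mixture_mem_stdSimplex hr hQ) Prod.fst fun x => F x.1 x.2
  rw [entropy_mixture hQ, (isPushforward_mixture_fst hQ).entropy_comp fun t => t] at hpair
  linarith

end Mixture

section Conditioning

variable {Ω Ω' S R : Type*} [Fintype Ω] [Fintype Ω'] {p : Ω → ℝ} {q : Ω' → ℝ}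

lemma condWeight_mem_stdSimplex (hp : p ∈ stdSimplex ℝ Ω) (g : Ω → S) {t : Ω} (ht : p t ≠ 0) :
    condWeight p g (g t) ∈ stdSimplex ℝ Ω :=
  ⟨fun _ => div_nonneg (Set.indicator_nonneg (fun _ _ => hp.1 _) _) (law_nonneg hp _ _), by
    simp only [condWeight]
    rw [← sum_div]
    exact div_self (law_pos hp g ht).ne'⟩

lemma of_condWeight_ne_zero {g : Ω → S} {v : S} {ω : Ω} (h : condWeight p g v ω ≠ 0) :
    g ω = v ∧ p ω ≠ 0 :=
  Set.indicator_apply_ne_zero.1 (left_ne_zero_of_mul h)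

lemma isPushforward_mixture_condWeight (hp : p ∈ stdSimplex ℝ Ω) (g : Ω → S) :
    IsPushforward (mixture p fun t => condWeight p g (g t)) Prod.snd p := fun h => by
  classical
  simp only [mixture, Fintype.sum_prod_type_right]
  refine sum_congr rfl fun ω _ => ?_
  rw [← sum_mul]
  congr 1
  rcases eq_or_ne (p ω) 0 with h0 | h0
  · simp [condWeight, Set.indicator_apply, h0]
  calc ∑ t, p t * condWeight p g (g t) ω
      = ∑ t, {t | g t = g ω}.indicator p t * (p ω / law p g (g ω)) := by
        refine sum_congr rfl fun t _ => ?_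
        rcases eq_or_ne (g t) (g ω) with he | he
        · simp [condWeight, he]
        · simp [condWeight, he, he.symm]
    _ = law p g (g ω) * (p ω / law p g (g ω)) := by rw [← sum_mul, law, prob]
    _ = p ω := mul_div_cancel₀ _ (law_pos hp g h0).ne'

lemma law_condWeight (f : Ω → R) (g : Ω → S) (w : R) (v : S) :
    law (condWeight p g v) f w = law p (fun ω => (f ω, g ω)) (w, v) / law p g v := by
  classical
  rw [law, law, prob, prob, sum_div]
  refine sum_congr rfl fun ω _ => ?_
  by_cases hf : f ω = w <;> simp [condWeight, Set.indicator_apply, hf]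

lemma sum_mul_entropy_condWeight (hp : p ∈ stdSimplex ℝ Ω) (g : Ω → S) (f : Ω → R) :
    ∑ t, p t * entropy (condWeight p g (g t)) f =
      entropy p (fun ω => (f ω, g ω)) - entropy p g := by
  have htower := isPushforward_mixture_condWeight hp g fun ω =>
    -logb 2 (law p (fun ω => (f ω, g ω)) (f ω, g ω) / law p g (g ω))
  rw [Fintype.sum_prod_type] at htower
  calc ∑ t, p t * entropy (condWeight p g (g t)) f
      = ∑ ω, p ω * -logb 2 (law p (fun ω => (f ω, g ω)) (f ω, g ω) / law p g (g ω)) := by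
        rw [← htower]
        refine sum_congr rfl fun t _ => ?_
        rw [entropy, mul_sum]
        refine sum_congr rfl fun ω _ => ?_
        rw [mixture, mul_assoc]
        rcases eq_or_ne (condWeight p g (g t) ω) 0 with h0 | h0
        · simp [h0]
        · rw [law_condWeight, (of_condWeight_ne_zero h0).1]
    _ = entropy p (fun ω => (f ω, g ω)) - entropy p g := by
        rw [entropy, entropy, ← sum_sub_distrib]
        refine sum_congr rfl fun ω _ => ?_
        rcases eq_or_ne (p ω) 0 with h0 | h0
        · simp [h0]
        · rw [Real.logb_div (law_pos hp (fun ω => (f ω, g ω)) h0).ne' (law_pos hp g h0).ne']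
          ring

lemma sum_mul_entropy_condWeight_prodWeight_le (hp : p ∈ stdSimplex ℝ Ω)
    (hq : q ∈ stdSimplex ℝ Ω') (g : Ω → S) (F : Ω × Ω' → R) :
    ∑ t, p t * entropy (condWeight p g (g t) ×ˢ q) F ≤ entropy (p ×ˢ q) F := by
  have hpush : IsPushforward (mixture p fun t => condWeight p g (g t) ×ˢ q) Prod.snd (p ×ˢ q) := by
    intro h
    have := isPushforward_mixture_condWeight hp g fun ω => ∑ ω', q ω' * h (ω, ω')
    simpa only [mixture, prodWeight_apply, Fintype.sum_prod_type, mul_sum, mul_assoc] using this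
  rw [← hpush.entropy_comp F]
  exact sum_mul_entropy_le hp
    (fun t ht => prodWeight_mem_stdSimplex (condWeight_mem_stdSimplex hp g ht) hq) fun _ => F

end Conditioning

section Frostman

variable {Ω Ω' S : Type*} [Fintype Ω] [Fintype Ω'] {p : Ω → ℝ} {q : Ω' → ℝ} {X : Ω → ℤ} {n : ℕ}
  {L s : ℝ}

/-- The Frostman condition of exponent `s` and constant `L` for an integer random variable `X`
thought of as `2 ^ n` times a real one, so that only radii `R ≥ 1` matter. -/
def IsFrostman (p : Ω → ℝ) (X : Ω → ℤ) (n : ℕ) (L s : ℝ) : Prop :=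
  ∀ x R : ℝ, 1 ≤ R → prob p {ω | |(X ω : ℝ) - x| ≤ R} ≤ L * (R / 2 ^ n) ^ s

lemma IsFrostman.mono (hF : IsFrostman p X n L s) (hp : p ∈ stdSimplex ℝ Ω) (hL : 1 ≤ L) {s' : ℝ}
    (h0 : 0 ≤ s') (hs : s' ≤ s) : IsFrostman p X n L s' := by
  intro x R hR
  rcases le_total (R / 2 ^ n) 1 with hR1 | hR1
  · refine (hF x R hR).trans (mul_le_mul_of_nonneg_left ?_ (by linarith))
    exact Real.rpow_le_rpow_of_exponent_ge (by positivity) hR1 hs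
  · calc _ ≤ 1 := prob_le_one hp _
      _ ≤ L * (R / 2 ^ n) ^ s' := one_le_mul_of_one_le_of_one_le hL (Real.one_le_rpow hR1 h0)

lemma logb_mul_div_two_pow_rpow (n : ℕ) (s : ℝ) {L R : ℝ} (hL : 0 < L) (hR : 0 < R) :
    logb 2 (L * (R / 2 ^ n) ^ s) = logb 2 L - s * (n - logb 2 R) := by
  rw [Real.logb_mul hL.ne' (by positivity), Real.logb_rpow_eq_mul_logb_of_pos (by positivity),
    Real.logb_div hR.ne' (by positivity), Real.logb_pow, Real.logb_self_eq_one one_lt_two]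
  ring

lemma IsFrostman.le_entropy (hF : IsFrostman p X n L s) (hp : p ∈ stdSimplex ℝ Ω) (hL : 0 < L)
    {f : Ω → S} {R : ℝ} (hR : 1 ≤ R)
    (h : ∀ ω ω', p ω ≠ 0 → p ω' ≠ 0 → f ω = f ω' → |(X ω : ℝ) - X ω'| ≤ R) :
    s * (n - logb 2 R) - logb 2 L ≤ entropy p f := by
  have := neg_logb_le_entropy_of_law_le hp fun ω h0 =>
    (law_le_prob hp fun ω' h0' he => h ω' ω h0' h0 he).trans (hF (X ω) R hR)
  rw [logb_mul_div_two_pow_rpow n s hL (by linarith)] at this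
  linarith

lemma prob_prodWeight (p : Ω → ℝ) (q : Ω' → ℝ) (E : Set (Ω × Ω')) :
    prob (p ×ˢ q) E = ∑ ω, p ω * prob q {ω' | (ω, ω') ∈ E} := by
  classical
  simp_rw [prob, Fintype.sum_prod_type, mul_sum, Set.indicator_apply, prodWeight_apply, mul_ite,
    mul_zero, Set.mem_ofPred_eq]

lemma prob_prodWeight_prod (p : Ω → ℝ) (q : Ω' → ℝ) (E : Set Ω) (F : Set Ω') :
    prob (p ×ˢ q) (E ×ˢ F) = prob p E * prob q F := by
  classical
  simp_rw [prob, Fintype.sum_prod_type, sum_mul_sum, Set.indicator_apply, prodWeight_apply,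
    Set.mem_prod, ite_zero_mul_ite_zero]

lemma IsFrostman.prob_prodWeight_le (hq : q ∈ stdSimplex ℝ Ω')
    (hF : IsFrostman p X n L s) {E : Set Ω'} {y : Ω' → ℝ} {R : ℝ} (hR : 1 ≤ R) :
    prob (q ×ˢ p) {t | t.1 ∈ E ∧ |(X t.2 : ℝ) - y t.1| ≤ R} ≤
      prob q E * (L * (R / 2 ^ n) ^ s) := by
  classical
  rw [prob_prodWeight, prob, sum_mul]
  refine sum_le_sum fun ω _ => ?_
  by_cases hω : ω ∈ E
  · simpa [hω] using mul_le_mul_of_nonneg_left (hF (y ω) R hR) (hq.1 ω)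
  · simp [hω, prob]

end Frostman

section ScaleSeparation

variable {G Ω Ω' Ω₁ Ω₂ : Type*} [AddCommGroup G] [Fintype Ω] [Fintype Ω'] [Fintype Ω₁] [Fintype Ω₂]
  {p : Ω → ℝ} {q : Ω' → ℝ} {p₁ : Ω₁ → ℝ} {p₂ : Ω₂ → ℝ}

lemma entropy_neg (hp : p ∈ stdSimplex ℝ Ω) (A : Ω → G) :
    entropy p (fun ω => -A ω) = entropy p A :=
  entropy_congr hp fun _ _ => neg_inj

lemma entropy_sub_comm (hp : p ∈ stdSimplex ℝ Ω) (hq : q ∈ stdSimplex ℝ Ω') (A : Ω → G)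
    (B : Ω' → G) :
    entropy (p ×ˢ q) (fun t => A t.1 - B t.2) = entropy (q ×ˢ p) (fun t => B t.1 - A t.2) := by
  rw [← isPushforward_swap.entropy_comp fun t => B t.1 - A t.2,
    ← entropy_neg (prodWeight_mem_stdSimplex hp hq)]
  simp

lemma entropyExcess_fst (hp₁ : p₁ ∈ stdSimplex ℝ Ω₁) (A : Ω → G) (W : Ω' → G) :
    entropyExcess (p ×ˢ p₁) (fun t => A t.1) q W = entropyExcess p A q W := by
  rw [entropyExcess, entropyExcess,
    ← ((isPushforward_fst hp₁).prodMap isPushforward_id).entropy_comp fun t => A t.1 - W t.2]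

lemma entropyExcess_snd (hp : p ∈ stdSimplex ℝ Ω) (A : Ω₁ → G) (W : Ω' → G) :
    entropyExcess (p ×ˢ p₁) (fun t => A t.2) q W = entropyExcess p₁ A q W := by
  rw [entropyExcess, entropyExcess,
    ← ((isPushforward_snd hp).prodMap isPushforward_id).entropy_comp fun t => A t.1 - W t.2]

lemma abs_ediv_sub_ediv_le (x y : ℤ) {m : ℤ} (hm : 0 < m) :
    |((x / m : ℤ) : ℝ) - (y / m : ℤ)| ≤ |(x : ℝ) - y| / m + 1 := by
  have hm' : (0 : ℝ) < m := Int.cast_pos.2 hm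
  have hle : ∀ z : ℤ, ((z / m : ℤ) : ℝ) ≤ z / m := fun z => by
    rw [le_div_iff₀ hm']
    exact_mod_cast Int.ediv_mul_le z hm.ne'
  have hlt : ∀ z : ℤ, (z : ℝ) / m < (z / m : ℤ) + 1 := fun z => by
    rw [div_lt_iff₀ hm']
    exact_mod_cast Int.lt_ediv_add_one_mul_self z hm
  have hdiv : |(x : ℝ) - y| / m = |(x : ℝ) / m - y / m| := by
    rw [← sub_div, abs_div, abs_of_pos hm']
  rw [hdiv]
  have hself := abs_le.1 (le_refl |(x : ℝ) / m - y / m|)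
  rw [abs_le]
  constructor <;> linarith [hle x, hle y, hlt x, hlt y]

lemma abs_sub_le_of_ediv_eq {x y m : ℤ} (hm : 0 < m) (h : x / m = y / m) :
    |(x : ℝ) - y| ≤ m := by
  have hx := Int.mul_ediv_add_emod x m
  have hy := Int.mul_ediv_add_emod y m
  have := Int.emod_nonneg x hm.ne'
  have := Int.emod_lt_of_pos x hm
  have := Int.emod_nonneg y hm.ne'
  have := Int.emod_lt_of_pos y hm
  rw [h] at hx
  have : |x - y| ≤ m := abs_le.2 ⟨by linarith, by linarith⟩
  exact_mod_cast this

lemma entropy_add_entropy_ediv_le (h₁ : p₁ ∈ stdSimplex ℝ Ω₁) (h₂ : p₂ ∈ stdSimplex ℝ Ω₂)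
    {U : Ω₁ → ℤ} (V : Ω₂ → ℤ) {m : ℤ} (hm : 0 < m) {K : ℝ} (hK : 0 ≤ K)
    (hU : ∀ ω, p₁ ω ≠ 0 → |(U ω : ℝ)| ≤ K * m) :
    entropy p₁ U + entropy p₂ (fun ω => V ω / m) ≤
      entropy (p₁ ×ˢ p₂) (fun t => U t.1 + V t.2) + logb 2 (2 * (2 * K + 1) + 1) := by
  have hP := prodWeight_mem_stdSimplex h₁ h₂
  have hm' : (0 : ℝ) < m := Int.cast_pos.2 hm
  have hsubmod := entropy_prod_add_entropy_comp_le hP (fun t => (V t.2 / m, U t.1 + V t.2))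
    (fun t => V t.2) Prod.fst (fun v => v / m) fun _ => rfl
  have hdetermine : entropy (p₁ ×ˢ p₂) (fun t => (U t.1, V t.2)) ≤
      entropy (p₁ ×ˢ p₂) (fun t => ((V t.2 / m, U t.1 + V t.2), V t.2)) :=
    entropy_le_of_eq_comp hP (fun v => (v.1.2 - v.2, v.2)) fun _ => by simp
  have hcoarse : entropy (p₁ ×ˢ p₂) (fun t => (V t.2 / m, U t.1 + V t.2)) ≤
      entropy (p₁ ×ˢ p₂) (fun t => U t.1 + V t.2) + logb 2 (2 * (2 * K + 1) + 1) := by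
    refine entropy_prod_le_add_logb hP (by positivity) fun t t' h0 h0' h => ?_
    have hV : (V t.2 : ℝ) - V t'.2 = U t'.1 - U t.1 := by
      have : (U t.1 : ℝ) + V t.2 = U t'.1 + V t'.2 := mod_cast h
      linarith
    have hdiff : |(V t.2 : ℝ) - V t'.2| ≤ 2 * K * m := by
      rw [hV]
      refine (abs_sub _ _).trans ?_
      linarith [hU t.1 (left_ne_zero_of_mul h0), hU t'.1 (left_ne_zero_of_mul h0')]
    have := abs_ediv_sub_ediv_le (V t.2) (V t'.2) hm
    have := (div_le_iff₀ hm').2 hdiff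
    linarith
  have hV := (isPushforward_snd (q := p₂) h₁).entropy_comp V
  have hVm := (isPushforward_snd (q := p₂) h₁).entropy_comp fun ω => V ω / m
  have hUV := entropy_prodMk h₁ h₂ U V
  linarith

end ScaleSeparation

section Excess

variable {G Ω Ω' Ω₁ : Type*} [AddCommGroup G] [Fintype Ω] [Fintype Ω'] [Fintype Ω₁]
  {p : Ω → ℝ} {q : Ω' → ℝ} {p₁ : Ω₁ → ℝ}

lemma entropyExcess_sub_sub_sub_le (hp : p ∈ stdSimplex ℝ Ω) (hq : q ∈ stdSimplex ℝ Ω')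
    (A A' B B' : Ω → G) (W : Ω' → G) :
    entropyExcess p (fun ω => A ω - A' ω - (B ω - B' ω)) q W ≤
      entropyExcess p A q W + entropyExcess p A' q W + entropyExcess p B q W +
        entropyExcess p B' q W + 3 * entropyExcess q W q W := by
  linarith [entropyExcess_sub_le hp hq A A' W, entropyExcess_sub_le hp hq B B' W,
    entropyExcess_sub_le hp hq (fun ω => A ω - A' ω) (fun ω => B ω - B' ω) W]

lemma entropyExcess_fst_sub_snd_le (hp : p ∈ stdSimplex ℝ Ω) (hp₁ : p₁ ∈ stdSimplex ℝ Ω₁)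
    (hq : q ∈ stdSimplex ℝ Ω') (A : Ω → G) (B : Ω₁ → G) (W : Ω' → G) :
    entropyExcess (p ×ˢ p₁) (fun t => A t.1 - B t.2) q W ≤
      entropyExcess p A q W + entropyExcess p₁ B q W + entropyExcess q W q W := by
  simpa only [entropyExcess_fst hp₁, entropyExcess_snd hp] using
    entropyExcess_sub_le (prodWeight_mem_stdSimplex hp hp₁) hq (fun t => A t.1) (fun t => B t.2) W

lemma entropy_add_entropy_ediv_le_entropyExcess (hp : p ∈ stdSimplex ℝ Ω)
    (hq : q ∈ stdSimplex ℝ Ω') (h₁ : p₁ ∈ stdSimplex ℝ Ω₁) {U : Ω₁ → ℤ} (A : Ω → ℤ) (W : Ω' → ℤ)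
    {m : ℤ} (hm : 0 < m) {K : ℝ} (hK : 0 ≤ K) (hU : ∀ ω, p₁ ω ≠ 0 → |(U ω : ℝ)| ≤ K * m) :
    entropy p₁ U + entropy p (fun ω => A ω / m) ≤
      entropyExcess p₁ U q W + entropyExcess p A q W + entropy q W +
        logb 2 (2 * (2 * K + 1) + 1) + logb 2 5 := by
  have hscale := entropy_add_entropy_ediv_le h₁ (prodWeight_mem_stdSimplex hq hp)
    (fun t => -W t.1 + A t.2) hm hK hU
  have hkv := entropy_kaimanovich_vershik h₁ hq hp U (fun t => -W t) A
  have hUW : entropy (p₁ ×ˢ q) (fun t => U t.1 + -W t.2) =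
      entropyExcess p₁ U q W + entropy q W := by
    simp [entropyExcess, sub_eq_add_neg]
  have hAW : entropy (q ×ˢ p) (fun t => -W t.1 + A t.2) = entropyExcess p A q W + entropy q W := by
    rw [← isPushforward_swap.entropy_comp fun t => -W t.1 + A t.2]
    simp [entropyExcess, sub_eq_neg_add]
  have hcoarse : entropy p (fun ω => A ω / m) ≤
      entropy (q ×ˢ p) (fun t => (-W t.1 + A t.2) / m) + logb 2 (2 * 2 + 1) := by
    rw [← isPushforward_swap.entropy_comp fun t => (-W t.1 + A t.2) / m]
    refine entropy_le_add_logb_of_left hp hq zero_le_two fun x y z _ _ h => ?_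
    have hsum := abs_sub_le_of_ediv_eq hm h
    push_cast [Prod.fst_swap, Prod.snd_swap] at hsum
    rw [add_sub_add_left_eq_sub] at hsum
    have := abs_ediv_sub_ediv_le (A x) (A y) hm
    have := (div_le_one (Int.cast_pos.2 hm : (0 : ℝ) < m)).2 hsum
    linarith
  rw [entropy_neg hq] at hkv
  norm_num at hcoarse
  simp only [add_assoc] at *
  linarith

end Excess

section FloorMul

/-- The product `κ v x` of two integers at scale `2 ^ n`, renormalized to scale `2 ^ n` and
rounded down. -/
noncomputable def floorMul (κ : ℝ) (n : ℕ) (v x : ℤ) : ℤ :=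
  ⌊κ * v * x / 2 ^ n⌋

lemma floorMul_le (κ : ℝ) (n : ℕ) (v x : ℤ) : (floorMul κ n v x : ℝ) ≤ κ * v * x / 2 ^ n :=
  Int.floor_le _

lemma lt_floorMul_add_one (κ : ℝ) (n : ℕ) (v x : ℤ) : κ * v * x / 2 ^ n < floorMul κ n v x + 1 :=
  Int.lt_floor_add_one _

/-- A combination of rounded products which approximates `(2 * κ * D / 2 ^ n) * (x + b * y)`, where
`D = v 2 - v 3` and `b = ((v 0 - v 1) + (v 4 - v 5)) / (2 * D)`. It is written with differences
only, as required by `entropyExcess_sub_le`. -/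
noncomputable def slopeForm (κ : ℝ) (n : ℕ) (v : Fin 6 → ℤ) (x y : ℤ) : ℤ :=
  floorMul κ n (v 2) x - floorMul κ n (v 3) x - (floorMul κ n (v 3) x - floorMul κ n (v 2) x) -
    (floorMul κ n (v 5) y - floorMul κ n (v 4) y - (floorMul κ n (v 0) y - floorMul κ n (v 1) y))

variable {κ b c : ℝ} {n : ℕ} {v : Fin 6 → ℤ} {x y x' y' D : ℤ}

lemma abs_slopeForm_sub_le (κ : ℝ) (n : ℕ) (hD : D = v 2 - v 3)
    (hb : b * (2 * D) = ((v 0 : ℝ) - v 1) + (v 4 - v 5)) (x y : ℤ) :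
    |(slopeForm κ n v x y : ℝ) - 2 * κ * D / 2 ^ n * (x + b * y)| ≤ 4 := by
  have hform : 2 * κ * D / 2 ^ n * (x + b * y) =
      2 * (κ * v 2 * x / 2 ^ n - κ * v 3 * x / 2 ^ n) +
        (κ * v 0 * y / 2 ^ n - κ * v 1 * y / 2 ^ n) +
        (κ * v 4 * y / 2 ^ n - κ * v 5 * y / 2 ^ n) :=
    calc 2 * κ * D / 2 ^ n * (x + b * y)
        = 2 * κ * D * x / 2 ^ n + κ * (b * (2 * D)) * y / 2 ^ n := by ring
      _ = _ := by
        rw [hb, hD]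
        push_cast
        ring
  have hle := floorMul_le κ n
  have hlt := lt_floorMul_add_one κ n
  rw [hform, slopeForm, abs_le]
  push_cast
  constructor <;>
    linarith [hle (v 0) y, hle (v 1) y, hle (v 2) x, hle (v 3) x, hle (v 4) y, hle (v 5) y,
      hlt (v 0) y, hlt (v 1) y, hlt (v 2) x, hlt (v 3) x, hlt (v 4) y, hlt (v 5) y]

lemma abs_slopeForm_le (κ : ℝ) (hD : D = v 2 - v 3) (hD0 : D ≠ 0)
    (hb : b * (2 * D) = ((v 0 : ℝ) - v 1) + (v 4 - v 5)) (hb0 : 0 ≤ b) (hb1 : b ≤ 1)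
    (hx : |(x : ℝ)| ≤ c * 2 ^ n) (hy : |(y : ℝ)| ≤ c * 2 ^ n) :
    |(slopeForm κ n v x y : ℝ)| ≤ (4 * |κ| * c + 4) * |D| := by
  have hD1 : (1 : ℝ) ≤ |D| := mod_cast Int.one_le_abs hD0
  have hxy : |x + b * y| ≤ 2 * (c * 2 ^ n) := by
    calc |x + b * y| ≤ |(x : ℝ)| + b * |(y : ℝ)| := by
          simpa only [abs_mul, abs_of_nonneg hb0] using abs_add_le (x : ℝ) (b * y)
      _ ≤ |(x : ℝ)| + |(y : ℝ)| := by
          gcongr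
          exact mul_le_of_le_one_left (abs_nonneg _) hb1
      _ ≤ 2 * (c * 2 ^ n) := by linarith
  have hmain : |2 * κ * D / 2 ^ n * (x + b * y)| ≤ 4 * |κ| * c * |D| := by
    rw [abs_mul, abs_div, abs_mul, abs_mul, abs_two, abs_of_pos (by positivity : (0 : ℝ) < 2 ^ n)]
    calc 2 * |κ| * |(D : ℝ)| / 2 ^ n * |x + b * y|
        ≤ 2 * |κ| * |(D : ℝ)| / 2 ^ n * (2 * (c * 2 ^ n)) := by gcongr
      _ = 4 * |κ| * c * |(D : ℝ)| := by field_simp; ring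
      _ = 4 * |κ| * c * |D| := by push_cast; rfl
  have hclose := abs_slopeForm_sub_le κ n hD hb x y
  have hsplit := abs_sub_abs_le_abs_sub (slopeForm κ n v x y : ℝ) (2 * κ * D / 2 ^ n * (x + b * y))
  linarith

lemma abs_sub_add_mul_le_of_slopeForm_eq (hκ : κ ≠ 0) (hD : D = v 2 - v 3) (hD0 : D ≠ 0)
    (hb : b * (2 * D) = ((v 0 : ℝ) - v 1) + (v 4 - v 5))
    (h : slopeForm κ n v x y = slopeForm κ n v x' y') :
    |((x : ℝ) - x') + b * (y - y')| ≤ 4 / |κ| * (2 ^ n / |(D : ℝ)|) := by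
  have hxy := abs_le.1 (abs_slopeForm_sub_le κ n hD hb x y)
  have hxy' := abs_le.1 (abs_slopeForm_sub_le κ n hD hb x' y')
  rw [h] at hxy
  have hdiff : |2 * κ * D / 2 ^ n * (((x : ℝ) - x') + b * (y - y'))| ≤ 8 := by
    rw [abs_le]
    constructor <;> linarith
  rw [abs_mul, abs_div, abs_mul, abs_mul, abs_two, abs_of_pos (by positivity : (0 : ℝ) < 2 ^ n),
    div_mul_eq_mul_div, div_le_iff₀ (by positivity)] at hdiff
  rw [div_mul_div_comm, le_div_iff₀ (by positivity)]
  linarith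

lemma IsFrostman.le_entropy_floorMul_ediv {Ω : Type*} [Fintype Ω] {p : Ω → ℝ} {X : Ω → ℤ}
    {L s r : ℝ} {v m : ℤ} (hF : IsFrostman p X n L s) (hp : p ∈ stdSimplex ℝ Ω) (hL : 0 < L)
    (hs : s ∈ Set.Icc 0 1) (hκ : κ ≠ 0) (hr : 0 < r) (hr1 : r ≤ 1) (hv : r * 2 ^ n ≤ |(v : ℝ)|)
    (hm : 0 < m) :
    s * (n - logb 2 m) - logb 2 (2 / |κ| + 1) + s * logb 2 r - logb 2 L ≤
      entropy p (fun ω => floorMul κ n v (X ω) / m) := by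
  have hκ' : 0 < |κ| := abs_pos.2 hκ
  have hm1 : (1 : ℝ) ≤ m := mod_cast hm
  have h2n : (0 : ℝ) < 2 ^ n := by positivity
  have hK : 1 < 2 / |κ| + 1 := lt_add_of_pos_left 1 (by positivity)
  have hR : 1 ≤ (2 / |κ| + 1) * m / r := by
    rw [le_div_iff₀ hr]
    nlinarith
  have hentropy := hF.le_entropy hp hL (f := fun ω => floorMul κ n v (X ω) / m) hR
    fun ω ω' _ _ h => by
    have hfloor := abs_le.1 (abs_sub_le_of_ediv_eq hm h)
    have hprod : |κ * v * X ω / 2 ^ n - κ * v * X ω' / 2 ^ n| ≤ 2 * m := by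
      rw [abs_le]
      constructor <;>
        linarith [floorMul_le κ n v (X ω), lt_floorMul_add_one κ n v (X ω),
          floorMul_le κ n v (X ω'), lt_floorMul_add_one κ n v (X ω')]
    rw [← sub_div, abs_div, abs_of_pos h2n, ← mul_sub, abs_mul, abs_mul, div_le_iff₀ h2n] at hprod
    rw [le_div_iff₀ hr, ← mul_le_mul_iff_right₀ (mul_pos hκ' h2n)]
    calc |κ| * 2 ^ n * (|(X ω : ℝ) - X ω'| * r)
        = |κ| * (r * 2 ^ n) * |(X ω : ℝ) - X ω'| := by ring
      _ ≤ |κ| * |(v : ℝ)| * |(X ω : ℝ) - X ω'| := by gcongr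
      _ ≤ 2 * m * 2 ^ n := hprod
      _ ≤ 2 * m * 2 ^ n + |κ| * 2 ^ n * m := le_add_of_nonneg_right (by positivity)
      _ = |κ| * 2 ^ n * ((2 / |κ| + 1) * m) := by field_simp
  rw [Real.logb_div (by positivity) hr.ne', Real.logb_mul (by positivity) (by positivity)]
    at hentropy
  have : s * logb 2 (2 / |κ| + 1) ≤ logb 2 (2 / |κ| + 1) :=
    mul_le_of_le_one_left (Real.logb_nonneg one_lt_two hK.le) hs.2
  linarith

end FloorMul

section NearModule

variable {Ω Ω' : Type*} [Fintype Ω] [Fintype Ω'] {p : Ω → ℝ} {q : Ω' → ℝ} {X : Ω → ℤ}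
  {W : Ω' → ℤ} {v₀ : ℤ} {κ c : ℝ} {n : ℕ} {s θ δ L r : ℝ}

/-- At scale `2 ^ n`, the law of `W` behaves like a module over the values of `X + v₀`: it is almost
preserved by translations by `W` (up to `δ`) and by the rounded products `κ * (X ω + v₀) * X` for
each fixed `ω` (up to `θ`), although its entropy is at most `s * n + δ` and `X` is Frostman with
exponent `s`. -/
structure IsNearModule (p : Ω → ℝ) (q : Ω' → ℝ) (X : Ω → ℤ) (W : Ω' → ℤ) (v₀ : ℤ) (κ c : ℝ)
    (n : ℕ) (s θ δ L r : ℝ) : Prop where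
  left_mem : p ∈ stdSimplex ℝ Ω
  right_mem : q ∈ stdSimplex ℝ Ω'
  abs_le : ∀ ω, p ω ≠ 0 → |(X ω : ℝ)| ≤ c * 2 ^ n
  le_abs_add : ∀ ω, p ω ≠ 0 → r * 2 ^ n ≤ |((X ω + v₀ : ℤ) : ℝ)|
  mul_excess_le : ∀ ω, p ω ≠ 0 → entropyExcess p (fun ω' => floorMul κ n (X ω + v₀) (X ω')) q W ≤ θ
  self_excess_le : entropyExcess q W q W ≤ δ
  entropy_le : entropy q W ≤ s * n + δ
  isFrostman : IsFrostman p X n L s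
  one_le_L : 1 ≤ L
  r_pos : 0 < r
  r_le_one : r ≤ 1
  κ_ne_zero : κ ≠ 0
  one_le_c : 1 ≤ c
  s_pos : 0 < s
  s_lt_one : s < 1

/-- The part of the error in `IsNearModule.entropy_slopeForm_le` depending only on `κ` and `c`. -/
noncomputable def slopeLoss (κ c : ℝ) : ℝ :=
  logb 2 (2 / |κ| + 1) + logb 2 5 + logb 2 (2 * (2 * (4 * |κ| * c + 4) + 1) + 1)

lemma IsNearModule.entropy_slopeForm_le (h : IsNearModule p q X W v₀ κ c n s θ δ L r)
    {ω : Fin 6 → Ω} (hω : ∀ i, p (ω i) ≠ 0) {D : ℤ} (hD : D = X (ω 2) - X (ω 3)) (hD0 : D ≠ 0)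
    {b : ℝ} (hb0 : 0 ≤ b) (hb1 : b ≤ 1)
    (hb : b * (2 * D) = ((X (ω 0) : ℝ) - X (ω 1)) + (X (ω 4) - X (ω 5))) :
    entropy (p ×ˢ p) (fun t => slopeForm κ n (fun i => X (ω i) + v₀) (X t.1) (X t.2)) +
        s * (n - logb 2 |(D : ℝ)|) ≤
      s * n + 9 * θ + 8 * δ + logb 2 L - s * logb 2 r + slopeLoss κ c := by
  obtain ⟨hp, hq⟩ := And.intro h.left_mem h.right_mem
  let a : Fin 6 → Ω → ℤ := fun i ω' => floorMul κ n (X (ω i) + v₀) (X ω')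
  have ha : ∀ i, entropyExcess p (a i) q W ≤ θ := fun i => h.mul_excess_le _ (hω i)
  have hD' : D = (X (ω 2) + v₀) - (X (ω 3) + v₀) := by rw [hD]; ring
  have hb' : b * (2 * D) = (((X (ω 0) + v₀ : ℤ) : ℝ) - (X (ω 1) + v₀ : ℤ)) +
      ((X (ω 4) + v₀ : ℤ) - (X (ω 5) + v₀ : ℤ)) := by
    rw [hb]
    push_cast
    ring
  have hexcess : entropyExcess (p ×ˢ p)
      (fun t => slopeForm κ n (fun i => X (ω i) + v₀) (X t.1) (X t.2)) q W ≤ 8 * θ + 7 * δ := by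
    have := entropyExcess_fst_sub_snd_le hp hp hq (fun ω => a 2 ω - a 3 ω - (a 3 ω - a 2 ω))
      (fun ω => a 5 ω - a 4 ω - (a 0 ω - a 1 ω)) W
    simp only [slopeForm]
    linarith [entropyExcess_sub_sub_sub_le hp hq (a 2) (a 3) (a 3) (a 2) W,
      entropyExcess_sub_sub_sub_le hp hq (a 5) (a 4) (a 0) (a 1) W, h.self_excess_le,
      ha 0, ha 1, ha 2, ha 3, ha 4, ha 5]
  have hupper := entropy_add_entropy_ediv_le_entropyExcess hp hq (prodWeight_mem_stdSimplex hp hp)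
    (a 0) W (abs_pos.2 hD0) (K := 4 * |κ| * c + 4) (by have := h.one_le_c; positivity)
    fun t ht => abs_slopeForm_le (v := fun i => X (ω i) + v₀) κ hD' hD0 hb' hb0 hb1
      (h.abs_le _ (left_ne_zero_of_mul ht)) (h.abs_le _ (right_ne_zero_of_mul ht))
  have hlower := h.isFrostman.le_entropy_floorMul_ediv hp (by linarith [h.one_le_L])
    ⟨h.s_pos.le, h.s_lt_one.le⟩ h.κ_ne_zero h.r_pos h.r_le_one (h.le_abs_add _ (hω 0))
    (abs_pos.2 hD0)
  rw [Int.cast_abs] at hlower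
  rw [slopeLoss]
  linarith [ha 0, h.entropy_le]

end NearModule

section Density

variable {B : Set ℝ} {ρ b y : ℝ}

lemma exists_mem_inter_Icc_abs_sub_le (h0 : (0 : ℝ) ∈ B) (h1 : (1 : ℝ) ∈ B) (hb : b ∈ B)
    (hy : y ∈ Set.Icc 0 1) : ∃ b' ∈ B ∩ Set.Icc 0 1, |b' - y| ≤ |b - y| := by
  obtain ⟨hy0, hy1⟩ := hy
  have hself := abs_le.1 (le_refl |b - y|)
  rcases lt_or_ge b 0 with hb0 | hb0
  · exact ⟨0, ⟨h0, by simp⟩, by rw [abs_le]; constructor <;> linarith⟩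
  rcases lt_or_ge 1 b with hb1 | hb1
  · exact ⟨1, ⟨h1, by simp⟩, by rw [abs_le]; constructor <;> linarith⟩
  · exact ⟨b, ⟨hb, hb0, hb1⟩, le_rfl⟩

lemma exists_abs_sub_le_of_approx_halving (h0 : (0 : ℝ) ∈ B) (h1 : (1 : ℝ) ∈ B)
    (h : ∀ b' ∈ B ∩ Set.Icc 0 1,
      (∃ b ∈ B, |b - b' / 2| < ρ) ∧ ∃ b ∈ B, |b - (b' + 1) / 2| < ρ)
    (j : ℕ) (hy : y ∈ Set.Icc 0 1) :
    ∃ b ∈ B ∩ Set.Icc 0 1, |b - y| ≤ (1 / 2) ^ j + 2 * ρ := by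
  induction j generalizing y with
  | zero =>
    obtain ⟨b, -, hb⟩ := (h 0 ⟨h0, by simp⟩).1
    refine ⟨0, ⟨h0, by simp⟩, ?_⟩
    rw [zero_sub, abs_neg, abs_of_nonneg hy.1, pow_zero]
    linarith [hy.2, (abs_nonneg _).trans_lt hb]
  | succ j ih =>
    suffices ∃ b ∈ B, |b - y| ≤ (1 / 2) ^ (j + 1) + 2 * ρ by
      obtain ⟨b, hb, hby⟩ := this
      obtain ⟨b', hb', hle⟩ := exists_mem_inter_Icc_abs_sub_le h0 h1 hb hy
      exact ⟨b', hb', hle.trans hby⟩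
    rw [pow_succ]
    rcases le_total y (1 / 2) with hy2 | hy2
    · obtain ⟨b', hb', hd⟩ := ih (y := 2 * y) ⟨by linarith [hy.1], by linarith⟩
      obtain ⟨⟨b, hb, hbd⟩, -⟩ := h b' hb'
      refine ⟨b, hb, ?_⟩
      rw [abs_le] at hd ⊢
      rw [abs_lt] at hbd
      constructor <;> linarith
    · obtain ⟨b', hb', hd⟩ := ih (y := 2 * y - 1) ⟨by linarith, by linarith [hy.2]⟩
      obtain ⟨-, b, hb, hbd⟩ := h b' hb'
      refine ⟨b, hb, ?_⟩
      rw [abs_le] at hd ⊢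
      rw [abs_lt] at hbd
      constructor <;> linarith

end Density

section Directions

variable {N I : ℕ} {c σ y₁ y₂ : ℝ}

/-- The directions `j / N` in which the vector `(y₁, y₂)` has a projection of size at most `σ`. -/
noncomputable def directions (N : ℕ) (σ y₁ y₂ : ℝ) : Finset ℕ :=
  (range N).filter fun j : ℕ => |y₁ + (j / N : ℝ) * y₂| ≤ σ

lemma card_le_two_mul_add_one_of_abs_sub_le {A : Finset ℕ} {z w : ℝ} (hw : 0 ≤ w)
    (hA : ∀ j ∈ A, |(j : ℝ) - z| ≤ w) : (#A : ℝ) ≤ 2 * w + 1 := by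
  have hsub : A.image ((↑) : ℕ → ℤ) ⊆ Icc ⌈z - w⌉ ⌊z + w⌋ := by
    refine image_subset_iff.2 fun j hj => ?_
    have := abs_le.1 (hA j hj)
    rw [mem_Icc, Int.ceil_le, Int.le_floor]
    push_cast
    constructor <;> linarith
  have hcard : (#A : ℤ) ≤ max (⌊z + w⌋ + 1 - ⌈z - w⌉) 0 := by
    have := card_le_card hsub
    rwa [card_image_of_injective _ Nat.cast_injective, Int.card_Icc, ← Int.ofNat_le,
      Int.ofNat_toNat] at this
  calc (#A : ℝ) ≤ max (⌊z + w⌋ + 1 - ⌈z - w⌉ : ℝ) 0 := mod_cast hcard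
    _ ≤ 2 * w + 1 := max_le (by linarith [Int.floor_le (z + w), Int.le_ceil (z - w)])
        (by positivity)

lemma card_directions_le (hσ : 0 < σ) (hc : 1 ≤ c) (hN : 0 < N) (hy₂ : |y₂| ≤ 2 * c * (σ * N)) :
    (#(directions N σ y₁ y₂) : ℝ) ≤ N * (4 * c * (σ / max |y₂| σ)) := by
  have hN' : (0 : ℝ) < N := mod_cast hN
  rcases le_or_gt |y₂| σ with hle | hlt
  · rw [max_eq_right hle, div_self hσ.ne']
    calc _ ≤ (N : ℝ) := mod_cast (card_filter_le _ _).trans_eq (card_range N)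
      _ ≤ N * (4 * c * 1) := le_mul_of_one_le_right hN'.le (by linarith)
  · have hy : 0 < |y₂| := hσ.trans hlt
    rw [max_eq_left hlt.le]
    have hcard := card_le_two_mul_add_one_of_abs_sub_le (A := directions N σ y₁ y₂)
      (z := -(N * y₁ / y₂)) (w := N * σ / |y₂|) (by positivity)
      fun j hj => by
        have hy₂ : y₂ ≠ 0 := abs_pos.1 hy
        have hsub : (j : ℝ) - -(N * y₁ / y₂) = N * (y₁ + (j / N : ℝ) * y₂) / y₂ := by
          field_simp
          ring
        rw [hsub, abs_div, abs_mul, abs_of_pos hN']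
        have := (mem_filter.1 hj).2
        gcongr
    have hone : 1 ≤ 2 * c * (σ * N / |y₂|) := by
      rwa [← mul_div_assoc, one_le_div hy]
    have : σ * N / |y₂| ≤ c * (σ * N / |y₂|) := le_mul_of_one_le_left (by positivity) hc
    calc _ ≤ _ := hcard
      _ = 2 * (σ * N / |y₂|) + 1 := by ring
      _ ≤ 4 * (c * (σ * N / |y₂|)) := by linarith
      _ = N * (4 * c * (σ / |y₂|)) := by ring

lemma abs_le_two_mul_max_of_abs_add_mul_le {b : ℝ} (hb : b ∈ Set.Icc 0 1)
    (h : |y₁ + b * y₂| ≤ σ) : |y₁| ≤ 2 * max |y₂| σ := by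
  have hmul : |b * y₂| ≤ |y₂| := by
    rw [abs_mul, abs_of_nonneg hb.1]
    exact mul_le_of_le_one_left (abs_nonneg _) hb.2
  have hsub : |y₁| ≤ |y₁ + b * y₂| + |b * y₂| := by
    simpa using abs_sub (y₁ + b * y₂) (b * y₂)
  linarith [le_max_left |y₂| σ, le_max_right |y₂| σ]

lemma card_directions_le_sum (hσ : 0 < σ) (hc : 1 ≤ c) (hN : 0 < N) (hI : 2 * c * N < 2 ^ I)
    (hy₂ : |y₂| ≤ 2 * c * (σ * N)) :
    (#(directions N σ y₁ y₂) : ℝ) ≤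
      N * ∑ i ∈ range I, 4 * c * ((1 / 2) ^ i *
        {t : ℝ × ℝ | |t.1| ≤ 2 ^ (i + 2) * σ ∧ |t.2| ≤ 2 ^ (i + 2) * σ}.indicator 1 (y₁, y₂)) := by
  classical
  have hN' : (1 : ℝ) ≤ N := mod_cast hN
  have hnonneg : ∀ i ∈ range I, 0 ≤ 4 * c * ((1 / 2 : ℝ) ^ i *
      {t : ℝ × ℝ | |t.1| ≤ 2 ^ (i + 2) * σ ∧ |t.2| ≤ 2 ^ (i + 2) * σ}.indicator 1 (y₁, y₂)) :=
    fun i _ => mul_nonneg (by positivity) (mul_nonneg (by positivity)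
      (Set.indicator_nonneg (fun _ _ => zero_le_one) _))
  rcases eq_empty_or_nonempty (directions N σ y₁ y₂) with hemp | ⟨j, hj⟩
  · rw [hemp]
    simpa using mul_nonneg (Nat.cast_nonneg N) (sum_nonneg hnonneg)
  obtain ⟨hjN, hj⟩ := mem_filter.1 hj
  have hjN' : (j : ℝ) ≤ N := mod_cast (mem_range.1 hjN).le
  have hy₁ := abs_le_two_mul_max_of_abs_add_mul_le
    ⟨by positivity, (div_le_one (by linarith)).2 hjN'⟩ hj
  have hmax : max |y₂| σ ≤ 2 * c * N * σ := by
    refine max_le (by linarith) (le_mul_of_one_le_left hσ.le ?_)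
    nlinarith
  obtain ⟨i, hi, hi'⟩ := exists_nat_pow_near
    ((one_le_div hσ).2 (le_max_right |y₂| σ)) one_lt_two
  rw [le_div_iff₀ hσ] at hi
  rw [div_lt_iff₀ hσ] at hi'
  have hiI : i < I := (pow_lt_pow_iff_right₀ one_lt_two).1 <|
    (le_of_mul_le_mul_right (hi.trans hmax) hσ).trans_lt hI
  have hmem : (y₁, y₂) ∈ {t : ℝ × ℝ | |t.1| ≤ 2 ^ (i + 2) * σ ∧ |t.2| ≤ 2 ^ (i + 2) * σ} := by
    rw [Set.mem_ofPred_eq]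
    have : (2 : ℝ) ^ (i + 2) * σ = 2 * (2 ^ (i + 1) * σ) := by ring
    constructor <;> linarith [le_max_left |y₂| σ, abs_nonneg y₂]
  refine (card_directions_le hσ hc hN hy₂).trans (mul_le_mul_of_nonneg_left ?_ (by positivity))
  refine le_trans ?_ (single_le_sum hnonneg (mem_range.2 hiI))
  rw [Set.indicator_of_mem hmem, Pi.one_apply, mul_one]
  gcongr
  rw [div_le_iff₀ (hσ.trans_le (le_max_right _ _)), ← mul_inv_le_iff₀' (by positivity), one_div,
    inv_pow, inv_inv]
  linarith

end Directions

section Projections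

variable {Ω : Type*} [Fintype Ω] {p : Ω → ℝ} {X : Ω → ℤ} {n N I : ℕ} {s L c σ : ℝ}

lemma IsFrostman.prob_square_le (hF : IsFrostman p X n L s) (hp : p ∈ stdSimplex ℝ Ω)
    (hL : 0 ≤ L) (hs : 2 * s ≤ 1) (hN : 0 < N) (hσ : 1 ≤ σ) (hσN : σ * N = 2 ^ n)
    (x₁ x₂ : ℝ) (i : ℕ) :
    (1 / 2) ^ i * prob (p ×ˢ p) {t | |(X t.1 : ℝ) - x₁| ≤ 2 ^ (i + 2) * σ ∧
        |(X t.2 : ℝ) - x₂| ≤ 2 ^ (i + 2) * σ} ≤ 4 * L ^ 2 * (N : ℝ) ^ (-(2 * s)) := by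
  have hN' : (0 : ℝ) < N := mod_cast hN
  have hpow : (1 : ℝ) ≤ 2 ^ (i + 2) := one_le_pow₀ one_le_two
  have hball : ∀ x, prob p {ω | |(X ω : ℝ) - x| ≤ 2 ^ (i + 2) * σ} ≤
      L * (2 ^ (i + 2) / N) ^ s := fun x => by
    have := hF x (2 ^ (i + 2) * σ) (one_le_mul_of_one_le_of_one_le hpow hσ)
    rwa [← hσN, mul_comm σ, mul_div_mul_right _ _ (by positivity)] at this
  have hrpow : ((2 : ℝ) ^ (i + 2) / N) ^ s * (2 ^ (i + 2) / N) ^ s ≤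
      2 ^ (i + 2) * (N : ℝ) ^ (-(2 * s)) := by
    rw [← Real.rpow_add (by positivity), ← two_mul, Real.div_rpow (by positivity) hN'.le,
      Real.rpow_neg hN'.le, div_eq_mul_inv]
    gcongr
    exact Real.rpow_le_self_of_one_le hpow hs
  calc _ = (1 / 2) ^ i * (prob p {ω | |(X ω : ℝ) - x₁| ≤ 2 ^ (i + 2) * σ} *
        prob p {ω | |(X ω : ℝ) - x₂| ≤ 2 ^ (i + 2) * σ}) := by
        rw [← prob_prodWeight_prod]
        rfl
    _ ≤ (1 / 2) ^ i * ((L * (2 ^ (i + 2) / N) ^ s) * (L * (2 ^ (i + 2) / N) ^ s)) := by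
        have := prob_nonneg hp {ω | |(X ω : ℝ) - x₂| ≤ 2 ^ (i + 2) * σ}
        gcongr <;> exact hball _
    _ = (1 / 2) ^ i * L ^ 2 * ((2 ^ (i + 2) / N) ^ s * (2 ^ (i + 2) / N) ^ s) := by ring
    _ ≤ (1 / 2) ^ i * L ^ 2 * (2 ^ (i + 2) * (N : ℝ) ^ (-(2 * s))) := by gcongr
    _ = (1 / 2 * 2) ^ i * 4 * L ^ 2 * (N : ℝ) ^ (-(2 * s)) := by rw [mul_pow]; ring
    _ = 4 * L ^ 2 * (N : ℝ) ^ (-(2 * s)) := by norm_num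

lemma law_floor_projection_le_prob (hp : p ∈ stdSimplex ℝ Ω) (X : Ω → ℤ) (hσ : 0 < σ) (y : ℝ)
    (t : Ω × Ω) :
    law (p ×ˢ p) (fun t => ⌊((X t.1 : ℝ) + y * X t.2) / σ⌋) ⌊((X t.1 : ℝ) + y * X t.2) / σ⌋ ≤
      prob (p ×ˢ p) {t' | |((X t'.1 : ℝ) - X t.1) + y * ((X t'.2 : ℝ) - X t.2)| ≤ σ} :=
  law_le_prob (prodWeight_mem_stdSimplex hp hp) fun t' _ h => by
    have hfloor := Int.abs_sub_lt_one_of_floor_eq_floor h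
    rw [← sub_div, abs_div, abs_of_pos hσ, div_lt_one hσ] at hfloor
    refine (congrArg abs ?_).trans_le hfloor.le
    ring

lemma IsFrostman.sum_directions_law_le (hF : IsFrostman p X n L s) (hp : p ∈ stdSimplex ℝ Ω)
    (hX : ∀ ω, p ω ≠ 0 → |(X ω : ℝ)| ≤ c * 2 ^ n) (hc : 1 ≤ c) (hL : 0 ≤ L) (hs : 2 * s ≤ 1)
    (hN : 0 < N) (hI : 2 * c * N < 2 ^ I) (hσ : 1 ≤ σ) (hσN : σ * N = 2 ^ n) {t : Ω × Ω}
    (ht : (p ×ˢ p) t ≠ 0) :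
    ∑ j ∈ range N, law (p ×ˢ p) (fun t => ⌊((X t.1 : ℝ) + (j / N : ℝ) * X t.2) / σ⌋)
        ⌊((X t.1 : ℝ) + (j / N : ℝ) * X t.2) / σ⌋ ≤
      N * (16 * c * I * L ^ 2 * (N : ℝ) ^ (-(2 * s))) := by
  classical
  have hpp := prodWeight_mem_stdSimplex hp hp
  have hσ0 : 0 < σ := by linarith
  let Y : Ω × Ω → ℝ × ℝ := fun t' => ((X t'.1 : ℝ) - X t.1, (X t'.2 : ℝ) - X t.2)
  have hcount : ∀ t', (p ×ˢ p) t' ≠ 0 →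
      (#(directions N σ (Y t').1 (Y t').2) : ℝ) ≤ N * ∑ i ∈ range I,
        4 * c * ((1 / 2) ^ i * {t : ℝ × ℝ | |t.1| ≤ 2 ^ (i + 2) * σ ∧
          |t.2| ≤ 2 ^ (i + 2) * σ}.indicator 1 (Y t')) := fun t' ht' => by
    refine card_directions_le_sum hσ0 hc hN hI ?_
    rw [hσN]
    refine (abs_sub _ _).trans ?_
    linarith [hX t.2 (right_ne_zero_of_mul ht), hX t'.2 (right_ne_zero_of_mul ht')]
  calc _ ≤ ∑ j ∈ range N, prob (p ×ˢ p) {t' | |(Y t').1 + (j / N : ℝ) * (Y t').2| ≤ σ} :=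
        sum_le_sum fun j _ => law_floor_projection_le_prob hp X hσ0 (j / N) t
    _ = ∑ t', (p ×ˢ p) t' *
        (#(directions N σ (Y t').1 (Y t').2) : ℝ) := by
        simp_rw [prob, Set.indicator_apply, Set.mem_ofPred_eq]
        rw [sum_comm]
        simp_rw [directions, ← sum_filter, sum_const, nsmul_eq_mul, mul_comm]
    _ ≤ _ := sum_mul_le_sum_mul hpp hcount
    _ = N * ∑ i ∈ range I, 4 * c * ((1 / 2) ^ i * prob (p ×ˢ p)
        {t' | |(X t'.1 : ℝ) - X t.1| ≤ 2 ^ (i + 2) * σ ∧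
          |(X t'.2 : ℝ) - X t.2| ≤ 2 ^ (i + 2) * σ}) := by
        simp_rw [prob, mul_sum]
        rw [sum_comm]
        refine sum_congr rfl fun i _ => sum_congr rfl fun t' _ => ?_
        simp only [Set.indicator_apply, Set.mem_ofPred_eq, Y]
        split_ifs <;> simp
        ring
    _ ≤ N * ∑ i ∈ range I, 4 * c * (4 * L ^ 2 * (N : ℝ) ^ (-(2 * s))) := by
        refine mul_le_mul_of_nonneg_left (sum_le_sum fun i _ => ?_) (by positivity)
        exact mul_le_mul_of_nonneg_left (hF.prob_square_le hp hL hs hN hσ hσN _ _ _) (by positivity)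
    _ = N * (16 * c * I * L ^ 2 * (N : ℝ) ^ (-(2 * s))) := by
        rw [sum_const, card_range, nsmul_eq_mul]
        ring

/-- A discretized Marstrand projection theorem: the directions are the `j / N`, and `σ = 2 ^ n / N`
is the scale at which the projections are observed. -/
lemma IsFrostman.exists_le_entropy_projection (hF : IsFrostman p X n L s)
    (hp : p ∈ stdSimplex ℝ Ω) (hX : ∀ ω, p ω ≠ 0 → |(X ω : ℝ)| ≤ c * 2 ^ n) (hc : 1 ≤ c)
    (hL : 0 < L) (hs : 2 * s ≤ 1) (hN : 0 < N) (hI : 2 * c * N < 2 ^ I) (hσ : 1 ≤ σ)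
    (hσN : σ * N = 2 ^ n) :
    ∃ j < N, 2 * s * logb 2 N - 2 * logb 2 L - logb 2 (16 * c * I) ≤
      entropy (p ×ˢ p) (fun t => ⌊((X t.1 : ℝ) + (j / N : ℝ) * X t.2) / σ⌋) := by
  have hpp := prodWeight_mem_stdSimplex hp hp
  have hN' : (1 : ℝ) ≤ N := mod_cast hN
  have hI0 : 0 < I := by
    by_contra! hI0
    rw [Nat.le_zero.1 hI0, pow_zero] at hI
    nlinarith
  set B : ℝ := 16 * c * I * L ^ 2 * (N : ℝ) ^ (-(2 * s)) with hB
  have hcollision : ∑ j ∈ range N, ∑ t, (p ×ˢ p) t *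
      law (p ×ˢ p) (fun t => ⌊((X t.1 : ℝ) + (j / N : ℝ) * X t.2) / σ⌋)
        ⌊((X t.1 : ℝ) + (j / N : ℝ) * X t.2) / σ⌋ ≤ ∑ _j ∈ range N, B := by
    rw [sum_comm, sum_const, card_range, nsmul_eq_mul]
    simp_rw [← mul_sum]
    exact sum_mul_le hpp fun t ht => hF.sum_directions_law_le hp hX hc hL.le hs hN hI hσ hσN ht
  obtain ⟨j, hj, hjB⟩ := exists_le_of_sum_le (nonempty_range_iff.2 hN.ne') hcollision
  refine ⟨j, mem_range.1 hj, (neg_logb_le_entropy_of_sum_law_le hpp (by positivity) hjB).trans_eq'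
    ?_⟩
  rw [hB, Real.logb_mul (by positivity) (by positivity),
    Real.logb_mul (by positivity) (by positivity),
    Real.logb_rpow_eq_mul_logb_of_pos (by positivity), Real.logb_pow]
  push_cast
  ring

end Projections

section Slopes

variable {Ω S : Type*} {p : Ω → ℝ} {X : Ω → ℤ} {n k : ℕ} {s L : ℝ}

/-- The slopes of the lines through two points of `X × X` whose first coordinates are at distance at
least `M`, where `X` takes values of positive probability. -/
def slopes (p : Ω → ℝ) (X : Ω → ℤ) (M : ℝ) : Set ℝ :=
  {b | ∃ w₁ w₂ w₃ w₄, p w₁ ≠ 0 ∧ p w₂ ≠ 0 ∧ p w₃ ≠ 0 ∧ p w₄ ≠ 0 ∧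
    M ≤ |(X w₃ : ℝ) - X w₄| ∧ b * ((X w₃ : ℝ) - X w₄) = (X w₁ : ℝ) - X w₂}

lemma exists_mem_slopes_abs_sub_lt {t t' : Ω × Ω} (ht : (p ×ˢ p) t ≠ 0) (ht' : (p ×ˢ p) t' ≠ 0)
    {M ε b : ℝ} (hM : 0 ≤ M) (hε : 0 ≤ ε) (hlt : M < |(X t'.2 : ℝ) - X t.2|)
    (h : |((X t.1 : ℝ) - X t'.1) + b * (X t.2 - X t'.2)| < ε * M) :
    ∃ b' ∈ slopes p X M, |b' - b| < ε := by
  have hpos : 0 < |(X t'.2 : ℝ) - X t.2| := hM.trans_lt hlt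
  have hne : (X t'.2 : ℝ) - X t.2 ≠ 0 := abs_pos.1 hpos
  refine ⟨((X t.1 : ℝ) - X t'.1) / ((X t'.2 : ℝ) - X t.2), ⟨t.1, t'.1, t'.2, t.2,
    left_ne_zero_of_mul ht, left_ne_zero_of_mul ht', right_ne_zero_of_mul ht',
    right_ne_zero_of_mul ht, hlt.le, div_mul_cancel₀ _ hne⟩, ?_⟩
  have hsub : ((X t.1 : ℝ) - X t'.1) / ((X t'.2 : ℝ) - X t.2) - b =
      (((X t.1 : ℝ) - X t'.1) + b * (X t.2 - X t'.2)) / ((X t'.2 : ℝ) - X t.2) := by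
    field_simp
    ring
  rw [hsub, abs_div, div_lt_iff₀ hpos]
  exact h.trans_le (mul_le_mul_of_nonneg_left hlt.le hε)

variable [Fintype Ω]

lemma logb_two_pow_sub (hkn : k ≤ n) : logb 2 ((2 : ℝ) ^ (n - k)) = n - k := by
  rw [Real.logb_pow, Real.logb_self_eq_one one_lt_two, mul_one, Nat.cast_sub hkn]

lemma IsFrostman.exists_lt_abs_sub (hF : IsFrostman p X n L s) (hp : p ∈ stdSimplex ℝ Ω)
    (hL : 0 < L) (hkn : k ≤ n) (hk : logb 2 L < s * k) (x : ℝ) :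
    ∃ w, p w ≠ 0 ∧ 2 ^ (n - k) < |(X w : ℝ) - x| := by
  have hlt : L * (2 ^ (n - k) / 2 ^ n) ^ s < 1 := by
    have hlog := logb_mul_div_two_pow_rpow n s hL (R := 2 ^ (n - k)) (by positivity)
    rw [logb_two_pow_sub hkn] at hlog
    refine (Real.logb_neg_iff one_lt_two (by positivity)).1 ?_
    linarith
  have hball := hF x (2 ^ (n - k)) (one_le_pow₀ one_le_two)
  obtain ⟨w, hw, hpw⟩ := exists_mem_of_prob_pos (p := p)
    (E := {ω | |(X ω : ℝ) - x| ≤ 2 ^ (n - k)}ᶜ) (by rw [prob_compl hp]; linarith)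
  exact ⟨w, hpw, not_le.1 hw⟩

lemma IsFrostman.le_entropy_prodWeight (hF : IsFrostman p X n L s) (hp : p ∈ stdSimplex ℝ Ω)
    (hL : 0 < L) {U : Ω × Ω → S} {b R₁ R₂ : ℝ} (hR₁ : 1 ≤ R₁) (hR₂ : 1 ≤ R₂)
    (h : ∀ t t', (p ×ˢ p) t ≠ 0 → (p ×ˢ p) t' ≠ 0 → U t = U t' →
      |(X t'.2 : ℝ) - X t.2| ≤ R₂ ∧ |((X t.1 : ℝ) - X t'.1) + b * (X t.2 - X t'.2)| ≤ R₁) :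
    s * (n - logb 2 R₁) + s * (n - logb 2 R₂) - 2 * logb 2 L ≤ entropy (p ×ˢ p) U := by
  have hpp := prodWeight_mem_stdSimplex hp hp
  have hsupp : ∀ t : Ω × Ω, (p ×ˢ p) t ≠ 0 → (p ×ˢ p) t.swap ≠ 0 := fun t ht =>
    mul_ne_zero (right_ne_zero_of_mul ht) (left_ne_zero_of_mul ht)
  have hball₁ : 0 < L * (R₁ / 2 ^ n) ^ s := by positivity
  have hball₂ : 0 < L * (R₂ / 2 ^ n) ^ s := by positivity
  have hlaw : ∀ t, (p ×ˢ p) t ≠ 0 → law (p ×ˢ p) (fun t => U t.swap) (U t.swap) ≤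
      L * (R₂ / 2 ^ n) ^ s * (L * (R₁ / 2 ^ n) ^ s) := fun t ht => by
    have hsub := law_le_prob hpp (f := fun t => U t.swap) (v := U t.swap)
      (E := {t' | t'.1 ∈ {ω | |(X ω : ℝ) - X t.1| ≤ R₂} ∧
        |(X t'.2 : ℝ) - (X t.2 + b * (X t.1 - X t'.1))| ≤ R₁}) fun t' ht' he => by
      obtain ⟨h₂, h₁⟩ := h t.swap t'.swap (hsupp t ht) (hsupp t' ht') he.symm
      refine ⟨h₂, ?_⟩
      rw [abs_sub_comm]
      refine (congrArg abs ?_).trans_le h₁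
      simp only [Prod.fst_swap, Prod.snd_swap]
      ring
    have hprod := hF.prob_prodWeight_le hp (E := {ω | |(X ω : ℝ) - X t.1| ≤ R₂})
      (y := fun ω => X t.2 + b * (X t.1 - X ω)) hR₁
    exact hsub.trans (hprod.trans (mul_le_mul_of_nonneg_right (hF (X t.1) R₂ hR₂) hball₁.le))
  have hentropy := neg_logb_le_entropy_of_law_le hpp hlaw
  rw [Real.logb_mul hball₂.ne' hball₁.ne', logb_mul_div_two_pow_rpow n s hL (by linarith),
    logb_mul_div_two_pow_rpow n s hL (by linarith), isPushforward_swap.entropy_comp U] at hentropy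
  linarith

lemma abs_sub_add_mul_le_of_slopeForm_add_eq {κ b : ℝ} {v₀ D x y x' y' : ℤ} {v : Fin 6 → ℤ}
    (hκ : κ ≠ 0) (hD : D = v 2 - v 3) (hD0 : D ≠ 0)
    (hb : b * (2 * D) = ((v 0 : ℝ) - v 1) + (v 4 - v 5))
    (h : slopeForm κ n (fun i => v i + v₀) x y = slopeForm κ n (fun i => v i + v₀) x' y') :
    |((x : ℝ) - x') + b * (y - y')| ≤ 4 / |κ| * (2 ^ n / |(D : ℝ)|) := by
  refine abs_sub_add_mul_le_of_slopeForm_eq hκ (by rw [hD]; ring) hD0 ?_ h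
  rw [hb]
  push_cast
  ring

lemma abs_floor_sub_floor_le (x y : ℝ) : |(⌊x⌋ : ℝ) - ⌊y⌋| ≤ |x - y| + 1 := by
  have := abs_le.1 (le_refl |x - y|)
  rw [abs_le]
  constructor <;>
    linarith [Int.floor_le x, Int.lt_floor_add_one x, Int.floor_le y, Int.lt_floor_add_one y]

lemma abs_floor_div_sub_floor_div_le {σ b y x₁ x₂ x₁' x₂' K₁ K₂ : ℝ} (hσ : 0 < σ)
    (h₁ : |(x₁ - x₁') + b * (x₂ - x₂')| ≤ K₁ * σ) (h₂ : |(y - b) * (x₂ - x₂')| ≤ K₂ * σ) :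
    |(⌊(x₁ + y * x₂) / σ⌋ : ℝ) - ⌊(x₁' + y * x₂') / σ⌋| ≤ K₁ + K₂ + 1 := by
  refine (abs_floor_sub_floor_le _ _).trans (add_le_add_left ?_ 1)
  rw [← sub_div, abs_div, abs_of_pos hσ, div_le_iff₀ hσ, add_mul]
  refine le_trans (le_of_eq (congrArg abs ?_)) ((abs_add_le _ _).trans (add_le_add h₁ h₂))
  ring

end Slopes

section Closure

variable {Ω Ω' : Type*} [Fintype Ω] [Fintype Ω'] {p : Ω → ℝ} {q : Ω' → ℝ} {X : Ω → ℤ}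
  {W : Ω' → ℤ} {v₀ : ℤ} {κ c b y : ℝ} {n k J : ℕ} {s θ δ L r : ℝ}

lemma IsNearModule.abs_sub_le (h : IsNearModule p q X W v₀ κ c n s θ δ L r) {ω ω' : Ω}
    (hω : p ω ≠ 0) (hω' : p ω' ≠ 0) : |(X ω : ℝ) - X ω'| ≤ 2 * c * 2 ^ n := by
  refine (abs_sub _ _).trans ?_
  linarith [h.abs_le ω hω, h.abs_le ω' hω']

lemma IsNearModule.le_entropy_slopeForm (h : IsNearModule p q X W v₀ κ c n s θ δ L r)
    (hkn : 3 * k ≤ n) (hk : 4 / |κ| < 2 ^ k) {D : ℤ} {v : Fin 6 → ℤ} (hD : D = v 2 - v 3)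
    (hDk : 2 ^ (n - k) ≤ |(D : ℝ)|) (hDc : |(D : ℝ)| ≤ 2 * c * 2 ^ n)
    (hb : b * (2 * D) = ((v 0 : ℝ) - v 1) + (v 4 - v 5))
    (hgap : ∀ b' ∈ slopes p X (2 ^ (n - k)), 1 / 2 ^ (n - 3 * k) ≤ |b' - b|) :
    s * (n - logb 2 ((4 / |κ| + 2 * c) * (2 ^ n / |(D : ℝ)|))) + s * k - 2 * logb 2 L ≤
      entropy (p ×ˢ p) fun t => slopeForm κ n (fun i => v i + v₀) (X t.1) (X t.2) := by
  have hκ : 0 < 4 / |κ| := div_pos four_pos (abs_pos.2 h.κ_ne_zero)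
  have hpow : (2 : ℝ) ^ n = 2 ^ k * 2 ^ (n - k) := by rw [← pow_add, Nat.add_sub_cancel' (by omega)]
  have hpow' : (2 : ℝ) ^ k * 2 ^ k = 1 / 2 ^ (n - 3 * k) * 2 ^ (n - k) := by
    rw [one_div_mul_eq_div, eq_div_iff (by positivity), ← pow_add, ← pow_add]
    congr 1
    omega
  have hDpos : 0 < |(D : ℝ)| := lt_of_lt_of_le (by positivity) hDk
  have hD0 : D ≠ 0 := Int.cast_ne_zero.1 (abs_pos.1 hDpos)
  have hdiv : 2 ^ n / |(D : ℝ)| ≤ 2 ^ k := by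
    rw [div_le_iff₀ hDpos, hpow]
    gcongr
  have hR : 1 ≤ (4 / |κ| + 2 * c) * (2 ^ n / |(D : ℝ)|) := by
    rw [← mul_div_assoc, one_le_div hDpos, add_mul]
    exact le_add_of_nonneg_of_le (by positivity) hDc
  have hlower := h.isFrostman.le_entropy_prodWeight h.left_mem (by linarith [h.one_le_L])
    (U := fun t => slopeForm κ n (fun i => v i + v₀) (X t.1) (X t.2)) (b := b) hR
    (one_le_pow₀ one_le_two : (1 : ℝ) ≤ 2 ^ (n - k)) fun t t' ht ht' he => by
    have hclose := abs_sub_add_mul_le_of_slopeForm_add_eq h.κ_ne_zero hD hD0 hb he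
    refine ⟨?_, hclose.trans (by gcongr; linarith [h.one_le_c])⟩
    by_contra! hfar
    obtain ⟨b', hb', hlt⟩ := exists_mem_slopes_abs_sub_lt ht ht' (ε := 1 / 2 ^ (n - 3 * k))
      (by positivity) (by positivity) hfar <|
      calc _ ≤ _ := hclose
        _ ≤ 4 / |κ| * 2 ^ k := by gcongr
        _ < 2 ^ k * 2 ^ k := by gcongr
        _ = _ := hpow'
    exact (hgap b' hb').not_gt hlt
  rwa [logb_two_pow_sub (by omega), sub_sub_cancel] at hlower

/-- If no slope is near `b`, then `slopeForm` determines its second argument coarsely and hence, up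
to bounded multiplicity, both arguments; this forces more entropy than `entropy_slopeForm_le`
allows. -/
lemma IsNearModule.exists_mem_slopes_near (h : IsNearModule p q X W v₀ κ c n s θ δ L r)
    (hkn : 3 * k ≤ n) (hk : 4 / |κ| < 2 ^ k)
    (hsmall : 9 * θ + 8 * δ + 3 * logb 2 L - s * logb 2 r + slopeLoss κ c +
      logb 2 (4 / |κ| + 2 * c) < s * k)
    {ω : Fin 6 → Ω} (hω : ∀ i, p (ω i) ≠ 0)
    (hM : 2 ^ (n - k) ≤ |(X (ω 2) : ℝ) - X (ω 3)|) (hb0 : 0 ≤ b) (hb1 : b ≤ 1)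
    (hb : b * (2 * (X (ω 2) - X (ω 3))) = ((X (ω 0) : ℝ) - X (ω 1)) + (X (ω 4) - X (ω 5))) :
    ∃ b' ∈ slopes p X (2 ^ (n - k)), |b' - b| < 1 / 2 ^ (n - 3 * k) := by
  by_contra! hgap
  obtain ⟨D, hD⟩ : ∃ D, D = X (ω 2) - X (ω 3) := ⟨_, rfl⟩
  have hDcast : (X (ω 2) : ℝ) - X (ω 3) = D := by rw [hD, Int.cast_sub]
  rw [hDcast] at hM hb
  have hκ : 0 < 4 / |κ| := div_pos four_pos (abs_pos.2 h.κ_ne_zero)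
  have hK : 1 ≤ 4 / |κ| + 2 * c := by linarith [h.one_le_c]
  have hDpos : 0 < |(D : ℝ)| := lt_of_lt_of_le (by positivity) hM
  have hlower := h.le_entropy_slopeForm hkn hk (v := fun i => X (ω i)) hD hM
    (hDcast ▸ h.abs_sub_le (hω 2) (hω 3)) hb hgap
  have hupper := h.entropy_slopeForm_le hω hD (Int.cast_ne_zero.1 (abs_pos.1 hDpos)) hb0 hb1 hb
  rw [Real.logb_mul (by positivity) (by positivity), Real.logb_div (by positivity) hDpos.ne',
    Real.logb_pow, Real.logb_self_eq_one one_lt_two] at hlower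
  have : s * logb 2 (4 / |κ| + 2 * c) ≤ logb 2 (4 / |κ| + 2 * c) :=
    mul_le_of_le_one_left (Real.logb_nonneg one_lt_two hK) h.s_lt_one.le
  linarith

lemma IsNearModule.exists_mem_slopes_abs_sub_le (h : IsNearModule p q X W v₀ κ c n s θ δ L r)
    (hkn : 3 * k ≤ n) (hk : 4 / |κ| < 2 ^ k) (hLk : logb 2 L < s * k)
    (hsmall : 9 * θ + 8 * δ + 3 * logb 2 L - s * logb 2 r + slopeLoss κ c +
      logb 2 (4 / |κ| + 2 * c) < s * k) (hy : y ∈ Set.Icc 0 1) :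
    ∃ b ∈ slopes p X (2 ^ (n - k)) ∩ Set.Icc 0 1, |b - y| ≤ 3 / 2 ^ (n - 3 * k) := by
  have hL : 0 < L := by linarith [h.one_le_L]
  obtain ⟨w₀, hw₀, -⟩ := h.isFrostman.exists_lt_abs_sub h.left_mem hL (by omega) hLk 0
  obtain ⟨w₁, hw₁, hfar⟩ := h.isFrostman.exists_lt_abs_sub h.left_mem hL (by omega) hLk (X w₀)
  have h0 : (0 : ℝ) ∈ slopes p X (2 ^ (n - k)) :=
    ⟨w₀, w₀, w₁, w₀, hw₀, hw₀, hw₁, hw₀, hfar.le, by simp⟩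
  have h1 : (1 : ℝ) ∈ slopes p X (2 ^ (n - k)) :=
    ⟨w₁, w₀, w₁, w₀, hw₁, hw₀, hw₁, hw₀, hfar.le, by simp⟩
  obtain ⟨b, hb, hby⟩ := exists_abs_sub_le_of_approx_halving (ρ := 1 / 2 ^ (n - 3 * k)) h0 h1
    (fun b' ⟨⟨z₁, z₂, z₃, z₄, hz₁, hz₂, hz₃, hz₄, hM, hb'⟩, hb0, hb1⟩ => by
      constructor
      · refine h.exists_mem_slopes_near hkn hk hsmall (ω := ![z₁, z₂, z₃, z₄, z₁, z₁])
          (by intro i; fin_cases i <;> assumption) hM (by linarith) (by linarith) ?_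
        simp only [Matrix.cons_val]
        linarith
      · refine h.exists_mem_slopes_near hkn hk hsmall (ω := ![z₁, z₂, z₃, z₄, z₃, z₄])
          (by intro i; fin_cases i <;> assumption) hM (by linarith) (by linarith) ?_
        simp only [Matrix.cons_val]
        linarith) (n - 3 * k) hy
  refine ⟨b, hb, hby.trans_eq ?_⟩
  rw [one_div_pow]
  ring

lemma IsNearModule.abs_floor_projection_sub_le (h : IsNearModule p q X W v₀ κ c n s θ δ L r)
    (hkn : 3 * k ≤ n) (hby : |b - y| ≤ 3 / 2 ^ (n - 3 * k)) {t t' : Ω × Ω} (ht : (p ×ˢ p) t ≠ 0)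
    (ht' : (p ×ˢ p) t' ≠ 0)
    (hclose : |((X t.1 : ℝ) - X t'.1) + b * (X t.2 - X t'.2)| ≤ 4 / |κ| * 2 ^ (3 * k)) :
    |((⌊((X t.1 : ℝ) + y * X t.2) / 2 ^ (3 * k)⌋ : ℤ) : ℝ) -
      (⌊((X t'.1 : ℝ) + y * X t'.2) / 2 ^ (3 * k)⌋ : ℤ)| ≤ 4 / |κ| + 6 * c + 1 := by
  have hσ : (2 : ℝ) ^ n = 2 ^ (3 * k) * 2 ^ (n - 3 * k) := by
    rw [← pow_add, Nat.add_sub_cancel' hkn]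
  have hprod : |(y - b) * ((X t.2 : ℝ) - X t'.2)| ≤ 6 * c * 2 ^ (3 * k) := by
    rw [abs_mul, abs_sub_comm]
    calc _ ≤ 3 / 2 ^ (n - 3 * k) * (2 * c * 2 ^ n) := mul_le_mul hby
          (h.abs_sub_le (right_ne_zero_of_mul ht) (right_ne_zero_of_mul ht')) (abs_nonneg _)
          (by positivity)
      _ = 6 * c * 2 ^ (3 * k) := by rw [hσ]; field_simp; ring
  exact abs_floor_div_sub_floor_div_le (by positivity) hclose hprod

lemma IsNearModule.entropy_projection_le (h : IsNearModule p q X W v₀ κ c n s θ δ L r)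
    (hkn : 3 * k ≤ n) (hb : b ∈ slopes p X (2 ^ (n - k)) ∩ Set.Icc 0 1)
    (hby : |b - y| ≤ 3 / 2 ^ (n - 3 * k)) :
    entropy (p ×ˢ p) (fun t => ⌊((X t.1 : ℝ) + y * X t.2) / 2 ^ (3 * k)⌋) ≤
      s * n + 9 * θ + 8 * δ + logb 2 L - s * logb 2 r + slopeLoss κ c + logb 2 (2 * c) +
        logb 2 (2 * (4 / |κ| + 6 * c + 1) + 1) := by
  obtain ⟨⟨z₁, z₂, z₃, z₄, hz₁, hz₂, hz₃, hz₄, hM, hbz⟩, hb0, hb1⟩ := hb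
  have hκ := abs_pos.2 h.κ_ne_zero
  have hc := h.one_le_c
  obtain ⟨D, hD⟩ : ∃ D, D = X z₃ - X z₄ := ⟨_, rfl⟩
  have hDcast : (X z₃ : ℝ) - X z₄ = D := by rw [hD, Int.cast_sub]
  have hDle : |(D : ℝ)| ≤ 2 * c * 2 ^ n := hDcast ▸ h.abs_sub_le hz₃ hz₄
  rw [hDcast] at hM hbz
  have hDpos : 0 < |(D : ℝ)| := lt_of_lt_of_le (by positivity) hM
  have hD0 : D ≠ 0 := Int.cast_ne_zero.1 (abs_pos.1 hDpos)
  have hb : b * (2 * D) = ((X z₁ : ℝ) - X z₂) + (X z₁ - X z₂) := by linarith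
  have hω : ∀ i, p (![z₁, z₂, z₃, z₄, z₁, z₂] i) ≠ 0 := by intro i; fin_cases i <;> assumption
  have hDσ : 2 ^ n / |(D : ℝ)| ≤ 2 ^ (3 * k) := by
    rw [div_le_iff₀ hDpos]
    calc (2 : ℝ) ^ n = 2 ^ k * 2 ^ (n - k) := by rw [← pow_add, Nat.add_sub_cancel' (by omega)]
      _ ≤ 2 ^ (3 * k) * |(D : ℝ)| := by
        gcongr
        · exact one_le_two
        · omega
  have hproj := entropy_le_add_logb (prodWeight_mem_stdSimplex h.left_mem h.left_mem)
    (f := fun t => ⌊((X t.1 : ℝ) + y * X t.2) / 2 ^ (3 * k)⌋)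
    (g := fun t => slopeForm κ n (fun i => X (![z₁, z₂, z₃, z₄, z₁, z₂] i) + v₀) (X t.1) (X t.2))
    (d := 4 / |κ| + 6 * c + 1) (by positivity) fun t t' ht ht' he =>
    h.abs_floor_projection_sub_le hkn hby ht ht' <|
      (abs_sub_add_mul_le_of_slopeForm_add_eq (v := fun i => X (![z₁, z₂, z₃, z₄, z₁, z₂] i))
        h.κ_ne_zero hD hD0 hb he).trans (by gcongr)
  have hupper := h.entropy_slopeForm_le hω hD hD0 hb0 hb1 hb
  have hDlog : logb 2 |(D : ℝ)| ≤ logb 2 (2 * c) + n := by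
    have := Real.logb_le_logb_of_le one_lt_two hDpos hDle
    rwa [Real.logb_mul (by positivity) (by positivity), Real.logb_pow,
      Real.logb_self_eq_one one_lt_two, mul_one] at this
  have : s * (logb 2 |(D : ℝ)| - n) ≤ logb 2 (2 * c) :=
    calc _ ≤ s * logb 2 (2 * c) := mul_le_mul_of_nonneg_left (by linarith) h.s_pos.le
      _ ≤ logb 2 (2 * c) := mul_le_of_le_one_left
        (Real.logb_nonneg one_lt_two (by linarith)) h.s_lt_one.le
  linarith

lemma IsNearModule.two_mul_min_mul_le (h : IsNearModule p q X W v₀ κ c n s θ δ L r)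
    (hkn : 3 * k ≤ n) (hJ : 2 * c < 2 ^ J) (hk : 4 / |κ| < 2 ^ k) (hLk : logb 2 L < s * k)
    (hsmall : 9 * θ + 8 * δ + 3 * logb 2 L - s * logb 2 r + slopeLoss κ c +
      logb 2 (4 / |κ| + 2 * c) < s * k) :
    2 * min s (1 / 2) * ((n - 3 * k : ℕ) : ℝ) ≤
      s * n + 9 * θ + 8 * δ + 3 * logb 2 L - s * logb 2 r + slopeLoss κ c + logb 2 (2 * c) +
        logb 2 (2 * (4 / |κ| + 6 * c + 1) + 1) +
        logb 2 (16 * c * (((n - 3 * k : ℕ) : ℝ) + J)) := by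
  have hσN : (2 : ℝ) ^ (3 * k) * (2 ^ (n - 3 * k) : ℕ) = 2 ^ n := by
    rw [Nat.cast_pow, Nat.cast_two, ← pow_add, Nat.add_sub_cancel' hkn]
  obtain ⟨j, hj, hlower⟩ := (h.isFrostman.mono h.left_mem h.one_le_L
      (le_min h.s_pos.le one_half_pos.le) (min_le_left s (1 / 2))).exists_le_entropy_projection
    h.left_mem h.abs_le h.one_le_c (by linarith [h.one_le_L])
    (by linarith [min_le_right s (1 / 2)]) (I := n - 3 * k + J) (by positivity)
    (by
      rw [pow_add, mul_comm]
      push_cast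
      gcongr) (one_le_pow₀ one_le_two) hσN
  obtain ⟨b, hb, hby⟩ := h.exists_mem_slopes_abs_sub_le hkn hk hLk hsmall
    (y := (j / (2 ^ (n - 3 * k) : ℕ) : ℝ))
    ⟨by positivity, (div_le_one (by positivity)).2 (mod_cast hj.le)⟩
  have hupper := h.entropy_projection_le hkn hb hby
  rw [Nat.cast_pow, Real.logb_pow, Nat.cast_two, Real.logb_self_eq_one one_lt_two] at hlower
  push_cast at hlower hupper
  linarith

end Closure

section ExcessConditioning

variable {G S Ω Ω' Ω₁ : Type*} [AddCommGroup G] [Fintype Ω] [Fintype Ω'] [Fintype Ω₁]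
  {p : Ω → ℝ} {q : Ω' → ℝ} {p₁ : Ω₁ → ℝ}

lemma entropyExcess_nonneg (hp : p ∈ stdSimplex ℝ Ω) (hq : q ∈ stdSimplex ℝ Ω') (A : Ω → G)
    (W : Ω' → G) : 0 ≤ entropyExcess p A q W :=
  sub_nonneg.2 (entropy_right_le_sub hp hq A W)

lemma entropyExcess_triangle (hp : p ∈ stdSimplex ℝ Ω) (h₁ : p₁ ∈ stdSimplex ℝ Ω₁)
    (hq : q ∈ stdSimplex ℝ Ω') (A : Ω → G) (B : Ω₁ → G) (W : Ω' → G) :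
    entropyExcess p A q W ≤ entropyExcess p A p₁ B + entropyExcess p₁ B q W := by
  have := entropy_ruzsa_triangle hp h₁ hq A B W
  simp only [entropyExcess]
  linarith

lemma sum_mul_entropyExcess_condWeight_le (hp : p ∈ stdSimplex ℝ Ω) (hq : q ∈ stdSimplex ℝ Ω')
    (g : Ω → S) (A : Ω → G) (W : Ω' → G) :
    ∑ t, p t * entropyExcess (condWeight p g (g t)) A q W ≤ entropyExcess p A q W := by
  simp only [entropyExcess, mul_sub, sum_sub_distrib, sum_mul_const hp]
  gcongr
  exact sum_mul_entropy_condWeight_prodWeight_le hp hq g _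

lemma sum_mul_entropyExcess_condWeight_right_le (hp : p ∈ stdSimplex ℝ Ω)
    (hq : q ∈ stdSimplex ℝ Ω') (g : Ω → S) (A : Ω' → G) (W : Ω → G) :
    ∑ t, p t * entropyExcess q A (condWeight p g (g t)) W ≤
      entropy (q ×ˢ p) (fun t => A t.1 - W t.2) -
        (entropy p (fun ω => (W ω, g ω)) - entropy p g) := by
  simp only [entropyExcess, mul_sub, sum_sub_distrib, sum_mul_entropy_condWeight hp]
  gcongr
  rw [entropy_sub_comm hq hp]
  refine le_trans (sum_mul_le_sum_mul hp fun t ht => (entropy_sub_comm hq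
    (condWeight_mem_stdSimplex hp g ht) A W).le) ?_
  exact sum_mul_entropy_condWeight_prodWeight_le hp hq g _

lemma law_mul_entropyExcess_condWeight_le (hp : p ∈ stdSimplex ℝ Ω) (hq : q ∈ stdSimplex ℝ Ω')
    (g : Ω → S) (v : S) (A : Ω → G) (W : Ω' → G) :
    law p g v * entropyExcess (condWeight p g v) A q W ≤ entropyExcess p A q W := by
  classical
  refine le_trans ?_ (sum_mul_entropyExcess_condWeight_le hp hq g A W)
  rw [law, prob, sum_mul]
  refine sum_le_sum fun t _ => ?_
  rcases eq_or_ne (p t) 0 with h0 | h0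
  · simp [Set.indicator_apply, h0]
  rcases eq_or_ne (g t) v with rfl | hne
  · simp
  · simpa [hne] using mul_nonneg (hp.1 t)
      (entropyExcess_nonneg (condWeight_mem_stdSimplex hp g h0) hq A W)

lemma prob_condWeight (p : Ω → ℝ) (g : Ω → S) (v : S) (E : Set Ω) :
    prob (condWeight p g v) E = prob p (E ∩ {ω | g ω = v}) / law p g v := by
  classical
  rw [prob, prob, sum_div]
  refine sum_congr rfl fun ω _ => ?_
  by_cases h : ω ∈ E <;> simp [condWeight, Set.indicator_apply, h]

lemma IsFrostman.condWeight {X : Ω → ℤ} {n : ℕ} {L s : ℝ} (hF : IsFrostman p X n L s)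
    (hp : p ∈ stdSimplex ℝ Ω) (g : Ω → S) (v : S) :
    IsFrostman (condWeight p g v) X n (L / law p g v) s := by
  intro x R hR
  rw [prob_condWeight, div_mul_eq_mul_div]
  exact div_le_div_of_nonneg_right ((prob_mono hp fun _ _ h => h.1).trans (hF x R hR))
    (law_nonneg hp g v)

end ExcessConditioning

section FloorSq

/-- The square `a * x ^ 2` of a point at scale `2 ^ n`, rounded down to an integer at that scale. -/
noncomputable def floorSq (a : ℝ) (n : ℕ) (x : ℤ) : ℤ :=
  ⌊a * (x : ℝ) ^ 2 / 2 ^ n⌋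

lemma floorSq_le (a : ℝ) (n : ℕ) (x : ℤ) : (floorSq a n x : ℝ) ≤ a * (x : ℝ) ^ 2 / 2 ^ n :=
  Int.floor_le _

lemma lt_floorSq_add_one (a : ℝ) (n : ℕ) (x : ℤ) :
    a * (x : ℝ) ^ 2 / 2 ^ n < floorSq a n x + 1 :=
  Int.lt_floor_add_one _

variable {a r : ℝ} {n : ℕ} {V x y x' y' : ℤ}

lemma abs_floorSq_sub_floorSq_add_sub_le (a : ℝ) (n : ℕ) (hx : x + y = V) :
    |((floorSq a n x - floorSq a n y : ℤ) : ℝ) + a * V ^ 2 / 2 ^ n -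
      2 * a * V * x / 2 ^ n| ≤ 1 := by
  have hfactor : 2 * a * V * x / 2 ^ n - a * V ^ 2 / 2 ^ n =
      a * (x : ℝ) ^ 2 / 2 ^ n - a * (y : ℝ) ^ 2 / 2 ^ n := by
    rw [← hx]
    push_cast
    ring
  rw [abs_le]
  push_cast
  constructor <;>
    linarith [floorSq_le a n x, floorSq_le a n y, lt_floorSq_add_one a n x,
      lt_floorSq_add_one a n y]

lemma abs_sub_le_of_floorSq_sub_eq (ha : a ≠ 0) (hr : 0 < r) (hV : r * 2 ^ n ≤ |(V : ℝ)|)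
    (hx : x + y = V) (hx' : x' + y' = V)
    (h : floorSq a n x - floorSq a n y = floorSq a n x' - floorSq a n y') :
    |(x : ℝ) - x'| ≤ 2 / (|2 * a| * r) := by
  have happ := abs_le.1 (abs_floorSq_sub_floorSq_add_sub_le a n hx)
  have happ' := abs_le.1 (abs_floorSq_sub_floorSq_add_sub_le a n hx')
  rw [h] at happ
  have hdiff : |2 * a * V * ((x : ℝ) - x') / 2 ^ n| ≤ 2 := by
    rw [mul_sub, sub_div, abs_le]
    constructor <;> linarith
  rw [abs_div, abs_mul, abs_mul, abs_of_pos (by positivity : (0 : ℝ) < 2 ^ n),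
    div_le_iff₀ (by positivity)] at hdiff
  rw [le_div_iff₀ (by positivity)]
  have : |2 * a| * (r * 2 ^ n) * |(x : ℝ) - x'| ≤ |2 * a| * |(V : ℝ)| * |(x : ℝ) - x'| := by
    gcongr
  exact le_of_mul_le_mul_right (by linarith) (by positivity : (0 : ℝ) < 2 ^ n)

lemma abs_floorMul_sub_sub_le (hx : x + y = V) (hx' : x' + y' = V) {z z' : ℤ}
    (h : z - x = z' - x') :
    |((floorMul (2 * a) n V z - (floorSq a n x - floorSq a n y) : ℤ) : ℝ) -
      (floorMul (2 * a) n V z' - (floorSq a n x' - floorSq a n y') : ℤ)| ≤ 4 := by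
  have happ := abs_le.1 (abs_floorSq_sub_floorSq_add_sub_le a n hx)
  have happ' := abs_le.1 (abs_floorSq_sub_floorSq_add_sub_le a n hx')
  have hz : (z : ℝ) - x = z' - x' := mod_cast h
  have hshift : 2 * a * V * z / 2 ^ n - 2 * a * V * x / 2 ^ n =
      2 * a * V * z' / 2 ^ n - 2 * a * V * x' / 2 ^ n := by
    rw [← sub_div, ← sub_div, ← mul_sub, ← mul_sub, hz]
  push_cast at happ happ' ⊢
  rw [abs_le]
  constructor <;>
    linarith [floorMul_le (2 * a) n V z, floorMul_le (2 * a) n V z',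
      lt_floorMul_add_one (2 * a) n V z, lt_floorMul_add_one (2 * a) n V z']

end FloorSq

section FibreExcess

variable {Ω : Type*} [Fintype Ω] {p : Ω → ℝ} {X : Ω → ℤ} {a r : ℝ} {n : ℕ}

/-- The difference `a * X ^ 2 - a * X' ^ 2` for an independent copy `X'` of `X`, at scale
`2 ^ n`. -/
noncomputable def floorSqSub (a : ℝ) (n : ℕ) (X : Ω → ℤ) : Ω × Ω → ℤ :=
  fun t => floorSq a n (X t.1) - floorSq a n (X t.2)

/-- The law of `(X, X')` given `X + X' = v`, for an independent copy `X'` of `X`. -/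
noncomputable def sumFibre (p : Ω → ℝ) (X : Ω → ℤ) (v : ℤ) : Ω × Ω → ℝ :=
  condWeight (p ×ˢ p) (fun t => X t.1 + X t.2) v

/-- How far the fibre `X + X' = v` is from being absorbed by `X` and absorbing
`a * X ^ 2 - a * X' ^ 2`. On the fibre these two are linked by the factorization
`X ^ 2 - X' ^ 2 = v * (2 * X - v)`. -/
noncomputable def fibreExcess (p : Ω → ℝ) (X : Ω → ℤ) (a : ℝ) (n : ℕ) (v : ℤ) : ℝ :=
  entropyExcess p X (sumFibre p X v) (fun u => X u.1) +
    entropyExcess (sumFibre p X v) (floorSqSub a n X) (p ×ˢ p) (floorSqSub a n X)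

lemma sumFibre_mem_stdSimplex (hp : p ∈ stdSimplex ℝ Ω) (X : Ω → ℤ) {t : Ω × Ω}
    (ht : (p ×ˢ p) t ≠ 0) : sumFibre p X (X t.1 + X t.2) ∈ stdSimplex ℝ (Ω × Ω) :=
  condWeight_mem_stdSimplex (prodWeight_mem_stdSimplex hp hp) (fun t => X t.1 + X t.2) ht

lemma fibreExcess_nonneg (hp : p ∈ stdSimplex ℝ Ω) (X : Ω → ℤ) (a : ℝ) (n : ℕ) {t : Ω × Ω}
    (ht : (p ×ˢ p) t ≠ 0) : 0 ≤ fibreExcess p X a n (X t.1 + X t.2) :=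
  have hfibre := sumFibre_mem_stdSimplex hp X ht
  add_nonneg (entropyExcess_nonneg hp hfibre _ _)
    (entropyExcess_nonneg hfibre (prodWeight_mem_stdSimplex hp hp) _ _)

lemma entropyExcess_floorMul_le (hp : p ∈ stdSimplex ℝ Ω) (ha : a ≠ 0) (hr : 0 < r) {t : Ω × Ω}
    (ht : (p ×ˢ p) t ≠ 0) (hV : r * 2 ^ n ≤ |((X t.1 + X t.2 : ℤ) : ℝ)|) :
    entropyExcess p (fun ω => floorMul (2 * a) n (X t.1 + X t.2) (X ω)) (p ×ˢ p)
        (floorSqSub a n X) ≤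
      fibreExcess p X a n (X t.1 + X t.2) + logb 2 9 +
        logb 2 (2 * (2 / (|2 * a| * r)) + 1) := by
  have hfibre := sumFibre_mem_stdSimplex hp X ht
  have hsum : ∀ u, sumFibre p X (X t.1 + X t.2) u ≠ 0 → X u.1 + X u.2 = X t.1 + X t.2 :=
    fun u hu => (of_condWeight_ne_zero hu).1
  have htriangle := entropyExcess_triangle hp hfibre (prodWeight_mem_stdSimplex hp hp)
    (fun ω => floorMul (2 * a) n (X t.1 + X t.2) (X ω)) (floorSqSub a n X) (floorSqSub a n X)
  have hproduct := entropy_le_add_logb (prodWeight_mem_stdSimplex hp hfibre)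
    (f := fun u => floorMul (2 * a) n (X t.1 + X t.2) (X u.1) - floorSqSub a n X u.2)
    (g := fun u => X u.1 - X u.2.1) (d := 4) (by norm_num) fun u u' hu hu' h =>
      abs_floorMul_sub_sub_le (hsum _ (right_ne_zero_of_mul hu))
        (hsum _ (right_ne_zero_of_mul hu')) h
  have hrecover := entropy_le_add_logb hfibre (f := fun u => X u.1) (g := floorSqSub a n X)
    (by positivity) fun u u' hu hu' h =>
      abs_sub_le_of_floorSq_sub_eq ha hr hV (hsum u hu) (hsum u' hu') h
  rw [show (2 : ℝ) * 4 + 1 = 9 by norm_num] at hproduct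
  simp only [fibreExcess, entropyExcess] at htriangle ⊢
  linarith

lemma sum_mul_fibreExcess_le (hp : p ∈ stdSimplex ℝ Ω) (X : Ω → ℤ) (a : ℝ) (n : ℕ) :
    ∑ t, (p ×ˢ p) t * fibreExcess p X a n (X t.1 + X t.2) ≤
      entropy (p ×ˢ p) (fun t => X t.1 - X t.2) + entropy (p ×ˢ p) (fun t => X t.1 + X t.2) -
        2 * entropy p X +
        entropyExcess (p ×ˢ p) (floorSqSub a n X) (p ×ˢ p) (floorSqSub a n X) := by
  have hpp := prodWeight_mem_stdSimplex hp hp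
  have hleft := sum_mul_entropyExcess_condWeight_right_le hpp hp (fun t => X t.1 + X t.2) X
    fun t => X t.1
  have hright := sum_mul_entropyExcess_condWeight_le hpp hpp (fun t => X t.1 + X t.2)
    (floorSqSub a n X) (floorSqSub a n X)
  have hdiff : entropy (p ×ˢ (p ×ˢ p)) (fun t => X t.1 - X t.2.1) =
      entropy (p ×ˢ p) (fun t => X t.1 - X t.2) :=
    (isPushforward_id.prodMap (isPushforward_fst hp)).entropy_comp fun t => X t.1 - X t.2
  have hpair : entropy (p ×ˢ p) (fun t => (X t.1, X t.1 + X t.2)) = entropy p X + entropy p X := by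
    rw [← entropy_prodMk hp hp X X]
    refine entropy_congr hpp fun t t' => ?_
    simp only [Prod.mk.injEq]
    omega
  simp only [fibreExcess, sumFibre, mul_add, sum_add_distrib]
  linarith

end FibreExcess

section Selection

variable {Ω Ω' : Type*} [Fintype Ω] [Fintype Ω'] {p : Ω → ℝ} {q : Ω' → ℝ} {X : Ω → ℤ} {a c : ℝ}
  {n : ℕ} {s E L r : ℝ}

lemma exists_le_prob_of_le_prob_prodWeight (hp : p ∈ stdSimplex ℝ Ω) {A : Set (Ω × Ω')} {B : ℝ}
    (h : B ≤ prob (p ×ˢ q) A) : ∃ ω, p ω ≠ 0 ∧ B ≤ prob q {ω' | (ω, ω') ∈ A} := by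
  have hneg : ∑ ω, p ω * -prob q {ω' | (ω, ω') ∈ A} ≤ -B := by
    simpa only [mul_neg, sum_neg_distrib, neg_le_neg_iff, ← prob_prodWeight] using h
  simpa only [neg_le_neg_iff] using exists_le_of_sum_mul_le hp hneg

lemma IsFrostman.prob_abs_add_lt_le (hF : IsFrostman p X n L s) (hp : p ∈ stdSimplex ℝ Ω)
    (hrn : 1 ≤ r * 2 ^ n) :
    prob (p ×ˢ p) {t | |((X t.1 + X t.2 : ℤ) : ℝ)| < r * 2 ^ n} ≤ L * r ^ s := by
  have hball := hF.prob_prodWeight_le hp (E := Set.univ) (y := fun ω => -(X ω : ℝ)) hrn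
  rw [prob_univ hp, one_mul, mul_div_cancel_right₀ _ (by positivity)] at hball
  refine (prob_mono (prodWeight_mem_stdSimplex hp hp) fun t _ ht => ?_).trans hball
  simp only [Set.mem_ofPred_eq] at ht
  push_cast at ht
  exact ⟨Set.mem_univ _, by rw [sub_neg_eq_add, add_comm]; exact ht.le⟩

lemma half_le_prob_fibreExcess_le (hp : p ∈ stdSimplex ℝ Ω) (hE : 0 < E)
    (hF : IsFrostman p X n L s)
    (havg : ∑ t, (p ×ˢ p) t * fibreExcess p X a n (X t.1 + X t.2) ≤ 6 * E)
    (hrn : 1 ≤ r * 2 ^ n) (hrL : L * r ^ s ≤ 1 / 4) :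
    1 / 2 ≤ prob (p ×ˢ p) {t | fibreExcess p X a n (X t.1 + X t.2) ≤ 24 * E ∧
      r * 2 ^ n ≤ |((X t.1 + X t.2 : ℤ) : ℝ)|} := by
  have hpp := prodWeight_mem_stdSimplex hp hp
  have hmarkov : prob (p ×ˢ p) {t | 24 * E < fibreExcess p X a n (X t.1 + X t.2)} ≤ 1 / 4 := by
    have := prob_lt_mul_le_sum_mul hpp (fun t ht => fibreExcess_nonneg hp X a n ht) (24 * E)
    nlinarith
  have hsmall := (hF.prob_abs_add_lt_le hp hrn).trans hrL
  have hbad := prob_union_le hpp {t | 24 * E < fibreExcess p X a n (X t.1 + X t.2)}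
    {t | |((X t.1 + X t.2 : ℤ) : ℝ)| < r * 2 ^ n}
  have hgood := prob_compl hpp ({t | 24 * E < fibreExcess p X a n (X t.1 + X t.2)} ∪
    {t | |((X t.1 + X t.2 : ℤ) : ℝ)| < r * 2 ^ n})
  have hset : {t : Ω × Ω | fibreExcess p X a n (X t.1 + X t.2) ≤ 24 * E ∧
      r * 2 ^ n ≤ |((X t.1 + X t.2 : ℤ) : ℝ)|} =
      ({t | 24 * E < fibreExcess p X a n (X t.1 + X t.2)} ∪
        {t | |((X t.1 + X t.2 : ℤ) : ℝ)| < r * 2 ^ n})ᶜ := by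
    ext t
    simp
  rw [hset, hgood]
  linarith

lemma exists_isNearModule (hp : p ∈ stdSimplex ℝ Ω) (ha : a ≠ 0) (hc : 1 ≤ c) (hs : 0 < s)
    (hs1 : s < 1) (hE : 0 < E) (hX : ∀ ω, p ω ≠ 0 → |(X ω : ℝ)| ≤ c * 2 ^ n)
    (hF : IsFrostman p X n L s) (hL : 1 ≤ L)
    (havg : ∑ t, (p ×ˢ p) t * fibreExcess p X a n (X t.1 + X t.2) ≤ 6 * E)
    (hself : entropyExcess (p ×ˢ p) (floorSqSub a n X) (p ×ˢ p) (floorSqSub a n X) ≤ 2 * E)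
    (hsq : entropy (p ×ˢ p) (floorSqSub a n X) ≤ s * n + 2 * E)
    (hr : 0 < r) (hr1 : r ≤ 1) (hrn : 1 ≤ r * 2 ^ n) (hrL : L * r ^ s ≤ 1 / 4) :
    ∃ (p' : Ω → ℝ) (v₀ : ℤ), IsNearModule p' (p ×ˢ p) X (floorSqSub a n X) v₀ (2 * a) c n s
      (2 * (24 * E + logb 2 9 + logb 2 (2 * (2 / (|2 * a| * r)) + 1))) (2 * E) (2 * L) r := by
  have hpp := prodWeight_mem_stdSimplex hp hp
  obtain ⟨w, hw, hgood⟩ := exists_le_prob_of_le_prob_prodWeight hp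
    (half_le_prob_fibreExcess_le hp hE hF havg hrn hrL)
  set good : Ω → Prop := fun ω => fibreExcess p X a n (X w + X ω) ≤ 24 * E ∧
    r * 2 ^ n ≤ |((X w + X ω : ℤ) : ℝ)|
  have hlaw : 1 / 2 ≤ law p good True := by
    simp only [law, eq_iff_iff, iff_true]
    exact hgood
  have hmem : condWeight p good True ∈ stdSimplex ℝ Ω := by
    obtain ⟨ω, hω, hpω⟩ := exists_mem_of_prob_pos (half_pos one_pos |>.trans_le hlaw)
    rw [← show good ω = True from hω]
    exact condWeight_mem_stdSimplex hp good hpω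
  have hsupp : ∀ ω, condWeight p good True ω ≠ 0 → good ω ∧ p ω ≠ 0 := fun ω hω =>
    (of_condWeight_ne_zero hω).imp_left of_eq_true
  refine ⟨condWeight p good True, X w, hmem, hpp, fun ω hω => hX ω (hsupp ω hω).2, fun ω hω => ?_,
    fun ω hω => ?_, hself, hsq, fun x R hR => ?_, by linarith, hr, hr1, by simpa using ha, hc, hs,
    hs1⟩
  · rw [add_comm (X ω)]
    exact (hsupp ω hω).1.2
  · obtain ⟨⟨hexcess, hV⟩, hpω⟩ := hsupp ω hω
    have hmul := entropyExcess_floorMul_le (t := (w, ω)) hp ha hr (mul_ne_zero hw hpω) hV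
    have hcond := law_mul_entropyExcess_condWeight_le hp hpp good True
      (fun ω' => floorMul (2 * a) n (X w + X ω) (X ω')) (floorSqSub a n X)
    have hnonneg := entropyExcess_nonneg hmem hpp
      (fun ω' => floorMul (2 * a) n (X w + X ω) (X ω')) (floorSqSub a n X)
    rw [add_comm (X ω)]
    simp only at hmul
    nlinarith
  · refine (hF.condWeight hp good True x R hR).trans ?_
    refine mul_le_mul_of_nonneg_right ?_ (by positivity)
    rw [div_le_iff₀ (by linarith)]
    nlinarith

end Selection

section Parameters

open Filter

variable {s : ℝ}

lemma eventually_le_mul_natCast (K : ℝ) {ζ : ℝ} (hζ : 0 < ζ) : ∀ᶠ n : ℕ in atTop, K ≤ ζ * n :=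
  (tendsto_natCast_atTop_atTop.const_mul_atTop hζ).eventually_ge_atTop K

lemma eventually_add_logb_mul_add_le (K B : ℝ) {A ζ : ℝ} (hA : 0 < A) (hζ : 0 < ζ) :
    ∀ᶠ n : ℕ in atTop, K + logb 2 (A * (n + B)) ≤ ζ * n := by
  have hlog2 : 0 < Real.log 2 := Real.log_pos one_lt_two
  have htendsto : Tendsto (fun n : ℕ => A * ((n : ℝ) + B)) atTop atTop :=
    (tendsto_atTop_add_const_right _ B tendsto_natCast_atTop_atTop).const_mul_atTop hA
  have hlog := (Real.isLittleO_log_id_atTop.comp_tendsto htendsto).bound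
    (show 0 < ζ * Real.log 2 / (2 * A) by positivity)
  filter_upwards [hlog, htendsto.eventually_ge_atTop 0,
    eventually_le_mul_natCast (K + ζ / 2 * B) (half_pos hζ)] with n hn hpos hK
  simp only [Function.comp_apply, id, Real.norm_eq_abs, abs_of_nonneg hpos] at hn
  have hlogb : logb 2 (A * (n + B)) ≤ ζ / 2 * (n + B) := by
    rw [Real.logb, div_le_iff₀ hlog2]
    refine (le_abs_self _).trans (hn.trans_eq ?_)
    field_simp
  linarith

lemma mul_add_mul_div_two_le {t : ℝ} {k n : ℕ} (ht : t = min s (1 - s))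
    (hk : (k : ℝ) ≤ t / 6 * n) (hkn : 3 * k ≤ n) :
    s * n + t * n / 2 ≤ 2 * min s (1 / 2) * ((n - 3 * k : ℕ) : ℝ) := by
  have hmin : 2 * min s (1 / 2) = s + t := by
    rcases min_cases s (1 / 2) with ⟨h, h'⟩ | ⟨h, h'⟩ <;>
      rcases min_cases s (1 - s) with ⟨h₁, h₁'⟩ | ⟨h₁, h₁'⟩ <;> linarith
  have hst : s + t ≤ 1 := by linarith [min_le_right s (1 - s)]
  rw [hmin, Nat.cast_sub hkn]
  push_cast
  nlinarith [Nat.cast_nonneg (α := ℝ) k]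

lemma eventually_not_isNearModule (hs : 0 < s) (hs1 : s < 1) (κ : ℝ) {c : ℝ}
    (hc : 1 ≤ c) :
    ∀ᶠ n : ℕ in atTop, ∀ {Ω Ω' : Type*} [Fintype Ω] [Fintype Ω'] {p : Ω → ℝ} {q : Ω' → ℝ}
      {X : Ω → ℤ} {W : Ω' → ℤ} {v₀ : ℤ} {θ δ L r : ℝ},
      logb 2 L ≤ s * min s (1 - s) / 20 * n →
      9 * θ + 8 * δ + 3 * logb 2 L - s * logb 2 r + slopeLoss κ c ≤
        s * min s (1 - s) / 20 * n →
      ¬ IsNearModule p q X W v₀ κ c n s θ δ L r := by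
  obtain ⟨t, ht⟩ : ∃ t, t = min s (1 - s) := ⟨_, rfl⟩
  have ht0 : 0 < t := ht ▸ lt_min hs (by linarith)
  have ht1 : t ≤ 1 := by linarith [min_le_right s (1 - s)]
  have hst : s * t ≤ t := mul_le_of_le_one_left ht0.le hs1.le
  obtain ⟨J, hJ⟩ := pow_unbounded_of_one_lt (2 * c) one_lt_two
  have hJ0 : 0 < J := Nat.pos_of_ne_zero (by rintro rfl; linarith)
  have hfloor : Tendsto (fun n : ℕ => ⌊t / 6 * n⌋₊) atTop atTop :=
    tendsto_nat_floor_atTop.comp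
      (tendsto_natCast_atTop_atTop.const_mul_atTop (by positivity))
  rw [← ht]
  filter_upwards [eventually_gt_atTop 0,
    ((tendsto_pow_atTop_atTop_of_one_lt (one_lt_two (α := ℝ))).comp hfloor).eventually_gt_atTop
      (4 / |κ|),
    eventually_le_mul_natCast (1 + |logb 2 (4 / |κ| + 2 * c)|)
      (by positivity : 0 < s * t / 20),
    eventually_add_logb_mul_add_le
      (logb 2 (2 * c) + logb 2 (2 * (4 / |κ| + 6 * c + 1) + 1)) J
      (by positivity : 0 < 16 * c) (by positivity : 0 < s * t / 20)]
    with n hn hκk hconst hlog Ω Ω' _ _ p q X W v₀ θ δ L r hL herror h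
  have hn0 : (0 : ℝ) < n := Nat.cast_pos.2 hn
  have hk := Nat.floor_le (by positivity : 0 ≤ t / 6 * n)
  have hk' : s * (t / 6 * n) ≤ s * (⌊t / 6 * n⌋₊ + 1) :=
    mul_le_mul_of_nonneg_left (Nat.lt_floor_add_one _).le hs.le
  set k := ⌊t / 6 * n⌋₊
  have hkn : 3 * k ≤ n := by
    have : (3 * k : ℝ) ≤ n := by nlinarith
    exact_mod_cast this
  have hbound := h.two_mul_min_mul_le hkn hJ hκk
    (by nlinarith [abs_nonneg (logb 2 (4 / |κ| + 2 * c))])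
    (by nlinarith [le_abs_self (logb 2 (4 / |κ| + 2 * c))])
  have hmono : logb 2 (16 * c * (((n - 3 * k : ℕ) : ℝ) + J)) ≤ logb 2 (16 * c * (n + J)) := by
    refine Real.logb_le_logb_of_le one_lt_two (by positivity) ?_
    gcongr
    exact Nat.sub_le _ _
  have := mul_add_mul_div_two_le ht hk hkn
  nlinarith

end Parameters

section SumProduct

open Filter

variable {Ω : Type*} [Fintype Ω] {p : Ω → ℝ} {X : Ω → ℤ} {a c s E : ℝ} {n : ℕ}

lemma sum_mul_fibreExcess_le_of_entropy_le (hp : p ∈ stdSimplex ℝ Ω) (hX : s * n - E ≤ entropy p X)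
    (hadd : entropy (p ×ˢ p) (fun t => X t.1 + X t.2) ≤ s * n + E)
    (hsub : entropy (p ×ˢ p) (fun t => X t.1 - X t.2) ≤ s * n + E)
    (hself : entropyExcess (p ×ˢ p) (floorSqSub a n X) (p ×ˢ p) (floorSqSub a n X) ≤ 2 * E) :
    ∑ t, (p ×ˢ p) t * fibreExcess p X a n (X t.1 + X t.2) ≤ 6 * E := by
  linarith [sum_mul_fibreExcess_le hp X a n]

lemma logb_two_mul_div_rpow_neg_le {A e : ℝ} (hA : 0 < A) (he : 0 ≤ e) :
    logb 2 (2 * (2 / (A * 2 ^ (-e))) + 1) ≤ logb 2 (4 / A + 1) + e := by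
  have hrpow : logb 2 ((2 : ℝ) ^ e) = e := Real.logb_rpow two_pos one_lt_two.ne'
  calc logb 2 (2 * (2 / (A * 2 ^ (-e))) + 1)
      ≤ logb 2 ((4 / A + 1) * 2 ^ e) := by
        refine Real.logb_le_logb_of_le one_lt_two (by positivity) ?_
        rw [Real.rpow_neg zero_le_two, add_one_mul]
        refine add_le_add (le_of_eq ?_) (Real.one_le_rpow one_le_two he)
        field_simp
        norm_num
    _ = logb 2 (4 / A + 1) + e := by rw [Real.logb_mul (by positivity) (by positivity), hrpow]

lemma exists_isNearModule_of_entropy_le (hp : p ∈ stdSimplex ℝ Ω) (ha : a ≠ 0) (hc : 1 ≤ c)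
    (hs : 0 < s) (hs1 : s < 1) {u : ℝ} (hu : 0 < u) (hun : u + 2 / s ≤ n)
    (hX : ∀ ω, p ω ≠ 0 → |(X ω : ℝ)| ≤ c * 2 ^ n) (hF : IsFrostman p X n (2 ^ (s * u)) s)
    (hadd : entropy (p ×ˢ p) (fun t => X t.1 + X t.2) ≤ s * n + s * u)
    (hsub : entropy (p ×ˢ p) (fun t => X t.1 - X t.2) ≤ s * n + s * u)
    (hsqsub : entropy ((p ×ˢ p) ×ˢ (p ×ˢ p))
      (fun t => floorSqSub a n X t.1 - floorSqSub a n X t.2) ≤ s * n + s * u)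
    (hsq : s * n - s * u ≤ entropy p fun ω => floorSq a n (X ω)) :
    ∃ (p' : Ω → ℝ) (v₀ : ℤ), IsNearModule p' (p ×ˢ p) X (floorSqSub a n X) v₀ (2 * a) c n s
      (2 * (24 * (s * u) + logb 2 9 + logb 2 (2 * (2 / (|2 * a| * 2 ^ (-(u + 2 / s)))) + 1)))
      (2 * (s * u)) (2 * 2 ^ (s * u)) (2 ^ (-(u + 2 / s))) := by
  have hpp := prodWeight_mem_stdSimplex hp hp
  have hL : logb 2 ((2 : ℝ) ^ (s * u)) = s * u := Real.logb_rpow two_pos one_lt_two.ne'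
  have hW := entropy_left_le_sub hp hp (fun ω => floorSq a n (X ω)) fun ω => floorSq a n (X ω)
  change _ ≤ entropy (p ×ˢ p) (floorSqSub a n X) at hW
  have hWW := entropy_left_le_sub hpp hpp (floorSqSub a n X) (floorSqSub a n X)
  have hXle : s * n - s * u ≤ entropy p X := by
    simpa [hL] using hF.le_entropy hp (by positivity) le_rfl (f := X) fun ω ω' _ _ h => by simp [h]
  have hself : entropyExcess (p ×ˢ p) (floorSqSub a n X) (p ×ˢ p) (floorSqSub a n X) ≤
      2 * (s * u) := by
    rw [entropyExcess]
    linarith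
  refine exists_isNearModule (E := s * u) (L := 2 ^ (s * u)) (r := 2 ^ (-(u + 2 / s))) hp ha hc hs
    hs1 (by positivity) hX hF (Real.one_le_rpow one_le_two (by positivity))
    (sum_mul_fibreExcess_le_of_entropy_le hp hXle hadd hsub hself) hself
    (by linarith [mul_pos hs hu]) (by positivity)
    (Real.rpow_le_one_of_one_le_of_nonpos one_le_two (neg_nonpos.2 (by positivity))) ?_ ?_
  · rw [← Real.rpow_natCast, ← Real.rpow_add two_pos]
    exact Real.one_le_rpow one_le_two (by linarith)
  · rw [← Real.rpow_mul zero_le_two, ← Real.rpow_add two_pos,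
      show s * u + -(u + 2 / s) * s = -2 by field_simp; ring]
    norm_num

/-- The entropy gain, relative to the scale, in the sum-product estimate for exponent `s`. -/
noncomputable def sumProductGain (s : ℝ) : ℝ :=
  s * (s * min s (1 - s) / 10000)

lemma sumProductGain_pos (hs : 0 < s) (hs1 : s < 1) : 0 < sumProductGain s := by
  have : 0 < min s (1 - s) := lt_min hs (by linarith)
  rw [sumProductGain]
  positivity

theorem eventually_lt_max_entropy.{u} (hs : 0 < s) (hs1 : s < 1) (ha : a ≠ 0) (hc : 1 ≤ c) :
    ∀ᶠ n : ℕ in atTop, ∀ {Ω : Type u} [Fintype Ω] {p : Ω → ℝ} {X : Ω → ℤ},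
      p ∈ stdSimplex ℝ Ω → (∀ ω, p ω ≠ 0 → |(X ω : ℝ)| ≤ c * 2 ^ n) →
      IsFrostman p X n (2 ^ (sumProductGain s * n)) s →
      s * n - sumProductGain s * n ≤ entropy p (fun ω => floorSq a n (X ω)) →
      s * n + sumProductGain s * n <
        max (max (entropy (p ×ˢ p) fun t => X t.1 + X t.2)
            (entropy (p ×ˢ p) fun t => X t.1 - X t.2))
          (entropy ((p ×ˢ p) ×ˢ (p ×ˢ p)) fun t =>
            floorSqSub a n X t.1 - floorSqSub a n X t.2) := by
  have hst : 0 < s * min s (1 - s) / 10000 := by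
    simpa [sumProductGain, hs] using sumProductGain_pos hs hs1
  filter_upwards [eventually_gt_atTop 0, eventually_not_isNearModule.{u, u} hs hs1 (2 * a) hc,
    eventually_le_mul_natCast (18 * logb 2 9 + 18 * logb 2 (4 / |2 * a| + 1) + 36 / s + 5 +
      slopeLoss (2 * a) c) (mul_pos (by norm_num : (0 : ℝ) < 30) hst),
    eventually_le_mul_natCast (2 / s) (half_pos hst), eventually_le_mul_natCast 1 hst]
    with n hn hnot hconst h2s hone Ω _ p X hp hX hF hsq
  by_contra! hle
  obtain ⟨⟨hadd, hsub⟩, hsqsub⟩ := max_le_iff.1 hle |>.imp_left max_le_iff.1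
  have hn0 : (0 : ℝ) < n := Nat.cast_pos.2 hn
  obtain ⟨u, hu⟩ : ∃ u, u = s * min s (1 - s) / 10000 * n := ⟨_, rfl⟩
  have hu0 : 0 < u := hu ▸ mul_pos hst hn0
  have hgain : sumProductGain s * n = s * u := by rw [sumProductGain, hu, mul_assoc]
  rw [hgain] at hF hsq hadd hsub hsqsub
  have hmin : s * min s (1 - s) ≤ 1 :=
    mul_le_one₀ hs1.le (le_min hs.le (by linarith)) ((min_le_left _ _).trans hs1.le)
  obtain ⟨p', v₀, h⟩ := exists_isNearModule_of_entropy_le hp ha hc hs hs1 hu0 (by nlinarith) hX hF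
    hadd hsub hsqsub hsq
  have hlogL : logb 2 (2 * (2 : ℝ) ^ (s * u)) = 1 + s * u := by
    rw [Real.logb_mul two_ne_zero (by positivity), Real.logb_rpow two_pos one_lt_two.ne',
      Real.logb_self_eq_one one_lt_two]
  have hlogr : s * logb 2 ((2 : ℝ) ^ (-(u + 2 / s))) = -(s * u + 2) := by
    rw [Real.logb_rpow two_pos one_lt_two.ne']
    field_simp
  have hθ := logb_two_mul_div_rpow_neg_le (abs_pos.2 (mul_ne_zero two_ne_zero ha))
    (by positivity : 0 ≤ u + 2 / s)
  have hsu : s * u ≤ u := mul_le_of_le_one_left hu0.le hs1.le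
  have hdiv : 36 / s = 18 * (2 / s) := by ring
  refine hnot ?_ ?_ h
  · rw [hlogL]
    nlinarith
  · rw [hlogL, hlogr]
    nlinarith

end SumProduct

section Recovery

variable {Ω S S' T T' : Type*} [Fintype Ω] {p : Ω → ℝ}

lemma entropy_prodMk_le_add_entropy_sub (hp : p ∈ stdSimplex ℝ Ω) (F : Ω → T) (Z : Ω → S)
    (w : S → S') :
    entropy p (fun ω => (F ω, Z ω)) ≤
      entropy p (fun ω => (F ω, w (Z ω))) + (entropy p Z - entropy p fun ω => w (Z ω)) := by
  have hsub := entropy_prod_add_entropy_comp_le hp (fun ω => (F ω, w (Z ω))) Z Prod.snd w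
    fun _ => rfl
  have hdrop := entropy_le_of_eq_comp hp (g := fun ω => (F ω, Z ω))
    (f := fun ω => ((F ω, w (Z ω)), Z ω)) (fun v => (v.1.1, v.2)) fun _ => rfl
  linarith

lemma entropy_prod_swap (hp : p ∈ stdSimplex ℝ Ω) (f : Ω → S) (g : Ω → T) :
    entropy p (fun ω => (f ω, g ω)) = entropy p fun ω => (g ω, f ω) :=
  entropy_congr hp fun ω ω' => by simp only [Prod.mk.injEq, and_comm]

lemma entropy_prodMk_le_add_entropy_sub_add_entropy_sub (hp : p ∈ stdSimplex ℝ Ω) (Z : Ω → S)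
    (Z' : Ω → T) (w : S → S') (w' : T → T') :
    entropy p (fun ω => (Z ω, Z' ω)) ≤
      entropy p (fun ω => (w (Z ω), w' (Z' ω))) + (entropy p Z - entropy p fun ω => w (Z ω)) +
        (entropy p Z' - entropy p fun ω => w' (Z' ω)) := by
  have hright := entropy_prodMk_le_add_entropy_sub hp Z Z' w'
  have hleft := entropy_prodMk_le_add_entropy_sub hp (fun ω => w' (Z' ω)) Z w
  rw [entropy_prod_swap hp _ Z, entropy_prod_swap hp _ fun ω => w (Z ω)] at hleft
  linarith

end Recovery

section Path

variable {Ω S S' G : Type*} [Fintype Ω] [AddCommGroup G] {p : Ω → ℝ} {X : Ω → S} {Y : Ω → S'}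

/-- The law of a pair of independent points, the first one conditioned to have the same value of `Y`
as `t` and the second one to have the same value of `X` as `t`. -/
noncomputable def fibreProd (p : Ω → ℝ) (X : Ω → S) (Y : Ω → S') (t : Ω) : Ω × Ω → ℝ :=
  condWeight p Y (Y t) ×ˢ condWeight p X (X t)

/-- The law of a random path of length three in the bipartite graph whose edges are the points
of `Ω`, a point `ω` joining `X ω` to `Y ω`; the middle edge comes first. -/
noncomputable def pathWeight (p : Ω → ℝ) (X : Ω → S) (Y : Ω → S') : Ω × Ω × Ω → ℝ :=
  mixture p (fibreProd p X Y)

lemma fibreProd_mem_stdSimplex (hp : p ∈ stdSimplex ℝ Ω) (X : Ω → S) (Y : Ω → S') {t : Ω}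
    (ht : p t ≠ 0) : fibreProd p X Y t ∈ stdSimplex ℝ (Ω × Ω) :=
  prodWeight_mem_stdSimplex (condWeight_mem_stdSimplex hp Y ht) (condWeight_mem_stdSimplex hp X ht)

lemma pathWeight_mem_stdSimplex (hp : p ∈ stdSimplex ℝ Ω) (X : Ω → S) (Y : Ω → S') :
    pathWeight p X Y ∈ stdSimplex ℝ (Ω × Ω × Ω) :=
  mixture_mem_stdSimplex hp fun _ => fibreProd_mem_stdSimplex hp X Y

lemma of_pathWeight_ne_zero {x : Ω × Ω × Ω} (hx : pathWeight p X Y x ≠ 0) :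
    p x.1 ≠ 0 ∧ Y x.2.1 = Y x.1 ∧ X x.2.2 = X x.1 :=
  have hfibre := right_ne_zero_of_mul hx
  ⟨left_ne_zero_of_mul hx, (of_condWeight_ne_zero (left_ne_zero_of_mul hfibre)).1,
    (of_condWeight_ne_zero (right_ne_zero_of_mul hfibre)).1⟩

lemma isPushforward_pathWeight_middle (hp : p ∈ stdSimplex ℝ Ω) (X : Ω → S) (Y : Ω → S') :
    IsPushforward (pathWeight p X Y) (fun x => x.1) p :=
  isPushforward_mixture_fst fun _ => fibreProd_mem_stdSimplex hp X Y

lemma isPushforward_pathWeight_first (hp : p ∈ stdSimplex ℝ Ω) (X : Ω → S) (Y : Ω → S') :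
    IsPushforward (pathWeight p X Y) (fun x => x.2.1) p :=
  (isPushforward_mixture_map fun _ ht =>
    isPushforward_fst (condWeight_mem_stdSimplex hp X ht)).trans
      (isPushforward_mixture_condWeight hp Y)

lemma isPushforward_pathWeight_last (hp : p ∈ stdSimplex ℝ Ω) (X : Ω → S) (Y : Ω → S') :
    IsPushforward (pathWeight p X Y) (fun x => x.2.2) p :=
  (isPushforward_mixture_map fun _ ht =>
    isPushforward_snd (condWeight_mem_stdSimplex hp Y ht)).trans
      (isPushforward_mixture_condWeight hp X)

lemma le_entropy_pathWeight (hp : p ∈ stdSimplex ℝ Ω)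
    (hinj : Set.InjOn (fun ω => (X ω, Y ω)) (Function.support p)) :
    3 * entropy p (fun ω => (X ω, Y ω)) - entropy p X - entropy p Y ≤
      entropy (pathWeight p X Y) (fun x => ((X x.2.1, Y x.1), (X x.1, Y x.2.2))) := by
  have hmixture := entropy_mixture (r := p) (fun _ => fibreProd_mem_stdSimplex hp X Y)
    fun _ u => (X u.1, Y u.2)
  have hfibre : ∑ t, p t * entropy (fibreProd p X Y t) (fun u => (X u.1, Y u.2)) =
      ∑ t, p t * entropy (condWeight p Y (Y t)) X +
        ∑ t, p t * entropy (condWeight p X (X t)) Y := by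
    rw [← sum_add_distrib]
    refine sum_congr rfl fun t _ => ?_
    rcases eq_or_ne (p t) 0 with ht | ht
    · simp [ht]
    · rw [fibreProd, entropy_prodMk (condWeight_mem_stdSimplex hp Y ht)
        (condWeight_mem_stdSimplex hp X ht), mul_add]
  rw [sum_mul_entropy_condWeight hp, sum_mul_entropy_condWeight hp, entropy_prod_swap hp Y X]
    at hfibre
  have hpair := entropy_le_of_eq_comp hp (f := fun ω => ω) (fun ω => (X ω, Y ω)) fun _ => rfl
  have hpath : entropy (pathWeight p X Y) (fun x => (x.1, (X x.2.1, Y x.2.2))) ≤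
      entropy (pathWeight p X Y) (fun x => ((X x.2.1, Y x.1), (X x.1, Y x.2.2))) := by
    refine entropy_mono (pathWeight_mem_stdSimplex hp X Y) fun x x' hx hx' h => ?_
    simp only [Prod.mk.injEq] at h ⊢
    exact ⟨hinj (of_pathWeight_ne_zero hx).1 (of_pathWeight_ne_zero hx').1
      (Prod.ext h.2.1 h.1.2), h.1.1, h.2.2⟩
  rw [pathWeight] at *
  linarith

lemma entropy_pathWeight_prodMk_le (hp : p ∈ stdSimplex ℝ Ω) (A : S → G) (B : S' → G) :
    entropy (pathWeight p X Y) (fun x => ((A (X x.2.1), B (Y x.1)), (A (X x.1), B (Y x.2.2)))) +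
        entropy (pathWeight p X Y) (fun x => A (X x.2.1) + B (Y x.2.2)) ≤
      entropy p (fun ω => A (X ω)) + entropy p (fun ω => B (Y ω)) +
        3 * entropy p (fun ω => A (X ω) + B (Y ω)) := by
  have hpath := pathWeight_mem_stdSimplex hp X Y
  have hsub := entropy_prod_add_entropy_comp_le hpath (fun x => (A (X x.2.1), B (Y x.2.2)))
    (fun x => (A (X x.2.1) + B (Y x.1), A (X x.1) + B (Y x.1), A (X x.1) + B (Y x.2.2)))
    (fun v => v.1 + v.2) (fun v => v.1 - v.2.1 + v.2.2) fun x => by simp only; abel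
  have hrecover := entropy_le_of_eq_comp hpath
    (g := fun x => ((A (X x.2.1), B (Y x.1)), (A (X x.1), B (Y x.2.2))))
    (f := fun x => ((A (X x.2.1), B (Y x.2.2)),
      (A (X x.2.1) + B (Y x.1), A (X x.1) + B (Y x.1), A (X x.1) + B (Y x.2.2))))
    (fun v => ((v.1.1, v.2.1 - v.1.1), (v.2.2.2 - v.1.2, v.1.2))) fun x => by simp
  have hends := entropy_prod_le hpath (fun x => A (X x.2.1)) fun x => B (Y x.2.2)
  have hsums := entropy_prod_le hpath (fun x => A (X x.2.1) + B (Y x.1))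
    fun x => (A (X x.1) + B (Y x.1), A (X x.1) + B (Y x.2.2))
  have hsums' := entropy_prod_le hpath (fun x => A (X x.1) + B (Y x.1))
    fun x => A (X x.1) + B (Y x.2.2)
  have hfirst : entropy (pathWeight p X Y) (fun x => A (X x.2.1) + B (Y x.1)) ≤
      entropy p fun ω => A (X ω) + B (Y ω) := by
    rw [← (isPushforward_pathWeight_first hp X Y).entropy_comp fun ω => A (X ω) + B (Y ω)]
    exact entropy_mono hpath fun x x' hx hx' h => by
      rwa [(of_pathWeight_ne_zero hx).2.1, (of_pathWeight_ne_zero hx').2.1] at h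
  have hlast : entropy (pathWeight p X Y) (fun x => A (X x.1) + B (Y x.2.2)) ≤
      entropy p fun ω => A (X ω) + B (Y ω) := by
    rw [← (isPushforward_pathWeight_last hp X Y).entropy_comp fun ω => A (X ω) + B (Y ω)]
    exact entropy_mono hpath fun x x' hx hx' h => by
      rwa [(of_pathWeight_ne_zero hx).2.2, (of_pathWeight_ne_zero hx').2.2] at h
  rw [(isPushforward_pathWeight_first hp X Y).entropy_comp fun ω => A (X ω),
    (isPushforward_pathWeight_last hp X Y).entropy_comp fun ω => B (Y ω)] at hends
  rw [(isPushforward_pathWeight_middle hp X Y).entropy_comp fun ω => A (X ω) + B (Y ω)] at hsums'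
  linarith

/-- Entropy version of the Balog–Szemerédi–Gowers theorem. -/
theorem entropy_pathWeight_add_le (hp : p ∈ stdSimplex ℝ Ω)
    (hinj : Set.InjOn (fun ω => (X ω, Y ω)) (Function.support p)) (A : S → G) (B : S' → G) :
    entropy (pathWeight p X Y) (fun x => A (X x.2.1) + B (Y x.2.2)) +
        3 * entropy p (fun ω => (X ω, Y ω)) +
        (entropy p (fun ω => A (X ω)) + entropy p fun ω => B (Y ω)) ≤
      3 * entropy p (fun ω => A (X ω) + B (Y ω)) + 3 * (entropy p X + entropy p Y) := by
  have hpath := pathWeight_mem_stdSimplex hp X Y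
  have hall := le_entropy_pathWeight hp hinj
  have hsum := entropy_pathWeight_prodMk_le (X := X) (Y := Y) hp A B
  have hleft := entropy_prodMk_le_add_entropy_sub_add_entropy_sub hpath (fun x => X x.2.1)
    (fun x => Y x.1) A B
  have hright := entropy_prodMk_le_add_entropy_sub_add_entropy_sub hpath (fun x => X x.1)
    (fun x => Y x.2.2) A B
  have hboth := entropy_prodMk_le_add_entropy_sub_add_entropy_sub hpath
    (fun x => (X x.2.1, Y x.1)) (fun x => (X x.1, Y x.2.2)) (Prod.map A B) (Prod.map A B)
  have hfirst := isPushforward_pathWeight_first hp X Y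
  have hmiddle := isPushforward_pathWeight_middle hp X Y
  have hlast := isPushforward_pathWeight_last hp X Y
  rw [hfirst.entropy_comp X, hfirst.entropy_comp fun ω => A (X ω), hmiddle.entropy_comp Y,
    hmiddle.entropy_comp fun ω => B (Y ω)] at hleft
  rw [hlast.entropy_comp Y, hlast.entropy_comp fun ω => B (Y ω), hmiddle.entropy_comp X,
    hmiddle.entropy_comp fun ω => A (X ω)] at hright
  simp only [Prod.map_apply] at hboth
  linarith

end Path

section Doubling

variable {G Ω Ω' : Type*} [AddCommGroup G] [Fintype Ω] [Fintype Ω'] {p : Ω → ℝ} {q : Ω' → ℝ}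

lemma entropy_add_comm (A : Ω → G) (B : Ω' → G) :
    entropy (q ×ˢ p) (fun t => B t.1 + A t.2) = entropy (p ×ˢ q) (fun t => A t.1 + B t.2) := by
  rw [← isPushforward_swap.entropy_comp fun t => B t.1 + A t.2]
  simp only [Prod.fst_swap, Prod.snd_swap, add_comm]

lemma entropy_add_self_add_le (hp : p ∈ stdSimplex ℝ Ω) (hq : q ∈ stdSimplex ℝ Ω') (A : Ω → G)
    (B : Ω' → G) :
    entropy (p ×ˢ p) (fun t => A t.1 + A t.2) + entropy q B ≤
      2 * entropy (p ×ˢ q) (fun t => A t.1 + B t.2) := by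
  let e : Ω × Ω' × Ω ≃ Ω' × Ω × Ω :=
    ⟨fun t => (t.2.1, t.1, t.2.2), fun t => (t.2.1, t.1, t.2.2), fun _ => rfl, fun _ => rfl⟩
  have hpush : IsPushforward (p ×ˢ (q ×ˢ p)) e (q ×ˢ (p ×ˢ p)) :=
    isPushforward_equiv e fun t => mul_left_comm _ _ _
  have hthree : entropy (p ×ˢ (q ×ˢ p)) (fun t => A t.1 + B t.2.1 + A t.2.2) =
      entropy (q ×ˢ (p ×ˢ p)) fun t => B t.1 + (A t.2.1 + A t.2.2) := by
    rw [← hpush.entropy_comp]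
    simp only [e, Equiv.coe_fn_mk, add_left_comm, add_assoc]
  have hkv := entropy_kaimanovich_vershik hp hq hp A B A
  have hdrop := entropy_right_le_add hq (prodWeight_mem_stdSimplex hp hp) B
    fun t => A t.1 + A t.2
  rw [entropy_add_comm A B] at hkv
  linarith

lemma entropy_sub_self_add_le (hp : p ∈ stdSimplex ℝ Ω) (hq : q ∈ stdSimplex ℝ Ω') (A : Ω → G)
    (B : Ω' → G) :
    entropy (p ×ˢ p) (fun t => A t.1 - A t.2) + entropy q B ≤
      2 * entropy (p ×ˢ q) (fun t => A t.1 + B t.2) := by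
  have htriangle := entropy_ruzsa_triangle hp hq hp A (fun ω => -B ω) A
  have hcomm := entropy_sub_comm hp hq A fun ω => -B ω
  rw [entropy_neg hq] at htriangle
  simp only [sub_neg_eq_add] at htriangle hcomm
  linarith

lemma entropy_sub_sub_sub_add_le (hp : p ∈ stdSimplex ℝ Ω) (A : Ω → G) :
    entropy ((p ×ˢ p) ×ˢ (p ×ˢ p)) (fun t => (A t.1.1 - A t.1.2) - (A t.2.1 - A t.2.2)) +
        3 * entropy p A ≤
      4 * entropy (p ×ˢ p) (fun t => A t.1 - A t.2) := by
  have hpp := prodWeight_mem_stdSimplex hp hp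
  have htriangle := entropy_ruzsa_triangle hpp hp hpp (fun t => A t.1 - A t.2) A
    fun t => A t.1 - A t.2
  have hcomm := entropy_sub_comm hpp hp (fun t => A t.1 - A t.2) A
  have hkv := entropy_kaimanovich_vershik hp hp hp A (fun ω => -A ω) A
  rw [entropy_neg hp] at hkv
  have hneg := entropy_neg hpp fun t => A t.1 - A t.2
  simp only [← sub_eq_add_neg, ← sub_eq_neg_add, ← sub_add, neg_sub]
    at hkv hneg htriangle hcomm ⊢
  linarith

end Doubling

section JointFrostman

variable {Ω : Type*} [Fintype Ω] {p : Ω → ℝ} {X Y : Ω → ℤ} {n : ℕ} {C c s s₁ s₂ E L M : ℝ}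

/-- The joint Frostman condition for a pair of integer random variables, thought of as `2 ^ n` times
real ones. -/
def IsJointFrostman (p : Ω → ℝ) (X Y : Ω → ℤ) (n : ℕ) (C s₁ s₂ : ℝ) : Prop :=
  ∀ x y R R' : ℝ, 1 ≤ R → 1 ≤ R' →
    prob p {ω | |(X ω : ℝ) - x| ≤ R ∧ |(Y ω : ℝ) - y| ≤ R'} ≤
      C * (R / 2 ^ n) ^ s₁ * (R' / 2 ^ n) ^ s₂

lemma IsJointFrostman.symm (h : IsJointFrostman p X Y n C s₁ s₂) :
    IsJointFrostman p Y X n C s₂ s₁ := fun x y R R' hR hR' => by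
  simpa only [and_comm, mul_right_comm] using h y x R' R hR' hR

lemma IsJointFrostman.isFrostman_left (h : IsJointFrostman p X Y n C s₁ s₂)
    (hp : p ∈ stdSimplex ℝ Ω) (hC : 0 ≤ C) (hc : 1 ≤ c) (hs₂ : s₂ ≤ 1)
    (hY : ∀ ω, p ω ≠ 0 → |(Y ω : ℝ)| ≤ c * 2 ^ n) : IsFrostman p X n (C * c) s₁ := by
  intro x R hR
  have hpow : (1 : ℝ) ≤ 2 ^ n := one_le_pow₀ one_le_two
  calc prob p {ω | |(X ω : ℝ) - x| ≤ R}
      ≤ prob p {ω | |(X ω : ℝ) - x| ≤ R ∧ |(Y ω : ℝ) - 0| ≤ c * 2 ^ n} :=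
        prob_mono hp fun ω hω h => ⟨h, by simpa using hY ω hω⟩
    _ ≤ C * (R / 2 ^ n) ^ s₁ * (c * 2 ^ n / 2 ^ n) ^ s₂ :=
        h x 0 R _ hR (one_le_mul_of_one_le_of_one_le hc hpow)
    _ = C * (R / 2 ^ n) ^ s₁ * c ^ s₂ := by rw [mul_div_cancel_right₀ _ (by positivity)]
    _ ≤ C * (R / 2 ^ n) ^ s₁ * c ^ (1 : ℝ) := by gcongr
    _ = C * c * (R / 2 ^ n) ^ s₁ := by rw [Real.rpow_one, mul_right_comm]

lemma IsJointFrostman.isFrostman_condWeight (h : IsJointFrostman p X Y n C s₁ s₂)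
    (hp : p ∈ stdSimplex ℝ Ω) (y : ℤ) :
    IsFrostman (condWeight p Y y) X n (C * (1 / 2 ^ n) ^ s₂ / law p Y y) s₁ := by
  intro x R hR
  rw [prob_condWeight, div_mul_eq_mul_div, mul_right_comm]
  refine div_le_div_of_nonneg_right ((prob_mono hp ?_).trans (h x y R 1 hR le_rfl))
    (law_nonneg hp Y y)
  rintro ω - ⟨hX, rfl : Y ω = y⟩
  exact ⟨hX, by simp⟩

lemma IsJointFrostman.le_entropy_condWeight (h : IsJointFrostman p X Y n C s₁ s₂)
    (hp : p ∈ stdSimplex ℝ Ω) (hC : 0 < C) {t : Ω} (ht : p t ≠ 0) :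
    (s₁ + s₂) * n - logb 2 C + logb 2 (law p Y (Y t)) ≤ entropy (condWeight p Y (Y t)) X := by
  have hlaw := law_pos hp Y ht
  have hfibre := (h.isFrostman_condWeight hp (Y t)).le_entropy (condWeight_mem_stdSimplex hp Y ht)
    (by positivity) le_rfl fun ω ω' _ _ (he : X ω = X ω') => by simp [he]
  rw [Real.logb_div (by positivity) hlaw.ne', logb_mul_div_two_pow_rpow n s₂ hC one_pos,
    Real.logb_one] at hfibre
  linarith

lemma IsJointFrostman.le_entropy (h : IsJointFrostman p X Y n C s₁ s₂) (hp : p ∈ stdSimplex ℝ Ω)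
    (hC : 0 < C) : (s₁ + s₂) * n - logb 2 C ≤ entropy p fun ω => (X ω, Y ω) := by
  have hle := le_sum_mul hp
    (f := fun t => entropy (condWeight p Y (Y t)) X - logb 2 (law p Y (Y t)))
    fun t ht => le_sub_iff_add_le.2 (h.le_entropy_condWeight hp hC ht)
  simp only [mul_sub, sum_sub_distrib, sum_mul_entropy_condWeight hp] at hle
  have hY : entropy p Y = -∑ t, p t * logb 2 (law p Y (Y t)) := by
    simp only [entropy, mul_neg, sum_neg_distrib]
  linarith

lemma IsFrostman.le_neg_logb_law (hF : IsFrostman p X n L s) (hp : p ∈ stdSimplex ℝ Ω) (hL : 0 < L)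
    {t : Ω} (ht : p t ≠ 0) : s * n - logb 2 L ≤ -logb 2 (law p X (X t)) := by
  have hlaw : law p X (X t) ≤ L * (1 / 2 ^ n) ^ s :=
    (law_le_prob hp fun ω _ he => by simp [he]).trans (hF (X t) 1 le_rfl)
  have hlog := Real.logb_le_logb_of_le one_lt_two (law_pos hp X ht) hlaw
  rw [logb_mul_div_two_pow_rpow n s hL one_pos, Real.logb_one] at hlog
  linarith

lemma IsFrostman.change_exponent (hF : IsFrostman p X n L s₁) (hp : p ∈ stdSimplex ℝ Ω)
    (hL : 0 ≤ L) (hE : 0 ≤ E) (hs₁ : (s - s₁) * n ≤ E) (hs : 0 ≤ s) (hM : 1 ≤ M)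
    (hLM : L * 2 ^ E ≤ M) : IsFrostman p X n M s := by
  intro x R hR
  set ρ := R / 2 ^ n with hρ
  have hρ0 : 0 < ρ := by positivity
  rcases le_total 1 ρ with hρ1 | hρ1
  · exact (prob_le_one hp _).trans
      (one_le_mul_of_one_le_of_one_le hM (Real.one_le_rpow hρ1 hs))
  have hratio : ρ ^ (s₁ - s) ≤ 2 ^ E := by
    rcases le_total s s₁ with h | h
    · exact (Real.rpow_le_one hρ0.le hρ1 (by linarith)).trans (Real.one_le_rpow one_le_two hE)
    · calc ρ ^ (s₁ - s) ≤ (1 / 2 ^ n) ^ (s₁ - s) :=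
            Real.rpow_le_rpow_of_nonpos (by positivity) (by rw [hρ]; gcongr) (by linarith)
        _ = 2 ^ ((s - s₁) * n) := by
            rw [one_div, ← Real.rpow_natCast, ← Real.rpow_neg two_pos.le,
              ← Real.rpow_mul two_pos.le]
            ring_nf
        _ ≤ 2 ^ E := Real.rpow_le_rpow_of_exponent_le one_le_two hs₁
  calc prob p {ω | |(X ω : ℝ) - x| ≤ R} ≤ L * ρ ^ s₁ := hF x R hR
    _ = L * ρ ^ (s₁ - s) * ρ ^ s := by rw [mul_assoc, ← Real.rpow_add hρ0, sub_add_cancel]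
    _ ≤ L * 2 ^ E * ρ ^ s := by gcongr
    _ ≤ M * ρ ^ s := by gcongr

end JointFrostman

section PathExcess

variable {Ω S S' G : Type*} [Fintype Ω] [AddCommGroup G] {p : Ω → ℝ} {X : Ω → S} {Y : Ω → S'}
  {t : Ω}

/-- How much the entropy of the sum of the end points of a random path of length three with middle
edge `t` exceeds the entropies of the end points themselves. -/
noncomputable def pathExcess (p : Ω → ℝ) (X : Ω → S) (Y : Ω → S') (A B : Ω → G) (t : Ω) : ℝ :=
  2 * entropy (fibreProd p X Y t) (fun u => A u.1 + B u.2) - entropy (condWeight p Y (Y t)) A -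
    entropy (condWeight p X (X t)) B

lemma pathExcess_nonneg (hp : p ∈ stdSimplex ℝ Ω) (X : Ω → S) (Y : Ω → S') (A B : Ω → G)
    (ht : p t ≠ 0) : 0 ≤ pathExcess p X Y A B t := by
  have hY := condWeight_mem_stdSimplex hp Y ht
  have hX := condWeight_mem_stdSimplex hp X ht
  rw [pathExcess, fibreProd]
  linarith [entropy_left_le_add hY hX A B, entropy_right_le_add hY hX A B]

lemma entropy_condWeight_add_self_le (hp : p ∈ stdSimplex ℝ Ω) (X : Ω → S) (Y : Ω → S')
    (A B : Ω → G) (ht : p t ≠ 0) :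
    entropy (condWeight p Y (Y t) ×ˢ condWeight p Y (Y t)) (fun u => A u.1 + A u.2) ≤
      entropy (condWeight p Y (Y t)) A + pathExcess p X Y A B t := by
  have hle := entropy_add_self_add_le (condWeight_mem_stdSimplex hp Y ht)
    (condWeight_mem_stdSimplex hp X ht) A B
  rw [pathExcess, fibreProd]
  linarith

lemma entropy_condWeight_sub_self_le (hp : p ∈ stdSimplex ℝ Ω) (X : Ω → S) (Y : Ω → S')
    (A B : Ω → G) (ht : p t ≠ 0) :
    entropy (condWeight p Y (Y t) ×ˢ condWeight p Y (Y t)) (fun u => A u.1 - A u.2) ≤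
      entropy (condWeight p Y (Y t)) A + pathExcess p X Y A B t := by
  have hle := entropy_sub_self_add_le (condWeight_mem_stdSimplex hp Y ht)
    (condWeight_mem_stdSimplex hp X ht) A B
  rw [pathExcess, fibreProd]
  linarith

lemma sum_mul_pathExcess_le (hp : p ∈ stdSimplex ℝ Ω)
    (hinj : Set.InjOn (fun ω => (X ω, Y ω)) (Function.support p)) (A : S → G) (B : S' → G) :
    ∑ t, p t * pathExcess p X Y (fun ω => A (X ω)) (fun ω => B (Y ω)) t ≤
      6 * entropy p (fun ω => A (X ω) + B (Y ω)) + 8 * (entropy p X + entropy p Y) -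
        8 * entropy p (fun ω => (X ω, Y ω)) -
        3 * (entropy p (fun ω => A (X ω)) + entropy p fun ω => B (Y ω)) := by
  have hpath := entropy_pathWeight_add_le hp hinj A B
  have hmixture := sum_mul_entropy_le (r := p) hp
    (fun _ => fibreProd_mem_stdSimplex hp X Y) fun _ u => A (X u.1) + B (Y u.2)
  have hleft := entropy_prodMk_le_add_entropy_sub hp Y X A
  have hright := entropy_prodMk_le_add_entropy_sub hp X Y B
  rw [entropy_prod_swap hp Y X, entropy_prod_swap hp Y] at hleft
  rw [entropy_prod_swap hp X fun ω => B (Y ω)] at hright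
  simp only [pathExcess, mul_sub, sum_sub_distrib, mul_left_comm _ (2 : ℝ), ← mul_sum,
    sum_mul_entropy_condWeight hp]
  rw [pathWeight] at hpath
  linarith

end PathExcess

section CriticalPair

variable {Ω : Type*} [Fintype Ω] {p : Ω → ℝ} {X Y : Ω → ℤ} {n : ℕ} {C c s s₁ s₂ E : ℝ}

/-- A jointly Frostman pair of bounded integer random variables at scale `2 ^ n`, determined by the
sample point, for which `X`, `Y` and `X + Y` have nearly the least entropy `s * n` that the Frostman
condition could allow, up to an error `E`. -/
structure IsCriticalPair (p : Ω → ℝ) (X Y : Ω → ℤ) (n : ℕ) (C c s s₁ s₂ E : ℝ) : Prop where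
  mem_stdSimplex : p ∈ stdSimplex ℝ Ω
  injOn : Set.InjOn (fun ω => (X ω, Y ω)) (Function.support p)
  abs_left_le : ∀ ω, p ω ≠ 0 → |(X ω : ℝ)| ≤ c * 2 ^ n
  abs_right_le : ∀ ω, p ω ≠ 0 → |(Y ω : ℝ)| ≤ c * 2 ^ n
  isJointFrostman : IsJointFrostman p X Y n C s₁ s₂
  one_le_frostman : 1 ≤ C
  one_le_bound : 1 ≤ c
  left_le_one : s₁ ≤ 1
  right_le_one : s₂ ≤ 1
  two_mul_le : 2 * s ≤ s₁ + s₂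
  logb_le : logb 2 (C * c) ≤ E
  entropy_add_entropy_le : entropy p X + entropy p Y ≤ 2 * (s * n + E)
  entropy_add_le : entropy p (fun ω => X ω + Y ω) ≤ s * n + E

namespace IsCriticalPair

lemma symm (h : IsCriticalPair p X Y n C c s s₁ s₂ E) : IsCriticalPair p Y X n C c s s₂ s₁ E where
  mem_stdSimplex := h.mem_stdSimplex
  injOn ω hω ω' hω' he := h.injOn hω hω' (Prod.ext (congrArg Prod.snd he) (congrArg Prod.fst he))
  abs_left_le := h.abs_right_le
  abs_right_le := h.abs_left_le
  isJointFrostman := h.isJointFrostman.symm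
  one_le_frostman := h.one_le_frostman
  one_le_bound := h.one_le_bound
  left_le_one := h.right_le_one
  right_le_one := h.left_le_one
  two_mul_le := by linarith [h.two_mul_le]
  logb_le := h.logb_le
  entropy_add_entropy_le := by linarith [h.entropy_add_entropy_le]
  entropy_add_le := by simpa only [add_comm] using h.entropy_add_le

lemma logb_nonneg (h : IsCriticalPair p X Y n C c s s₁ s₂ E) : 0 ≤ logb 2 C :=
  Real.logb_nonneg one_lt_two h.one_le_frostman

lemma logb_frostman_le (h : IsCriticalPair p X Y n C c s s₁ s₂ E) : logb 2 C ≤ E :=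
  (Real.logb_le_logb_of_le one_lt_two (by linarith [h.one_le_frostman])
    (le_mul_of_one_le_right (by linarith [h.one_le_frostman]) h.one_le_bound)).trans h.logb_le

lemma isFrostman_left (h : IsCriticalPair p X Y n C c s s₁ s₂ E) :
    IsFrostman p X n (C * c) s₁ :=
  h.isJointFrostman.isFrostman_left h.mem_stdSimplex (by linarith [h.one_le_frostman])
    h.one_le_bound h.right_le_one h.abs_right_le

lemma constant_pos (h : IsCriticalPair p X Y n C c s s₁ s₂ E) : 0 < C * c :=
  mul_pos (by linarith [h.one_le_frostman]) (by linarith [h.one_le_bound])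

lemma le_entropy_left (h : IsCriticalPair p X Y n C c s s₁ s₂ E) : s₁ * n - E ≤ entropy p X := by
  have hle := h.isFrostman_left.le_entropy h.mem_stdSimplex h.constant_pos le_rfl
    fun ω ω' _ _ (he : X ω = X ω') => by simp [he]
  rw [Real.logb_one] at hle
  linarith [h.logb_le]

lemma mul_natCast_le (h : IsCriticalPair p X Y n C c s s₁ s₂ E) :
    2 * (s * n) ≤ s₁ * n + s₂ * n := by
  linarith [mul_le_mul_of_nonneg_right h.two_mul_le n.cast_nonneg]

lemma le_entropy_prodMk (h : IsCriticalPair p X Y n C c s s₁ s₂ E) :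
    2 * (s * n) - E ≤ entropy p fun ω => (X ω, Y ω) := by
  have hle := h.isJointFrostman.le_entropy h.mem_stdSimplex (by linarith [h.one_le_frostman])
  linarith [h.mul_natCast_le, h.logb_frostman_le]

lemma le_entropy_right (h : IsCriticalPair p X Y n C c s s₁ s₂ E) :
    s * n - 2 * E ≤ entropy p Y := by
  have hpair := entropy_le_of_eq_comp h.mem_stdSimplex (g := fun ω => (X ω, Y ω))
    (f := fun ω => (X ω + Y ω, Y ω)) (fun v => (v.1 - v.2, v.2)) fun ω => by simp
  linarith [entropy_prod_le h.mem_stdSimplex (fun ω => X ω + Y ω) Y, h.le_entropy_prodMk,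
    h.entropy_add_le]

lemma entropy_left_le (h : IsCriticalPair p X Y n C c s s₁ s₂ E) :
    entropy p X ≤ s * n + 4 * E := by
  linarith [h.le_entropy_right, h.entropy_add_entropy_le]

lemma left_exponent_le (h : IsCriticalPair p X Y n C c s s₁ s₂ E) :
    s₁ * n ≤ s * n + 5 * E := by
  linarith [h.le_entropy_left, h.entropy_left_le]

lemma le_left_exponent (h : IsCriticalPair p X Y n C c s s₁ s₂ E) :
    s * n - 5 * E ≤ s₁ * n := by
  linarith [h.symm.left_exponent_le, h.mul_natCast_le]

lemma sum_mul_pathExcess_le (h : IsCriticalPair p X Y n C c s s₁ s₂ E) {A B : ℤ → ℤ}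
    (hAB : entropy p (fun ω => A (X ω) + B (Y ω)) ≤ s * n + E)
    (hA : entropy p X - entropy p (fun ω => A (X ω)) ≤ E)
    (hB : entropy p Y - entropy p (fun ω => B (Y ω)) ≤ E) :
    ∑ t, p t * pathExcess p X Y (fun ω => A (X ω)) (fun ω => B (Y ω)) t ≤ 30 * E := by
  have hle := FiniteEntropy.sum_mul_pathExcess_le h.mem_stdSimplex h.injOn A B
  linarith [h.entropy_add_entropy_le, h.le_entropy_prodMk]

lemma sum_mul_fibreDefect_le (h : IsCriticalPair p X Y n C c s s₁ s₂ E) :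
    ∑ t, p t * (entropy (condWeight p Y (Y t)) X - 2 * logb 2 (law p Y (Y t))) ≤
      s₁ * n + 2 * (s₂ * n) + 11 * E := by
  have hY : entropy p Y = -∑ t, p t * logb 2 (law p Y (Y t)) := by
    simp only [entropy, mul_neg, sum_neg_distrib]
  simp only [mul_sub, sum_sub_distrib, sum_mul_entropy_condWeight h.mem_stdSimplex,
    mul_left_comm _ (2 : ℝ), ← mul_sum]
  linarith [entropy_prod_le h.mem_stdSimplex X Y, h.entropy_add_entropy_le,
    h.symm.entropy_left_le, h.symm.le_left_exponent, h.mul_natCast_le]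

/-- Markov's inequality, for a sum of quantities whose averages are close to lower bounds valid at
every `t`. -/
lemma exists_fibre (h : IsCriticalPair p X Y n C c s s₁ s₂ E) {A B : ℤ → ℤ}
    (hAB : entropy p (fun ω => A (X ω) + B (Y ω)) ≤ s * n + E)
    (hA : entropy p X - entropy p (fun ω => A (X ω)) ≤ E)
    (hB : entropy p Y - entropy p (fun ω => B (Y ω)) ≤ E) :
    ∃ t, p t ≠ 0 ∧ pathExcess p X Y X Y t ≤ 75 * E ∧
      pathExcess p X Y (fun ω => A (X ω)) (fun ω => B (Y ω)) t ≤ 75 * E ∧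
      -logb 2 (law p Y (Y t)) ≤ s₂ * n + 76 * E ∧
      entropy (condWeight p Y (Y t)) X ≤ s * n + 82 * E ∧
      entropy (condWeight p Y (Y t)) X - entropy (condWeight p Y (Y t)) (fun ω => A (X ω)) ≤
        75 * E := by
  have hp := h.mem_stdSimplex
  have hE : 0 ≤ E := h.logb_nonneg.trans h.logb_frostman_le
  have hsum := h.sum_mul_pathExcess_le (A := id) (B := id) h.entropy_add_le (by simpa using hE)
    (by simpa using hE)
  have hsum' := h.sum_mul_pathExcess_le hAB hA hB
  have hdefect := h.sum_mul_fibreDefect_le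
  have hloss : ∑ t, p t * (entropy (condWeight p Y (Y t)) X -
      entropy (condWeight p Y (Y t)) (fun ω => A (X ω))) ≤ E := by
    simp only [mul_sub, sum_sub_distrib, sum_mul_entropy_condWeight hp]
    have hrecover := entropy_prodMk_le_add_entropy_sub hp Y X A
    rw [entropy_prod_swap hp Y X, entropy_prod_swap hp Y] at hrecover
    linarith
  obtain ⟨t, ht, hle⟩ := exists_le_of_sum_mul_le hp
    (f := fun t => pathExcess p X Y X Y t +
      pathExcess p X Y (fun ω => A (X ω)) (fun ω => B (Y ω)) t +
      (entropy (condWeight p Y (Y t)) X - 2 * logb 2 (law p Y (Y t))) +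
      (entropy (condWeight p Y (Y t)) X - entropy (condWeight p Y (Y t)) fun ω => A (X ω)))
    (B := s₁ * n + 2 * (s₂ * n) + 72 * E) <| by
      simp only [id] at hsum
      simp only [mul_add, sum_add_distrib]
      linarith
  have hexcess := pathExcess_nonneg hp X Y X Y ht
  have hexcess' := pathExcess_nonneg hp X Y (fun ω => A (X ω)) (fun ω => B (Y ω)) ht
  have hlower := h.isJointFrostman.le_entropy_condWeight hp (by linarith [h.one_le_frostman]) ht
  have hlaw := h.symm.isFrostman_left.le_neg_logb_law hp h.constant_pos ht
  have hdrop := entropy_le_of_eq_comp (condWeight_mem_stdSimplex hp Y ht) (f := X) A fun _ => rfl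
  have hconst := h.logb_frostman_le
  have hconst' := h.logb_le
  have hexp := h.left_exponent_le
  exact ⟨t, ht, by linarith, by linarith, by linarith, by linarith, by linarith⟩

theorem exists_isFrostman_fibre (h : IsCriticalPair p X Y n C c s s₁ s₂ E) (hs : 0 ≤ s)
    {A B : ℤ → ℤ} (hAB : entropy p (fun ω => A (X ω) + B (Y ω)) ≤ s * n + E)
    (hA : entropy p X - entropy p (fun ω => A (X ω)) ≤ E)
    (hB : entropy p Y - entropy p (fun ω => B (Y ω)) ≤ E) :
    ∃ μ ∈ stdSimplex ℝ Ω, (∀ ω, μ ω ≠ 0 → |(X ω : ℝ)| ≤ c * 2 ^ n) ∧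
      IsFrostman μ X n (2 ^ (400 * E)) s ∧
      entropy (μ ×ˢ μ) (fun t => X t.1 + X t.2) ≤ s * n + 400 * E ∧
      entropy (μ ×ˢ μ) (fun t => X t.1 - X t.2) ≤ s * n + 400 * E ∧
      entropy ((μ ×ˢ μ) ×ˢ (μ ×ˢ μ))
        (fun u => (A (X u.1.1) - A (X u.1.2)) - (A (X u.2.1) - A (X u.2.2))) ≤ s * n + 400 * E ∧
      s * n - 400 * E ≤ entropy μ fun ω => A (X ω) := by
  have hp := h.mem_stdSimplex
  have hC : 0 < C := by linarith [h.one_le_frostman]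
  have hconst := h.logb_frostman_le
  have hE : 0 ≤ E := h.logb_nonneg.trans hconst
  obtain ⟨t, ht, hexcess, hexcess', hlaw, hupper, hloss⟩ := h.exists_fibre hAB hA hB
  have hμ := condWeight_mem_stdSimplex hp Y ht
  have hlower := h.isJointFrostman.le_entropy_condWeight hp hC ht
  have hexp := h.le_left_exponent
  refine ⟨_, hμ, fun ω hω => h.abs_left_le ω (of_condWeight_ne_zero hω).2, ?_, ?_, ?_, ?_, ?_⟩
  · have hlaw0 := law_pos hp Y ht
    refine (h.isJointFrostman.isFrostman_condWeight hp (Y t)).change_exponent hμ (E := 5 * E)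
      (by positivity) (by positivity) (by linarith) hs
      (Real.one_le_rpow one_le_two (by positivity)) ?_
    rw [← Real.logb_le_iff_le_rpow one_lt_two (by positivity), Real.logb_mul (by positivity)
      (by positivity), Real.logb_div (by positivity) hlaw0.ne',
      logb_mul_div_two_pow_rpow n s₂ hC one_pos, Real.logb_rpow two_pos one_lt_two.ne',
      Real.logb_one]
    linarith
  · linarith [entropy_condWeight_add_self_le hp X Y X Y ht]
  · linarith [entropy_condWeight_sub_self_le hp X Y X Y ht]
  · linarith [entropy_condWeight_sub_self_le hp X Y (fun ω => A (X ω)) (fun ω => B (Y ω)) ht,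
      entropy_sub_sub_sub_add_le hμ fun ω => A (X ω),
      entropy_le_of_eq_comp hμ (f := X) A fun _ => rfl]
  · linarith [h.logb_le]

end IsCriticalPair

end CriticalPair

section FloorSqLoss

open Filter Topology

variable {Ω : Type*} [Fintype Ω] {p : Ω → ℝ} {X : Ω → ℤ} {a c r : ℝ} {n : ℕ}

lemma abs_abs_sub_abs_le_of_floorSq_eq (ha : a ≠ 0) (hr : 0 < r) {x y : ℤ}
    (hx : r * 2 ^ n ≤ |(x : ℝ)|) (h : floorSq a n y = floorSq a n x) :
    |(|(y : ℝ)| - |(x : ℝ)|)| ≤ 1 / (|a| * r) := by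
  have h2n : (0 : ℝ) < 2 ^ n := by positivity
  have hsq : |a * (y : ℝ) ^ 2 / 2 ^ n - a * (x : ℝ) ^ 2 / 2 ^ n| ≤ 1 := by
    have hlow := floorSq_le a n y
    have hupp := lt_floorSq_add_one a n y
    rw [h] at hlow hupp
    rw [abs_le]
    constructor <;> linarith [floorSq_le a n x, lt_floorSq_add_one a n x]
  have hfactor : a * (y : ℝ) ^ 2 / 2 ^ n - a * (x : ℝ) ^ 2 / 2 ^ n =
      a * ((|(y : ℝ)| - |(x : ℝ)|) * (|(y : ℝ)| + |(x : ℝ)|)) / 2 ^ n := by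
    rw [← sub_div, ← mul_sub, ← sq_abs (y : ℝ), ← sq_abs (x : ℝ), sq_sub_sq, mul_comm (_ + _)]
  rw [hfactor, abs_div, abs_mul, abs_mul, abs_of_pos h2n, div_le_one h2n,
    abs_of_nonneg (by positivity : 0 ≤ |(y : ℝ)| + |(x : ℝ)|)] at hsq
  rw [le_div_iff₀ (mul_pos (abs_pos.2 ha) hr)]
  refine le_of_mul_le_mul_right ?_ h2n
  calc |(|(y : ℝ)| - |(x : ℝ)|)| * (|a| * r) * 2 ^ n
      = |a| * (|(|(y : ℝ)| - |(x : ℝ)|)| * (r * 2 ^ n)) := by ring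
    _ ≤ |a| * (|(|(y : ℝ)| - |(x : ℝ)|)| * (|(y : ℝ)| + |(x : ℝ)|)) := by
        gcongr
        linarith [abs_nonneg (y : ℝ)]
    _ ≤ 1 * 2 ^ n := by linarith

lemma card_filter_floorSq_eq_le (ha : a ≠ 0) (hr : 0 < r) (A : Finset ℤ) {x : ℤ}
    (hx : r * 2 ^ n ≤ |(x : ℝ)|) :
    (#{y ∈ A | floorSq a n y = floorSq a n x} : ℝ) ≤ 2 * (2 * (1 / (|a| * r)) + 1) := by
  have hsub : {y ∈ A | floorSq a n y = floorSq a n x} ⊆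
      intBall x (1 / (|a| * r)) ∪ intBall (-x) (1 / (|a| * r)) := fun y hy => by
    have hle := abs_abs_sub_abs_le_of_floorSq_eq ha hr hx (mem_filter.1 hy).2
    rw [mem_union, mem_intBall, mem_intBall, Int.cast_neg]
    rcases abs_choice (x : ℝ) with hx' | hx' <;> rcases abs_choice (y : ℝ) with hy' | hy' <;>
      rw [hx', hy'] at hle
    · exact .inl hle
    · exact .inr (by rwa [abs_sub_comm, sub_neg_eq_add, add_comm, ← sub_neg_eq_add] at hle)
    · exact .inr hle
    · exact .inl (by rwa [neg_sub_neg, abs_sub_comm] at hle)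
  have hd : 0 ≤ 1 / (|a| * r) := by positivity
  calc (#{y ∈ A | floorSq a n y = floorSq a n x} : ℝ)
      ≤ #(intBall x (1 / (|a| * r))) + #(intBall (-x) (1 / (|a| * r))) := mod_cast
        (card_le_card hsub).trans (card_union_le _ _)
    _ ≤ 2 * (2 * (1 / (|a| * r)) + 1) := by
        linarith [card_intBall_le x hd, card_intBall_le (-x) hd]

lemma entropy_sub_entropy_floorSq_le (hp : p ∈ stdSimplex ℝ Ω) (ha : a ≠ 0) (hc : 0 ≤ c)
    (hr : 0 < r) (hX : ∀ ω, p ω ≠ 0 → |(X ω : ℝ)| ≤ c * 2 ^ n) :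
    entropy p X - entropy p (fun ω => floorSq a n (X ω)) ≤
      logb 2 (2 * (2 * (1 / (|a| * r)) + 1)) +
        prob p {ω | |(X ω : ℝ)| < r * 2 ^ n} * logb 2 (2 * (c * 2 ^ n) + 1) := by
  set E : Set Ω := {ω | |(X ω : ℝ)| < r * 2 ^ n}
  set M := logb 2 (2 * (2 * (1 / (|a| * r)) + 1))
  set M' := logb 2 (2 * (c * 2 ^ n) + 1)
  have hd : 0 ≤ 1 / (|a| * r) := by positivity
  have hM : 0 ≤ M := Real.logb_nonneg one_lt_two (by linarith)
  have hcn : 0 ≤ c * 2 ^ n := by positivity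
  let F : ℤ → Finset ℤ := fun v => {x ∈ intBall 0 (c * 2 ^ n) | floorSq a n x = v}
  have hmem : ∀ ω, p ω ≠ 0 → X ω ∈ F (floorSq a n (X ω)) := fun ω h0 =>
    mem_filter.2 ⟨mem_intBall.2 (by simpa using hX ω h0), rfl⟩
  have hcard : ∀ ω, p ω ≠ 0 →
      logb 2 #(F (floorSq a n (X ω))) ≤ M + E.indicator (fun _ => M') ω := fun ω h0 => by
    have hpos : (0 : ℝ) < #(F (floorSq a n (X ω))) :=
      Nat.cast_pos.2 (card_pos.2 ⟨_, hmem ω h0⟩)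
    by_cases hω : ω ∈ E
    · rw [Set.indicator_of_mem hω]
      refine (Real.logb_le_logb_of_le one_lt_two hpos ?_).trans (le_add_of_nonneg_left hM)
      exact (Nat.cast_le.2 (card_filter_le _ _)).trans (card_intBall_le 0 hcn)
    · rw [Set.indicator_of_notMem hω, add_zero]
      exact Real.logb_le_logb_of_le one_lt_two hpos
        (card_filter_floorSq_eq_le ha hr _ (not_lt.1 hω))
  have hsum : ∑ ω, p ω * (M + E.indicator (fun _ => M') ω) = M + prob p E * M' := by
    simp only [mul_add, sum_add_distrib, sum_mul_const hp, prob, sum_mul, ← Set.indicator_mul_const,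
      ← Set.indicator_mul_right]
  linarith [entropy_le_prod_left hp X fun ω => floorSq a n (X ω),
    entropy_prod_le_add_sum_logb_card hp hmem, sum_mul_le_sum_mul hp hcard]

lemma exists_pos_mul_rpow_le (K : ℝ) {σ δ : ℝ} (hσ : 0 < σ) (hδ : 0 < δ) :
    ∃ r : ℝ, 0 < r ∧ r < 1 ∧ K * r ^ σ ≤ δ := by
  have htendsto : Tendsto (fun r : ℝ => K * r ^ σ) (𝓝[>] 0) (𝓝 0) :=
    (((Real.continuous_rpow_const hσ.le).const_mul K).tendsto' 0 0
      (by simp [Real.zero_rpow hσ.ne'])).mono_left nhdsWithin_le_nhds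
  obtain ⟨r, hle, h0, h1⟩ :=
    ((htendsto.eventually_le_const hδ).and (Ioo_mem_nhdsGT one_pos)).exists
  exact ⟨r, h0, h1, hle⟩

lemma IsFrostman.prob_abs_lt_le {K σ δ s : ℝ} (hF : IsFrostman p X n K s)
    (hp : p ∈ stdSimplex ℝ Ω) (hK : 0 ≤ K) (hs : σ ≤ s) (hr : 0 < r) (hr1 : r ≤ 1)
    (hrn : 1 ≤ r * 2 ^ n) (hδ : K * r ^ σ ≤ δ) :
    prob p {ω | |(X ω : ℝ)| < r * 2 ^ n} ≤ δ := by
  refine (prob_mono hp fun ω _ (hω : |(X ω : ℝ)| < _) => ?_).trans ((hF 0 (r * 2 ^ n) hrn).trans ?_)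
  · simpa using hω.le
  · rw [mul_div_cancel_right₀ _ (by positivity)]
    exact (mul_le_mul_of_nonneg_left
      (Real.rpow_le_rpow_of_exponent_ge hr hr1 hs) hK).trans hδ

/-- Squaring is two-to-one up to bounded error away from the origin, and the Frostman condition
gives the neighbourhood `|X| < r * 2 ^ n` of the origin a mass that is small with `r`. -/
lemma eventually_entropy_sub_entropy_floorSq_le.{u} {K σ δ : ℝ} (ha : a ≠ 0) (hc : 1 ≤ c)
    (hK : 0 ≤ K) (hσ : 0 < σ) (hδ : 0 < δ) :
    ∀ᶠ n : ℕ in atTop, ∀ {Ω : Type u} [Fintype Ω] {p : Ω → ℝ} {X : Ω → ℤ} {s : ℝ},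
      p ∈ stdSimplex ℝ Ω → (∀ ω, p ω ≠ 0 → |(X ω : ℝ)| ≤ c * 2 ^ n) → IsFrostman p X n K s →
      σ ≤ s → entropy p X - entropy p (fun ω => floorSq a n (X ω)) ≤ δ * n := by
  obtain ⟨r, hr, hr1, hrδ⟩ := exists_pos_mul_rpow_le K hσ (half_pos hδ)
  filter_upwards [eventually_le_mul_natCast (logb 2 (2 * (2 * (1 / (|a| * r)) + 1)) +
      δ / 2 * logb 2 (3 * c)) (half_pos hδ),
    (tendsto_pow_atTop_atTop_of_one_lt (one_lt_two : (1 : ℝ) < 2)).eventually_ge_atTop (1 / r)]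
    with n hn hrn Ω _ p X s hp hX hF hs
  rw [div_le_iff₀' hr] at hrn
  have h2n : (1 : ℝ) ≤ 2 ^ n := one_le_pow₀ one_le_two
  have hcn : 1 ≤ c * 2 ^ n := one_le_mul_of_one_le_of_one_le hc h2n
  have hprob := hF.prob_abs_lt_le hp hK hs hr hr1.le hrn hrδ
  have hrange : logb 2 (2 * (c * 2 ^ n) + 1) ≤ n + logb 2 (3 * c) := by
    have hlogb : logb 2 (2 ^ n * (3 * c)) = n + logb 2 (3 * c) := by
      rw [Real.logb_mul (by positivity) (by positivity), Real.logb_pow,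
        Real.logb_self_eq_one one_lt_two, mul_one]
    rw [← hlogb]
    exact Real.logb_le_logb_of_le one_lt_two (by positivity) (by linarith)
  have hmul := mul_le_mul hprob hrange (Real.logb_nonneg one_lt_two (by linarith)) (half_pos hδ).le
  linarith [entropy_sub_entropy_floorSq_le hp ha (by linarith) hr hX]

end FloorSqLoss

section DiagonalForms

open Filter

variable {a b c s C : ℝ}

/-- The entropy gain of diagonal quadratic forms, small enough that the fibre of a critical pair
with error `2 * diagonalGain s * n` violates the sum-product gain. -/
noncomputable def diagonalGain (s : ℝ) : ℝ :=
  min (sumProductGain s / 800) (s / 40)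

lemma diagonalGain_pos (hs : 0 < s) (hs1 : s < 1) : 0 < diagonalGain s :=
  lt_min (div_pos (sumProductGain_pos hs hs1) (by norm_num)) (by positivity)

lemma eight_hundred_mul_diagonalGain_le (s : ℝ) : 800 * diagonalGain s ≤ sumProductGain s := by
  linarith [min_le_left (sumProductGain s / 800) (s / 40), diagonalGain.eq_1 s]

lemma forty_mul_diagonalGain_le (s : ℝ) : 40 * diagonalGain s ≤ s := by
  linarith [min_le_right (sumProductGain s / 800) (s / 40), diagonalGain.eq_1 s]

theorem IsCriticalPair.eventually_lt_entropy_floorSq_add.{u} (hs : 0 < s) (hs1 : s < 1)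
    (ha : a ≠ 0) (hb : b ≠ 0) (hC : 1 ≤ C) (hc : 1 ≤ c) :
    ∀ᶠ n : ℕ in atTop, ∀ {Ω : Type u} [Fintype Ω] {p : Ω → ℝ} {X Y : Ω → ℤ} {s₁ s₂ : ℝ},
      IsCriticalPair p X Y n C c s s₁ s₂ (2 * diagonalGain s * n) →
      s * n + 2 * diagonalGain s * n <
        entropy p (fun ω => floorSq a n (X ω) + floorSq b n (Y ω)) := by
  have hε := diagonalGain_pos hs hs1
  have hCc : 0 ≤ C * c := by positivity
  filter_upwards [eventually_lt_max_entropy.{u} hs hs1 ha hc, eventually_gt_atTop 0,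
    eventually_entropy_sub_entropy_floorSq_le.{u} ha hc hCc (half_pos hs) hε,
    eventually_entropy_sub_entropy_floorSq_le.{u} hb hc hCc (half_pos hs) hε]
    with n hgain hn hlossX hlossY Ω _ p X Y s₁ s₂ h
  by_contra! hle
  have hn0 : (0 : ℝ) < n := Nat.cast_pos.2 hn
  have hεn : 0 ≤ diagonalGain s * n := by positivity
  have hs40 := mul_le_mul_of_nonneg_right (forty_mul_diagonalGain_le s) hn0.le
  have hE : 400 * (2 * diagonalGain s * n) ≤ sumProductGain s * n := by
    linarith [mul_le_mul_of_nonneg_right (eight_hundred_mul_diagonalGain_le s) hn0.le]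
  have hs₁ : s / 2 ≤ s₁ := le_of_mul_le_mul_right (by linarith [h.le_left_exponent]) hn0
  have hs₂ : s / 2 ≤ s₂ := le_of_mul_le_mul_right (by linarith [h.symm.le_left_exponent]) hn0
  obtain ⟨μ, hμ, hμX, hF, hadd, hsub, hsqsub, hsq⟩ := h.exists_isFrostman_fibre hs.le hle
    (by linarith [hlossX h.mem_stdSimplex h.abs_left_le h.isFrostman_left hs₁])
    (by linarith [hlossY h.mem_stdSimplex h.abs_right_le h.symm.isFrostman_left hs₂])
  have hF' : IsFrostman μ X n (2 ^ (sumProductGain s * n)) s := fun x R hR =>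
    (hF x R hR).trans (mul_le_mul_of_nonneg_right
      (Real.rpow_le_rpow_of_exponent_le one_le_two hE) (by positivity))
  refine (hgain hμ hμX hF' (by linarith)).not_ge (max_le (max_le ?_ ?_) ?_)
  · linarith
  · linarith
  · simp only [floorSqSub]
    linarith

end DiagonalForms

section PointMass

variable {Ω S T R : Type*} [MeasurableSpace Ω] {P : Measure Ω}

/-- The weights of the distribution of `F` on a finite space. -/
noncomputable def pointMass (P : Measure Ω) (F : Ω → T) (t : T) : ℝ :=
  P.real (F ⁻¹' {t})

lemma exists_eq_of_pointMass_ne_zero {F : Ω → T} {t : T} (h : pointMass P F t ≠ 0) :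
    ∃ ω, F ω = t :=
  nonempty_of_measureReal_ne_zero h

lemma entOf_comp_of_injective {φ : S → R} (hφ : Function.Injective φ) (f : Ω → S) :
    entOf P (fun ω => φ (f ω)) = entOf P f := by
  rw [entOf, ← hφ.tsum_eq, entOf]
  · have hfibre : ∀ v, (fun ω => φ (f ω)) ⁻¹' {φ v} = f ⁻¹' {v} := fun v => by
      ext ω
      simp [hφ.eq_iff]
    simp only [hfibre]
  · intro v hv
    by_contra hrange
    refine hv ?_
    have hempty : (fun ω => φ (f ω)) ⁻¹' {v} = ∅ :=
      Set.eq_empty_of_forall_notMem fun ω hω => hrange ⟨f ω, hω⟩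
    simp [hempty]

variable [IsProbabilityMeasure P] [Fintype T] [MeasurableSpace T] [MeasurableSingletonClass T]
  {F : Ω → T}

lemma prob_pointMass (hF : Measurable F) (E : Set T) :
    prob (pointMass P F) E = P.real (F ⁻¹' E) := by
  classical
  simp only [prob, Set.indicator_apply, ← sum_filter, pointMass]
  rw [sum_measureReal_preimage_singleton _ fun t _ => hF (measurableSet_singleton t)]
  simp

lemma pointMass_mem_stdSimplex (hF : Measurable F) : pointMass P F ∈ stdSimplex ℝ T := by
  refine ⟨fun t => measureReal_nonneg, ?_⟩
  have huniv := prob_pointMass (P := P) hF Set.univ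
  simpa [prob] using huniv

lemma entOf_comp (hF : Measurable F) (G : T → R) :
    entOf P (fun ω => G (F ω)) = entropy (pointMass P F) G := by
  classical
  have hlaw : ∀ v, (P ((fun ω => G (F ω)) ⁻¹' {v})).toReal = law (pointMass P F) G v :=
    fun v => (prob_pointMass hF {t | G t = v}).symm
  simp only [entOf, hlaw]
  rw [entropy, sum_mul_comp G (A := univ.image G) (fun t _ => mem_image_of_mem G (mem_univ t))
    (fun v => -logb 2 (law (pointMass P F) G v)), tsum_eq_sum (s := univ.image G)]
  · simp only [mul_neg]
  · intro v hv
    have hzero : law (pointMass P F) G v = 0 := by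
      rw [law, prob_pointMass hF, Set.eq_empty_of_forall_notMem (s := {t | G t = v}) fun t ht =>
        hv (ht ▸ mem_image_of_mem G (mem_univ t))]
      simp
    simp [hzero]

end PointMass

section Dyadic

variable {Ω : Type*} {X Y : Ω → ℝ} {n : ℕ} {a b c x y z : ℝ}

/-- The index of the dyadic interval of length `2 ^ (-n)` that contains `x`, so that
`Dn n x = dyadicFloor n x / 2 ^ n`. -/
noncomputable def dyadicFloor (n : ℕ) (x : ℝ) : ℤ :=
  ⌊2 ^ n * x⌋

lemma dyadicFloor_le (n : ℕ) (x : ℝ) : (dyadicFloor n x : ℝ) ≤ 2 ^ n * x :=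
  Int.floor_le _

lemma lt_dyadicFloor_add_one (n : ℕ) (x : ℝ) : 2 ^ n * x < dyadicFloor n x + 1 :=
  Int.lt_floor_add_one _

lemma measurable_dyadicFloor (n : ℕ) : Measurable (dyadicFloor n) :=
  Int.measurable_floor.comp (measurable_const_mul _)

lemma abs_dyadicFloor_le (n : ℕ) (hx : |x| ≤ c) : |(dyadicFloor n x : ℝ)| ≤ (c + 1) * 2 ^ n := by
  have h2n : (1 : ℝ) ≤ 2 ^ n := one_le_pow₀ one_le_two
  have hscaled : |2 ^ n * x| ≤ c * 2 ^ n := by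
    rw [abs_mul, abs_of_pos (by linarith), mul_comm]
    gcongr
  rw [abs_le] at hscaled ⊢
  constructor <;> linarith [dyadicFloor_le n x, lt_dyadicFloor_add_one n x]

lemma abs_dyadicFloor_add_sub_le (n : ℕ) (x y : ℝ) :
    |((dyadicFloor n x + dyadicFloor n y : ℤ) : ℝ) - dyadicFloor n (x + y)| ≤ 2 := by
  have hlow := dyadicFloor_le n (x + y)
  have hupp := lt_dyadicFloor_add_one n (x + y)
  rw [mul_add] at hlow hupp
  push_cast
  rw [abs_le]
  constructor <;> linarith [dyadicFloor_le n x, lt_dyadicFloor_add_one n x,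
    dyadicFloor_le n y, lt_dyadicFloor_add_one n y]

lemma abs_floorSq_dyadicFloor_sub_le (a : ℝ) (n : ℕ) (hx : |x| ≤ c) :
    |floorSq a n (dyadicFloor n x) - 2 ^ n * (a * x ^ 2)| ≤ |a| * (2 * c + 1) + 1 := by
  set I : ℝ := (dyadicFloor n x : ℝ)
  have h2n : (1 : ℝ) ≤ 2 ^ n := one_le_pow₀ one_le_two
  have hround : |floorSq a n (dyadicFloor n x) - a * I ^ 2 / 2 ^ n| ≤ 1 := by
    rw [abs_le]
    constructor <;> linarith [floorSq_le a n (dyadicFloor n x),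
      lt_floorSq_add_one a n (dyadicFloor n x)]
  have hfloor : |I - 2 ^ n * x| ≤ 1 := by
    rw [abs_le]
    constructor <;> linarith [dyadicFloor_le n x, lt_dyadicFloor_add_one n x]
  have hsum : |I + 2 ^ n * x| ≤ (2 * c + 1) * 2 ^ n := by
    have hscaled : |2 ^ n * x| ≤ c * 2 ^ n := by
      rw [abs_mul, abs_of_pos (by linarith), mul_comm]
      gcongr
    linarith [abs_add_le I (2 ^ n * x), abs_dyadicFloor_le n hx]
  have hsq : |a * I ^ 2 / 2 ^ n - 2 ^ n * (a * x ^ 2)| ≤ |a| * (2 * c + 1) := by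
    have hfactor : a * I ^ 2 / 2 ^ n - 2 ^ n * (a * x ^ 2) =
        a * ((I - 2 ^ n * x) * (I + 2 ^ n * x) / 2 ^ n) := by
      field_simp
      ring
    rw [hfactor, abs_mul, abs_div, abs_mul, abs_of_pos (by positivity : (0 : ℝ) < 2 ^ n)]
    refine mul_le_mul_of_nonneg_left ?_ (abs_nonneg a)
    rw [div_le_iff₀ (by positivity)]
    exact (mul_le_of_le_one_left (abs_nonneg _) hfloor).trans hsum
  linarith [abs_sub_le (floorSq a n (dyadicFloor n x) : ℝ) (a * I ^ 2 / 2 ^ n)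
    (2 ^ n * (a * x ^ 2))]

lemma abs_floorSq_add_floorSq_sub_le (a b : ℝ) (n : ℕ) (hx : |x| ≤ c) (hy : |y| ≤ c) :
    |((floorSq a n (dyadicFloor n x) + floorSq b n (dyadicFloor n y) : ℤ) : ℝ) -
      dyadicFloor n (a * x ^ 2 + b * y ^ 2)| ≤ (|a| + |b|) * (2 * c + 1) + 3 := by
  have hlow := dyadicFloor_le n (a * x ^ 2 + b * y ^ 2)
  have hupp := lt_dyadicFloor_add_one n (a * x ^ 2 + b * y ^ 2)
  have hX := abs_le.1 (abs_floorSq_dyadicFloor_sub_le a n hx)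
  have hY := abs_le.1 (abs_floorSq_dyadicFloor_sub_le b n hy)
  push_cast
  rw [abs_le]
  constructor <;> linarith

lemma mem_ball_of_abs_dyadicFloor_sub_le {R : ℝ} (hR : 1 ≤ R)
    (h : |(dyadicFloor n z : ℝ) - x| ≤ R) : z ∈ Metric.ball (x / 2 ^ n) (3 * (R / 2 ^ n)) := by
  have h2n : (0 : ℝ) < 2 ^ n := by positivity
  rw [abs_le] at h
  rw [Metric.mem_ball, Real.dist_eq, ← mul_lt_mul_iff_of_pos_left h2n, ← abs_of_pos h2n, ← abs_mul,
    abs_of_pos h2n, mul_sub, mul_div_cancel₀ _ h2n.ne', mul_left_comm, mul_div_cancel₀ _ h2n.ne',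
    abs_lt]
  constructor <;> linarith [dyadicFloor_le n z, lt_dyadicFloor_add_one n z]

lemma three_mul_rpow_le {t : ℝ} (hx : 0 ≤ x) (ht : t ≤ 1) : (3 * x) ^ t ≤ 3 * x ^ t := by
  rw [Real.mul_rpow (by norm_num) hx]
  exact mul_le_mul_of_nonneg_right
    ((Real.rpow_le_rpow_of_exponent_le (by norm_num) ht).trans_eq (Real.rpow_one 3)) (by positivity)

lemma finite_range_dyadicFloor (n : ℕ) (hX : ∀ ω, |X ω| ≤ c) :
    (Set.range fun ω => dyadicFloor n (X ω)).Finite :=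
  (intBall 0 ((c + 1) * 2 ^ n)).finite_toSet.subset <| by
    rintro _ ⟨ω, rfl⟩
    simpa [mem_intBall] using abs_dyadicFloor_le n (hX ω)

variable [MeasurableSpace Ω] {P : Measure Ω}

lemma Hn_eq_entOf_dyadicFloor (P : Measure Ω) (n : ℕ) (X : Ω → ℝ) :
    Hn P n X = entOf P fun ω => dyadicFloor n (X ω) :=
  entOf_comp_of_injective (φ := fun k : ℤ => (k : ℝ) / 2 ^ n)
    (fun k l h => Int.cast_injective ((div_left_inj' (by positivity)).1 h)) _

lemma isJointFrostman_of_jointlyFrostman [IsProbabilityMeasure P] {T : Type*} [Fintype T]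
    [MeasurableSpace T] [MeasurableSingletonClass T] {F : Ω → T} (hF : Measurable F)
    {I J : T → ℤ} (hI : ∀ ω, I (F ω) = dyadicFloor n (X ω))
    (hJ : ∀ ω, J (F ω) = dyadicFloor n (Y ω)) {C s₁ s₂ : ℝ} (hC : 0 ≤ C) (hs₁ : s₁ ≤ 1)
    (hs₂ : s₂ ≤ 1) (h : JointlyFrostman P X Y s₁ s₂ C) :
    IsJointFrostman (pointMass P F) I J n (9 * C) s₁ s₂ := by
  intro x y R R' hR hR'
  have hsub : F ⁻¹' {t | |(I t : ℝ) - x| ≤ R ∧ |(J t : ℝ) - y| ≤ R'} ⊆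
      X ⁻¹' Metric.ball (x / 2 ^ n) (3 * (R / 2 ^ n)) ∩
        Y ⁻¹' Metric.ball (y / 2 ^ n) (3 * (R' / 2 ^ n)) := fun ω hω => by
    rw [Set.mem_preimage, Set.mem_ofPred_eq, hI, hJ] at hω
    exact ⟨mem_ball_of_abs_dyadicFloor_sub_le hR hω.1, mem_ball_of_abs_dyadicFloor_sub_le hR' hω.2⟩
  rw [prob_pointMass hF]
  calc P.real (F ⁻¹' {t | |(I t : ℝ) - x| ≤ R ∧ |(J t : ℝ) - y| ≤ R'})
      ≤ C * (3 * (R / 2 ^ n)) ^ s₁ * (3 * (R' / 2 ^ n)) ^ s₂ :=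
        (measureReal_mono hsub).trans (h _ _ _ _ (by positivity) (by positivity))
    _ ≤ C * (3 * (R / 2 ^ n) ^ s₁) * (3 * (R' / 2 ^ n) ^ s₂) := by
        gcongr
        · exact three_mul_rpow_le (by positivity) hs₁
        · exact three_mul_rpow_le (by positivity) hs₂
    _ = 9 * C * (R / 2 ^ n) ^ s₁ * (R' / 2 ^ n) ^ s₂ := by ring

end Dyadic

section Discretization

variable {Ω T : Type*} [MeasurableSpace Ω] {P : Measure Ω} [IsProbabilityMeasure P] [Fintype T]
  [MeasurableSpace T] [MeasurableSingletonClass T] {F : Ω → T} {I J : T → ℤ} {X Y : Ω → ℝ} {n : ℕ}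
  {c : ℝ}

lemma entropy_pointMass_le_entOf_add_logb (hF : Measurable F) {V : Ω → ℤ} (hV : Measurable V)
    (hVfin : (Set.range V).Finite) {d : ℝ} (hd : 0 ≤ d)
    (h : ∀ ω, |(I (F ω) : ℝ) - V ω| ≤ d) :
    entropy (pointMass P F) I ≤ entOf P V + logb 2 (2 * (2 * d) + 1) := by
  have := hVfin.fintype
  let K : Ω → T × Set.range V := fun ω => (F ω, Set.rangeFactorization V ω)
  have hK : Measurable K := hF.prodMk hV.rangeFactorization
  have hI : entOf P (fun ω => I (F ω)) = _ := entOf_comp hK fun k => I k.1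
  have hV' : entOf P V = _ := entOf_comp hK fun k => (k.2 : ℤ)
  rw [← entOf_comp hF, hI, hV']
  refine entropy_le_add_logb (pointMass_mem_stdSimplex hK) (by positivity) ?_
  intro k k' hk hk' heq
  obtain ⟨ω, rfl⟩ := exists_eq_of_pointMass_ne_zero hk
  obtain ⟨ω', rfl⟩ := exists_eq_of_pointMass_ne_zero hk'
  change V ω = V ω' at heq
  have hω := h ω
  rw [heq, abs_sub_comm] at hω
  linarith [abs_sub_le (I (F ω) : ℝ) (V ω') (I (F ω')), abs_sub_comm (V ω' : ℝ) (I (F ω)),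
    abs_sub_comm (V ω' : ℝ) (I (F ω')), h ω']

lemma entropy_pointMass_le_Hn_add_logb (hF : Measurable F) {Z : Ω → ℝ} (hZ : Measurable Z)
    (hZc : ∀ ω, |Z ω| ≤ c) {d : ℝ} (hd : 0 ≤ d)
    (h : ∀ ω, |(I (F ω) : ℝ) - dyadicFloor n (Z ω)| ≤ d) :
    entropy (pointMass P F) I ≤ Hn P n Z + logb 2 (2 * (2 * d) + 1) := by
  rw [Hn_eq_entOf_dyadicFloor]
  exact entropy_pointMass_le_entOf_add_logb hF ((measurable_dyadicFloor n).comp hZ)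
    (finite_range_dyadicFloor n hZc) hd h

lemma entropy_pointMass_eq_Hn (hF : Measurable F) (hI : ∀ ω, I (F ω) = dyadicFloor n (X ω)) :
    entropy (pointMass P F) I = Hn P n X := by
  rw [Hn_eq_entOf_dyadicFloor, ← entOf_comp hF I]
  simp only [hI]

lemma isCriticalPair_pointMass (hF : Measurable F) (hI : ∀ ω, I (F ω) = dyadicFloor n (X ω))
    (hJ : ∀ ω, J (F ω) = dyadicFloor n (Y ω)) (hinj : Function.Injective fun t => (I t, J t))
    (hX : Measurable X) (hY : Measurable Y) (hc : 0 ≤ c) (hXc : ∀ ω, |X ω| ≤ c)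
    (hYc : ∀ ω, |Y ω| ≤ c) {C s s₁ s₂ E : ℝ} (hC : 1 ≤ C) (hs₁ : s₁ ≤ 1) (hs₂ : s₂ ≤ 1)
    (hs : 2 * s ≤ s₁ + s₂) (h : JointlyFrostman P X Y s₁ s₂ C) (hE : logb 2 (9 * C * (c + 1)) ≤ E)
    (hXY : Hn P n X + Hn P n Y ≤ 2 * (s * n + E))
    (hadd : Hn P n (fun ω => X ω + Y ω) + logb 2 9 ≤ s * n + E) :
    IsCriticalPair (pointMass P F) I J n (9 * C) (c + 1) s s₁ s₂ E where
  mem_stdSimplex := pointMass_mem_stdSimplex hF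
  injOn := hinj.injOn
  abs_left_le t ht := by
    obtain ⟨ω, rfl⟩ := exists_eq_of_pointMass_ne_zero ht
    exact hI ω ▸ abs_dyadicFloor_le n (hXc ω)
  abs_right_le t ht := by
    obtain ⟨ω, rfl⟩ := exists_eq_of_pointMass_ne_zero ht
    exact hJ ω ▸ abs_dyadicFloor_le n (hYc ω)
  isJointFrostman := isJointFrostman_of_jointlyFrostman hF hI hJ (by linarith) hs₁ hs₂ h
  one_le_frostman := by linarith
  one_le_bound := by linarith
  left_le_one := hs₁
  right_le_one := hs₂
  two_mul_le := hs
  logb_le := hE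
  entropy_add_entropy_le := by
    rwa [entropy_pointMass_eq_Hn hF hI, entropy_pointMass_eq_Hn hF hJ]
  entropy_add_le := by
    have hle := entropy_pointMass_le_Hn_add_logb (P := P) (n := n) (I := fun t => I t + J t)
      (Z := fun ω => X ω + Y ω) hF (hX.add hY)
      (fun ω => (abs_add_le (X ω) (Y ω)).trans (add_le_add (hXc ω) (hYc ω))) two_pos.le
      fun ω => by simpa only [hI, hJ] using abs_dyadicFloor_add_sub_le n (X ω) (Y ω)
    norm_num at hle
    exact hle.trans hadd

lemma entropy_floorSq_add_floorSq_le (hF : Measurable F)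
    (hI : ∀ ω, I (F ω) = dyadicFloor n (X ω)) (hJ : ∀ ω, J (F ω) = dyadicFloor n (Y ω))
    (hX : Measurable X) (hY : Measurable Y) (hc : 0 ≤ c) (hXc : ∀ ω, |X ω| ≤ c)
    (hYc : ∀ ω, |Y ω| ≤ c) (a b : ℝ) :
    entropy (pointMass P F) (fun t => floorSq a n (I t) + floorSq b n (J t)) ≤
      Hn P n (fun ω => a * X ω ^ 2 + b * Y ω ^ 2) +
        logb 2 (2 * (2 * ((|a| + |b|) * (2 * c + 1) + 3)) + 1) := by
  have hbound : ∀ ω, |a * X ω ^ 2 + b * Y ω ^ 2| ≤ |a| * c ^ 2 + |b| * c ^ 2 := fun ω => by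
    refine (abs_add_le _ _).trans ?_
    rw [abs_mul, abs_mul, abs_pow, abs_pow]
    gcongr
    exacts [hXc ω, hYc ω]
  refine entropy_pointMass_le_Hn_add_logb hF (by fun_prop) hbound (by positivity) fun ω => ?_
  rw [hI, hJ]
  exact abs_floorSq_add_floorSq_sub_le a b n (hXc ω) (hYc ω)

theorem exists_isCriticalPair (hX : Measurable X) (hY : Measurable Y) (hc : 0 ≤ c)
    (hXc : ∀ ω, |X ω| ≤ c) (hYc : ∀ ω, |Y ω| ≤ c) {C s s₁ s₂ E : ℝ} (hC : 1 ≤ C) (hs₁ : s₁ ≤ 1)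
    (hs₂ : s₂ ≤ 1) (hs : 2 * s ≤ s₁ + s₂) (h : JointlyFrostman P X Y s₁ s₂ C)
    (hE : logb 2 (9 * C * (c + 1)) ≤ E) (hXY : Hn P n X + Hn P n Y ≤ 2 * (s * n + E))
    (hadd : Hn P n (fun ω => X ω + Y ω) + logb 2 9 ≤ s * n + E) (a b : ℝ) :
    ∃ (T : Type) (_ : Fintype T) (p : T → ℝ) (I J : T → ℤ),
      IsCriticalPair p I J n (9 * C) (c + 1) s s₁ s₂ E ∧
      entropy p (fun t => floorSq a n (I t) + floorSq b n (J t)) ≤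
        Hn P n (fun ω => a * X ω ^ 2 + b * Y ω ^ 2) +
          logb 2 (2 * (2 * ((|a| + |b|) * (2 * c + 1) + 3)) + 1) := by
  let F₀ : Ω → ℤ × ℤ := fun ω => (dyadicFloor n (X ω), dyadicFloor n (Y ω))
  have hfinite : (Set.range F₀).Finite :=
    ((finite_range_dyadicFloor n hXc).prod (finite_range_dyadicFloor n hYc)).subset
      (Set.range_subset_iff.2 fun ω => ⟨⟨ω, rfl⟩, ⟨ω, rfl⟩⟩)
  have := hfinite.fintype
  have hF : Measurable (Set.rangeFactorization F₀) :=
    Measurable.rangeFactorization <|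
      ((measurable_dyadicFloor n).comp hX).prodMk ((measurable_dyadicFloor n).comp hY)
  exact ⟨Set.range F₀, inferInstance, pointMass P (Set.rangeFactorization F₀), fun t => t.1.1,
    fun t => t.1.2, isCriticalPair_pointMass hF (fun _ => rfl) (fun _ => rfl)
      Subtype.val_injective hX hY hc hXc hYc hC hs₁ hs₂ hs h hE hXY hadd,
    entropy_floorSq_add_floorSq_le hF (fun _ => rfl) (fun _ => rfl) hX hY hc hXc hYc a b⟩

end Discretization

end FiniteEntropy

/-- Theorem (Jointly Frostman, diagonal forms): for every `0 < s < 1` there is `ε = ε(s) > 0`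
such that for all nonzero reals `α, β`, `C ≥ 1`, `c > 0`, there is `N` such that for every
jointly `(s₁,s₂,C)`-Frostman bivariate random variable `(X,Y)` with range in `[-c,c]²`,
`0 ≤ s₁,s₂ ≤ 1`, `s₁ + s₂ ≥ 2s`, one has
`max{(Hₙ(X)+Hₙ(Y))/2, Hₙ(X+Y), Hₙ(αX²+βY²)} ≥ n(s+ε)` for all `n > N`. -/
theorem jointly_frostman_entropy (s : ℝ) (hs0 : 0 < s) (hs1 : s < 1) :
    ∃ ε : ℝ, 0 < ε ∧
      ∀ (a b : ℝ), a ≠ 0 → b ≠ 0 → ∀ C : ℝ, 1 ≤ C → ∀ c : ℝ, 0 < c →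
        ∃ N : ℕ,
          ∀ (Ω : Type) (mΩ : MeasurableSpace Ω) (P : Measure Ω),
            IsProbabilityMeasure P →
            ∀ (X Y : Ω → ℝ), Measurable X → Measurable Y →
              ∀ (s₁ s₂ : ℝ), 0 ≤ s₁ → s₁ ≤ 1 → 0 ≤ s₂ → s₂ ≤ 1 → 2 * s ≤ s₁ + s₂ →
                JointlyFrostman P X Y s₁ s₂ C →
                (∀ ω, X ω ∈ Set.Icc (-c) c ∧ Y ω ∈ Set.Icc (-c) c) →
                ∀ n : ℕ, N < n →
                  (n : ℝ) * (s + ε) ≤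
                    max (max ((Hn P n X + Hn P n Y) / 2) (Hn P n (fun ω => X ω + Y ω)))
                      (Hn P n (fun ω => a * X ω ^ 2 + b * Y ω ^ 2)) := by
  have hε := FiniteEntropy.diagonalGain_pos hs0 hs1
  refine ⟨FiniteEntropy.diagonalGain s, hε, fun a b ha hb C hC c hc => ?_⟩
  obtain ⟨N, hN⟩ := Filter.eventually_atTop.1 <|
    (FiniteEntropy.IsCriticalPair.eventually_lt_entropy_floorSq_add (C := 9 * C) (c := c + 1)
      hs0 hs1 ha hb (by linarith) (by linarith)).and <|
    (FiniteEntropy.eventually_le_mul_natCast (logb 2 (9 * C * (c + 1))) hε).and <|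
    (FiniteEntropy.eventually_le_mul_natCast (logb 2 9) hε).and <|
    FiniteEntropy.eventually_le_mul_natCast
      (logb 2 (2 * (2 * ((|a| + |b|) * (2 * c + 1) + 3)) + 1)) hε
  refine ⟨N, fun Ω _ P _ X Y hX hY s₁ s₂ _ hs₁ _ hs₂ hs h hXY n hn => ?_⟩
  obtain ⟨hgain, hlogC, hlog9, hlogq⟩ := hN n hn.le
  by_contra! hlt
  obtain ⟨⟨hmean, hadd⟩, hsq⟩ : (_ ∧ _) ∧ _ := by simpa only [max_lt_iff] using hlt
  have hεn := mul_nonneg hε.le n.cast_nonneg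
  obtain ⟨T, _, p, I, J, hcritical, hle⟩ := FiniteEntropy.exists_isCriticalPair
    (n := n) (E := 2 * FiniteEntropy.diagonalGain s * n) hX hY hc.le
    (fun ω => abs_le.2 (hXY ω).1) (fun ω => abs_le.2 (hXY ω).2) hC hs₁ hs₂ hs h
    (by linarith) (by linarith) (by linarith) a b
  linarith [hgain hcritical]
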